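/- If G is a planar triangulation different from K4, then τ(G) ≤ (3/2)·ν(G). -/

import Mathlib

open SimpleGraph

variable {V : Type*}

/-- A triangle transversal of `G`: a set of edges of `G` meeting every triangle of `G`
(so that its removal leaves a triangle-free graph). -/
def IsTriangleTransversal (G : SimpleGraph V) (X : Finset (Sym2 V)) : Prop :=
  ↑X ⊆ G.edgeSet ∧
    ∀ t : Finset V, G.IsNClique 3 t → ∃ e ∈ X, ∀ v ∈ e, v ∈ t

/-- A triangle packing of `G`: a set of pairwise edge-disjoint triangles of `G`. -/
def IsTrianglePacking (G : SimpleGraph V) (Y : Finset (Finset V)) : Prop :=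
  (∀ t ∈ Y, G.IsNClique 3 t) ∧
    ∀ s ∈ Y, ∀ t ∈ Y, s ≠ t →
      ∀ e ∈ G.edgeSet, ¬ ((∀ v ∈ e, v ∈ s) ∧ (∀ v ∈ e, v ∈ t))

/-- `tau G` is the minimum size of a triangle transversal of `G`. -/
noncomputable def tau (G : SimpleGraph V) : ℕ :=
  sInf {n | ∃ X : Finset (Sym2 V), IsTriangleTransversal G X ∧ X.card = n}

/-- `nu G` is the maximum size of a triangle packing of `G`. -/
noncomputable def nu (G : SimpleGraph V) : ℕ :=
  sSup {n | ∃ Y : Finset (Finset V), IsTrianglePacking G Y ∧ Y.card = n}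

/-- A drawing of the graph `G` in the plane (identified with `ℂ`): vertices are mapped to
distinct points, each edge is realized by a simple continuous arc joining the images of its
endpoints, arcs of distinct edges meet only in common endpoints, and no arc passes through
the image of any other vertex. -/
structure PlaneEmbedding (G : SimpleGraph V) where
  vtx : V → ℂ
  arc : V → V → Set ℂ
  vtx_inj : Function.Injective vtx
  arc_symm : ∀ u v : V, arc u v = arc v u
  arc_curve : ∀ ⦃u v : V⦄, G.Adj u v → ∃ γ : ℝ → ℂ,
    ContinuousOn γ (Set.Icc 0 1) ∧ Set.InjOn γ (Set.Icc 0 1) ∧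
    γ 0 = vtx u ∧ γ 1 = vtx v ∧ arc u v = γ '' Set.Icc 0 1
  arc_inter : ∀ ⦃u v x y : V⦄, G.Adj u v → G.Adj x y → s(u, v) ≠ s(x, y) →
    arc u v ∩ arc x y ⊆ ({vtx u, vtx v} : Set ℂ) ∩ ({vtx x, vtx y} : Set ℂ)
  arc_vtx : ∀ ⦃u v : V⦄, G.Adj u v → ∀ w : V, vtx w ∈ arc u v → w = u ∨ w = v

/-- The set of points of the plane used by a plane embedding. -/
def PlaneEmbedding.drawing {G : SimpleGraph V} (E : PlaneEmbedding G) : Set ℂ :=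
  Set.range E.vtx ∪ ⋃ (u : V) (v : V) (_ : G.Adj u v), E.arc u v

/-- A graph is planar if it admits a plane embedding. -/
def PlanarGraph (G : SimpleGraph V) : Prop := Nonempty (PlaneEmbedding G)

/-- A maximal planar graph (planar triangulation): a planar graph such that adding any
edge between nonadjacent vertices destroys planarity. -/
def MaximalPlanar (G : SimpleGraph V) : Prop :=
  PlanarGraph G ∧ ∀ u v : V, u ≠ v → ¬ G.Adj u v →
    ¬ PlanarGraph (G ⊔ SimpleGraph.fromEdgeSet {s(u, v)})

/-! ### Continuous logarithms and separation of the plane -/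

/-- `f` has a continuous logarithm on `S`. -/
def HasLogOn (S : Set ℂ) (f : ℂ → ℂ) : Prop :=
  ∃ g : ℂ → ℂ, ContinuousOn g S ∧ ∀ z ∈ S, Complex.exp (g z) = f z

theorem HasLogOn.mono {S T : Set ℂ} {f : ℂ → ℂ} (h : HasLogOn T f) (hST : S ⊆ T) :
    HasLogOn S f := by
  obtain ⟨g, hg, hgf⟩ := h
  exact ⟨g, hg.mono hST, fun z hz => hgf z (hST hz)⟩

theorem HasLogOn.mul {S : Set ℂ} {f f' : ℂ → ℂ} (h : HasLogOn S f) (h' : HasLogOn S f') :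
    HasLogOn S (fun z => f z * f' z) := by
  obtain ⟨g, hg, hgf⟩ := h
  obtain ⟨g', hg', hgf'⟩ := h'
  exact ⟨fun z => g z + g' z, hg.add hg', fun z hz => by
    simp only [Complex.exp_add, hgf z hz, hgf' z hz]⟩

theorem HasLogOn.inv {S : Set ℂ} {f : ℂ → ℂ} (h : HasLogOn S f) :
    HasLogOn S (fun z => (f z)⁻¹) := by
  obtain ⟨g, hg, hgf⟩ := h
  exact ⟨fun z => -g z, hg.neg, fun z hz => by simp only [Complex.exp_neg, hgf z hz]⟩

theorem HasLogOn.congr {S : Set ℂ} {f f' : ℂ → ℂ} (h : HasLogOn S f) (hf : Set.EqOn f f' S) :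
    HasLogOn S f' := by
  obtain ⟨g, hg, hgf⟩ := h
  exact ⟨g, hg, fun z hz => (hgf z hz).trans (hf hz)⟩

/-- Two continuous logarithms of the same function on a preconnected set differ by a constant. -/
theorem sub_eq_sub_of_exp_eq {X : Type*} [TopologicalSpace X] {S : Set X} (hS : IsPreconnected S)
    {g g' : X → ℂ} (hg : ContinuousOn g S) (hg' : ContinuousOn g' S)
    (h : ∀ x ∈ S, Complex.exp (g x) = Complex.exp (g' x)) {x y : X} (hx : x ∈ S) (hy : y ∈ S) :
    g x - g' x = g y - g' y := by
  refine hS.induction₂ (fun x y => g x - g' x = g y - g' y) ?_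
    (fun _ _ _ _ _ _ => Eq.trans) (fun _ _ _ _ => Eq.symm) hx hy
  intro x hx
  have hc := (hg.sub hg') x hx
  have hball := hc.eventually (Metric.ball_mem_nhds _ Real.two_pi_pos)
  filter_upwards [hball, self_mem_nhdsWithin] with y hy hyS
  obtain ⟨m, hm⟩ := Complex.exp_eq_exp_iff_exists_int.1 (h x hx)
  obtain ⟨n, hn⟩ := Complex.exp_eq_exp_iff_exists_int.1 (h y hyS)
  rw [dist_eq_norm] at hy
  have hdiff : (g - g') y - (g - g') x = ((n - m : ℤ) : ℂ) * (2 * Real.pi * Complex.I) := by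
    simp only [Pi.sub_apply, hm, hn]
    push_cast
    ring
  rw [hdiff, norm_mul, Complex.norm_intCast] at hy
  have hnorm : ‖(2 * Real.pi * Complex.I : ℂ)‖ = 2 * Real.pi := by
    simp [abs_of_pos Real.pi_pos]
  rw [hnorm] at hy
  have hlt : |((n - m : ℤ) : ℝ)| < 1 := by
    by_contra hcon
    nlinarith [Real.two_pi_pos]
  have hnm : n - m = 0 := by
    rw [← Int.cast_abs] at hlt
    exact Int.abs_lt_one_iff.1 (by exact_mod_cast hlt)
  have : n = m := by omega
  rw [hm, hn, this]
  ring

theorem exists_continuous_log {X : Type*} [TopologicalSpace X] [SimplyConnectedSpace X]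
    [LocallyPathConnectedSpace X] {f : X → ℂ} (hf : Continuous f) (h0 : ∀ x, f x ≠ 0) :
    ∃ g : X → ℂ, Continuous g ∧ ∀ x, Complex.exp (g x) = f x := by
  obtain ⟨x₀⟩ : Nonempty X := inferInstance
  obtain ⟨F, ⟨-, hF⟩, -⟩ := Complex.isCoveringMapOn_exp.existsUnique_continuousMap_lifts
    (⟨f, hf⟩ : C(X, ℂ)) (a₀ := x₀) (e₀ := Complex.log (f x₀)) (Complex.exp_log (h0 x₀))
    (fun x => h0 x)
  exact ⟨F, F.continuous, fun x => congrFun hF x⟩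

/-- A nonvanishing continuous function has a continuous logarithm on a simple arc. -/
theorem hasLogOn_arc {a b : ℝ} (hab : a ≤ b) {γ : ℝ → ℂ} (hγ : ContinuousOn γ (Set.Icc a b))
    (hinj : Set.InjOn γ (Set.Icc a b)) {f : ℂ → ℂ} (hf : ContinuousOn f (γ '' Set.Icc a b))
    (h0 : ∀ z ∈ γ '' Set.Icc a b, f z ≠ 0) : HasLogOn (γ '' Set.Icc a b) f := by
  have hp : ∀ t, γ (Set.projIcc a b hab t) ∈ γ '' Set.Icc a b :=
    fun t => Set.mem_image_of_mem _ (Set.projIcc a b hab t).2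
  have hcont : Continuous fun t => f (γ (Set.projIcc a b hab t)) := by
    have h1 : Continuous fun t => γ (Set.projIcc a b hab t) :=
      hγ.comp_continuous (continuous_subtype_val.comp continuous_projIcc)
        (fun t => (Set.projIcc a b hab t).2)
    exact hf.comp_continuous h1 hp
  obtain ⟨φ, hφ, hφf⟩ := exists_continuous_log hcont (fun t => h0 _ (hp t))
  refine ⟨fun z => φ (Function.invFunOn γ (Set.Icc a b) z), ?_, ?_⟩
  · rw [continuousOn_iff_continuous_domRestrict]
    let π : Set.Icc a b → γ '' Set.Icc a b := fun t => ⟨γ t, Set.mem_image_of_mem _ t.2⟩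
    have hπ : Continuous π :=
      (continuousOn_iff_continuous_domRestrict.1 hγ).subtype_mk _
    have hsurj : Function.Surjective π := by
      rintro ⟨_, t, ht, rfl⟩
      exact ⟨⟨t, ht⟩, rfl⟩
    rw [(hπ.isClosedMap.isQuotientMap hπ hsurj).continuous_iff]
    have : (Set.domRestrict (γ '' Set.Icc a b)
        fun z => φ (Function.invFunOn γ (Set.Icc a b) z)) ∘ π =
          fun t : Set.Icc a b => φ (t : ℝ) := by
      funext t
      simp only [Function.comp_apply, Set.domRestrict_apply, π]
      rw [hinj.leftInvOn_invFunOn t.2]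
    rw [this]
    exact hφ.comp continuous_subtype_val
  · rintro _ ⟨t, ht, rfl⟩
    simp only [hinj.leftInvOn_invFunOn ht, hφf, Set.projIcc_of_mem hab ht]

/-- Logarithms on two closed sets meeting in at most a point can be glued. -/
theorem HasLogOn.union {A B : Set ℂ} {f : ℂ → ℂ} (hA : IsClosed A) (hB : IsClosed B) {x : ℂ}
    (hAB : A ∩ B ⊆ {x}) (h : HasLogOn A f) (h' : HasLogOn B f) : HasLogOn (A ∪ B) f := by
  classical
  obtain ⟨g, hg, hgf⟩ := h
  obtain ⟨g', hg', hgf'⟩ := h'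
  obtain ⟨k, hk, hk1⟩ : ∃ k : ℂ, (x ∈ A ∩ B → g x = g' x + k) ∧ Complex.exp k = 1 := by
    by_cases hx : x ∈ A ∩ B
    · refine ⟨g x - g' x, fun _ => by ring, ?_⟩
      rw [Complex.exp_sub, hgf x hx.1, hgf' x hx.2]
      refine div_self ?_
      rw [← hgf x hx.1]
      exact Complex.exp_ne_zero _
    · exact ⟨0, fun hx' => absurd hx' hx, Complex.exp_zero⟩
  let G : ℂ → ℂ := A.piecewise g (fun z => g' z + k)
  have hGA : Set.EqOn G g A := fun z hz => Set.piecewise_eq_of_mem _ _ _ hz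
  have hGB : Set.EqOn G (fun z => g' z + k) B := by
    intro z hz
    by_cases hzA : z ∈ A
    · obtain rfl : z = x := hAB ⟨hzA, hz⟩
      rw [hGA hzA, hk ⟨hzA, hz⟩]
    · exact Set.piecewise_eq_of_notMem _ _ _ hzA
  refine ⟨G, ContinuousOn.union_of_isClosed (hg.congr hGA)
    ((hg'.add continuousOn_const).congr hGB) hA hB, ?_⟩
  rintro z (hz | hz)
  · rw [hGA hz, hgf z hz]
  · rw [hGB hz, Complex.exp_add, hk1, mul_one, hgf' z hz]

/-- If `p` and `q` lie in a preconnected set missing the compact set `K`, then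
`(z - p) / (z - q)` has a continuous logarithm on `K`. -/
theorem hasLogOn_of_isPreconnected {K C : Set ℂ} (hK : IsCompact K) (hC : IsPreconnected C)
    (hCK : C ⊆ Kᶜ) {p q : ℂ} (hp : p ∈ C) (hq : q ∈ C) :
    HasLogOn K (fun z => (z - p) / (z - q)) := by
  have hne : ∀ x ∈ C, ∀ z ∈ K, z - x ≠ 0 := by
    intro x hx z hz h
    exact hCK hx (sub_eq_zero.1 h ▸ hz)
  refine hC.induction₂ (fun p q => HasLogOn K (fun z => (z - p) / (z - q))) ?_ ?_ ?_ hp hq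
  · intro x hx
    obtain ⟨ε, hε, hball⟩ := Metric.isOpen_iff.1 hK.isClosed.isOpen_compl x (hCK hx)
    filter_upwards [nhdsWithin_le_nhds (Metric.ball_mem_nhds x hε), self_mem_nhdsWithin]
      with y hy hyC
    have hre : ∀ z ∈ K, (z - y) / (z - x) ∈ Complex.slitPlane := by
      intro z hz
      have h1 : ε ≤ ‖z - x‖ := by
        by_contra hlt
        exact hball (by rwa [Metric.mem_ball, dist_eq_norm, ← not_le]) hz
      have h2 : ‖y - x‖ < ε := by rwa [Metric.mem_ball, dist_eq_norm] at hy
      have h3 : (z - y) / (z - x) = 1 + -((y - x) / (z - x)) := by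
        have := hne x hx z hz
        field_simp
        ring
      rw [h3]
      apply Complex.mem_slitPlane_of_norm_lt_one
      rw [norm_neg, norm_div, div_lt_one (hε.trans_le h1)]
      exact h2.trans_le h1
    have : HasLogOn K (fun z => (z - y) / (z - x)) := by
      refine ⟨fun z => Complex.log ((z - y) / (z - x)), ?_, fun z hz =>
        Complex.exp_log (Complex.slitPlane_ne_zero (hre z hz))⟩
      refine ContinuousOn.clog ?_ hre
      exact (continuousOn_id.sub continuousOn_const).div
        (continuousOn_id.sub continuousOn_const) (hne x hx)
    exact this.inv.congr fun z _ => by simp only [inv_div]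
  · intro x y w hx hy hw h h'
    refine (h.mul h').congr fun z hz => ?_
    have := hne y hy z hz
    simp only
    field_simp
  · intro x y _ _ h
    exact h.inv.congr fun z _ => by simp only [inv_div]

theorem isPreconnected_compl_closedBall (r : ℝ) :
    IsPreconnected (Metric.closedBall (0 : ℂ) r)ᶜ := by
  rcases lt_or_ge r 0 with hr | hr
  · rw [Metric.closedBall_eq_empty.2 hr, Set.compl_empty]
    exact isPreconnected_univ
  have : (Metric.closedBall (0 : ℂ) r)ᶜ =
      (fun x : ℝ × ℝ => (x.1 : ℂ) * Complex.exp (x.2 * Complex.I)) ''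
        (Set.Ioi r ×ˢ Set.univ) := by
    ext z
    simp only [Set.mem_compl_iff, mem_closedBall_zero_iff, not_le, Set.mem_image, Set.mem_prod,
      Set.mem_Ioi, Set.mem_univ, and_true, Prod.exists]
    constructor
    · intro hz
      exact ⟨‖z‖, z.arg, hz, Complex.norm_mul_exp_arg_mul_I z⟩
    · rintro ⟨s, θ, hs, rfl⟩
      simpa [abs_of_pos (hr.trans_lt hs)] using hs
  rw [this]
  exact (isPreconnected_Ioi.prod isPreconnected_univ).image _ (by fun_prop)

theorem frontier_connectedComponentIn_subset {K : Set ℂ} (hK : IsClosed K) (p : ℂ) :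
    frontier (connectedComponentIn Kᶜ p) ⊆ K := by
  intro z hz
  by_contra hzK
  have hopen : IsOpen (connectedComponentIn Kᶜ z) := hK.isOpen_compl.connectedComponentIn
  have hzmem : z ∈ connectedComponentIn Kᶜ z := mem_connectedComponentIn hzK
  obtain ⟨w, hw, hw'⟩ := mem_closure_iff.1 hz.1 _ hopen hzmem
  have heq := (connectedComponentIn_eq hw).trans (connectedComponentIn_eq hw').symm
  rw [frontier, hK.isOpen_compl.connectedComponentIn.interior_eq] at hz
  exact hz.2 (heq ▸ hzmem)

theorem not_hasLogOn_of_bounded {K : Set ℂ} (hK : IsCompact K) {p q : ℂ} (hp : p ∉ K) (hq : q ∉ K)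
    (hpq : q ∉ connectedComponentIn Kᶜ p)
    (hb : Bornology.IsBounded (connectedComponentIn Kᶜ p)) :
    ¬ HasLogOn K (fun z => (z - p) / (z - q)) := by
  classical
  rintro ⟨g, hg, hgf⟩
  set U := connectedComponentIn Kᶜ p with hU
  have hpU : p ∈ U := mem_connectedComponentIn hp
  have hfr : frontier U ⊆ K := frontier_connectedComponentIn_subset hK.isClosed p
  obtain ⟨G, hG⟩ := ContinuousMap.exists_restrict_eq hK.isClosed
    (⟨K.domRestrict g, continuousOn_iff_continuous_domRestrict.1 hg⟩ : C(K, ℂ))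
  have hGg : ∀ z ∈ K, G z = g z := fun z hz => DFunLike.congr_fun hG ⟨z, hz⟩
  let F : ℂ → ℂ := fun z => if z ∈ U then (z - q) * Complex.exp (G z) else z - p
  have hFc : Continuous F := by
    refine continuous_if ?_ (by fun_prop) (by fun_prop)
    intro z hz
    have hzK : z ∈ K := hfr hz
    rw [hGg z hzK, hgf z hzK]
    have : z - q ≠ 0 := fun h => hq (sub_eq_zero.1 h ▸ hzK)
    field_simp
  have hF0 : ∀ z, F z ≠ 0 := by
    intro z
    by_cases hz : z ∈ U
    · simp only [F, if_pos hz]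
      exact mul_ne_zero (fun h => hpq (sub_eq_zero.1 h ▸ hz)) (Complex.exp_ne_zero _)
    · simp only [F, if_neg hz]
      exact fun h => hz (sub_eq_zero.1 h ▸ hpU)
  obtain ⟨h, hhc, hh⟩ := exists_continuous_log hFc hF0
  obtain ⟨r, hr⟩ := (Metric.isBounded_iff_subset_closedBall p).1 hb
  have hr0 : 0 ≤ r := by simpa using (hr hpU)
  have hcirc : ∀ θ : ℝ, Complex.exp (h (p + (r + 1) * Complex.exp (θ * Complex.I))) =
      Complex.exp (Complex.log (r + 1) + θ * Complex.I) := by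
    intro θ
    have hne : ((r : ℂ) + 1) ≠ 0 := by
      have : (0 : ℝ) < r + 1 := by linarith
      exact_mod_cast this.ne'
    have hnot : p + (r + 1) * Complex.exp (θ * Complex.I) ∉ U := by
      intro hmem
      have := hr hmem
      rw [Metric.mem_closedBall, dist_eq_norm, add_sub_cancel_left, norm_mul,
        Complex.norm_exp_ofReal_mul_I, mul_one] at this
      have h2 : ‖((r : ℂ) + 1)‖ = r + 1 := by
        have : ((r : ℂ) + 1) = ((r + 1 : ℝ) : ℂ) := by push_cast; ring
        rw [this, Complex.norm_real, Real.norm_of_nonneg (by linarith)]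
      linarith
    rw [hh, Complex.exp_add, Complex.exp_log hne]
    simp only [F, if_neg hnot, add_sub_cancel_left]
  have := sub_eq_sub_of_exp_eq (isPreconnected_univ (α := ℝ))
    (g := fun θ : ℝ => h (p + (r + 1) * Complex.exp (θ * Complex.I)))
    (g' := fun θ : ℝ => Complex.log (r + 1) + θ * Complex.I)
    (by fun_prop) (by fun_prop) (fun θ _ => hcirc θ) (Set.mem_univ 0)
    (Set.mem_univ (2 * Real.pi))
  simp [Complex.exp_two_pi_mul_I, Real.pi_ne_zero] at this

/-- If `(z - p) / (z - q)` has a continuous logarithm on the compact set `K`, then `K` does not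
separate `p` from `q`. -/
theorem mem_connectedComponentIn_of_hasLogOn {K : Set ℂ} (hK : IsCompact K) {p q : ℂ} (hp : p ∉ K)
    (hq : q ∉ K) (h : HasLogOn K (fun z => (z - p) / (z - q))) :
    q ∈ connectedComponentIn Kᶜ p := by
  by_contra hpq
  have hqp : p ∉ connectedComponentIn Kᶜ q := by
    intro hcon
    rw [← connectedComponentIn_eq hcon] at hpq
    exact hpq (mem_connectedComponentIn hq)
  have h' : HasLogOn K (fun z => (z - q) / (z - p)) := h.inv.congr fun z _ => by simp only [inv_div]
  have h1 : ¬ Bornology.IsBounded (connectedComponentIn Kᶜ p) :=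
    fun hb => not_hasLogOn_of_bounded hK hp hq hpq hb h
  have h2 : ¬ Bornology.IsBounded (connectedComponentIn Kᶜ q) :=
    fun hb => not_hasLogOn_of_bounded hK hq hp hqp hb h'
  obtain ⟨r, hr⟩ := (Metric.isBounded_iff_subset_closedBall (0 : ℂ)).1 hK.isBounded
  rw [Metric.isBounded_iff_subset_closedBall (0 : ℂ)] at h1 h2
  push Not at h1 h2
  obtain ⟨x, hx, hxr⟩ := Set.not_subset.1 (h1 r)
  obtain ⟨y, hy, hyr⟩ := Set.not_subset.1 (h2 r)
  have hsub := (isPreconnected_compl_closedBall r).subset_connectedComponentIn hxr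
    (Set.compl_subset_compl.2 hr)
  have hyx : y ∈ connectedComponentIn Kᶜ x := hsub hyr
  rw [← connectedComponentIn_eq hx] at hyx
  rw [connectedComponentIn_eq hyx, ← connectedComponentIn_eq hy] at hpq
  exact hpq (mem_connectedComponentIn hq)

/-! ### Skeletons of subgraphs of a plane graph -/

namespace PlaneEmbedding

variable {G : SimpleGraph V} (E : PlaneEmbedding G)

/-- The points of the vertices in `S` and of the arcs indexed by `P`. -/
def trace (S : Set V) (P : V → V → Prop) : Set ℂ :=
  E.vtx '' S ∪ ⋃ (u : V) (v : V) (_ : P u v), E.arc u v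

/-- All vertices, together with the arcs of the edges of `H`. -/
def skel (H : SimpleGraph V) : Set ℂ := E.trace Set.univ H.Adj

/-- An arc without its endpoints. -/
def inner (u v : V) : Set ℂ := E.arc u v \ {E.vtx u, E.vtx v}

theorem mem_trace {S : Set V} {P : V → V → Prop} {z : ℂ} :
    z ∈ E.trace S P ↔ (∃ w ∈ S, E.vtx w = z) ∨ ∃ u v, P u v ∧ z ∈ E.arc u v := by
  simp [trace]

theorem mem_skel {H : SimpleGraph V} {z : ℂ} :
    z ∈ E.skel H ↔ (∃ w, E.vtx w = z) ∨ ∃ u v, H.Adj u v ∧ z ∈ E.arc u v := by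
  simp [skel, mem_trace]

theorem inner_symm (u v : V) : E.inner u v = E.inner v u := by
  rw [inner, inner, E.arc_symm, Set.pair_comm]

theorem vtx_mem_skel (H : SimpleGraph V) (w : V) : E.vtx w ∈ E.skel H :=
  E.mem_skel.2 (Or.inl ⟨w, rfl⟩)

theorem arc_subset_skel {H : SimpleGraph V} {u v : V} (h : H.Adj u v) : E.arc u v ⊆ E.skel H :=
  fun _ hz => E.mem_skel.2 (Or.inr ⟨u, v, h, hz⟩)

theorem skel_mono {H H' : SimpleGraph V} (h : H ≤ H') : E.skel H ⊆ E.skel H' := by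
  intro z hz
  rw [mem_skel] at hz ⊢
  exact hz.imp id fun ⟨u, v, huv, hz⟩ => ⟨u, v, h huv, hz⟩

theorem isCompact_arc {u v : V} (h : G.Adj u v) : IsCompact (E.arc u v) := by
  obtain ⟨γ, hγ, -, -, -, harc⟩ := E.arc_curve h
  rw [harc]
  exact isCompact_Icc.image_of_continuousOn hγ

theorem left_mem_arc {u v : V} (h : G.Adj u v) : E.vtx u ∈ E.arc u v := by
  obtain ⟨γ, -, -, h0, -, harc⟩ := E.arc_curve h
  rw [harc]
  exact ⟨0, by simp, h0⟩

theorem right_mem_arc {u v : V} (h : G.Adj u v) : E.vtx v ∈ E.arc u v := by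
  rw [E.arc_symm]
  exact E.left_mem_arc h.symm

theorem isCompact_trace [Finite V] (S : Set V) {P : V → V → Prop} (hP : ∀ u v, P u v → G.Adj u v) :
    IsCompact (E.trace S P) :=
  ((Set.toFinite S).image _).isCompact.union <| isCompact_iUnion fun u => isCompact_iUnion fun v =>
    isCompact_iUnion fun h => E.isCompact_arc (hP u v h)

theorem isCompact_skel [Finite V] {H : SimpleGraph V} (hH : H ≤ G) : IsCompact (E.skel H) :=
  E.isCompact_trace _ fun _ _ h => hH h

theorem vtx_notMem_inner {u v : V} (h : G.Adj u v) (w : V) : E.vtx w ∉ E.inner u v := by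
  rintro ⟨h1, h2⟩
  rcases E.arc_vtx h w h1 with rfl | rfl <;> simp at h2

/-- An interior point of an arc lies on no vertex and on no other arc. -/
theorem edge_eq_of_mem_inner {u v x y : V} (h : G.Adj u v) (h' : G.Adj x y) {z : ℂ}
    (hz : z ∈ E.inner u v) (hz' : z ∈ E.arc x y) : s(u, v) = s(x, y) := by
  by_contra hne
  exact hz.2 (E.arc_inter h h' hne ⟨hz.1, hz'⟩).1

theorem adj_of_mem_inner {H : SimpleGraph V} (hH : H ≤ G) {u v : V} (h : G.Adj u v) {z : ℂ}
    (hz : z ∈ E.inner u v) (hz' : z ∈ E.skel H) : H.Adj u v := by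
  rcases E.mem_skel.1 hz' with ⟨w, rfl⟩ | ⟨x, y, hxy, hzxy⟩
  · exact absurd hz (E.vtx_notMem_inner h w)
  · have := E.edge_eq_of_mem_inner h (hH hxy) hz hzxy
    rwa [← SimpleGraph.mem_edgeSet, this]

theorem inner_eq_image {u v : V} {γ : ℝ → ℂ} (hinj : Set.InjOn γ (Set.Icc 0 1))
    (h0 : γ 0 = E.vtx u) (h1 : γ 1 = E.vtx v) (harc : E.arc u v = γ '' Set.Icc 0 1) :
    E.inner u v = γ '' Set.Ioo 0 1 := by
  have : ({E.vtx u, E.vtx v} : Set ℂ) = γ '' {0, 1} := by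
    rw [Set.image_pair, h0, h1]
  rw [inner, harc, this, ← hinj.image_sdiff_subset (by simp [Set.pair_subset_iff]),
    Set.Icc_sdiff_both]

theorem inner_nonempty {u v : V} (h : G.Adj u v) : (E.inner u v).Nonempty := by
  obtain ⟨γ, -, hinj, h0, h1, harc⟩ := E.arc_curve h
  rw [E.inner_eq_image hinj h0 h1 harc]
  exact (Set.nonempty_Ioo.2 one_pos).image _

theorem isPreconnected_inner {u v : V} (h : G.Adj u v) : IsPreconnected (E.inner u v) := by
  obtain ⟨γ, hγ, hinj, h0, h1, harc⟩ := E.arc_curve h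
  rw [E.inner_eq_image hinj h0 h1 harc]
  exact isPreconnected_Ioo.image _ (hγ.mono Set.Ioo_subset_Icc_self)

theorem arc_subset_closure_inner {u v : V} (h : G.Adj u v) : E.arc u v ⊆ closure (E.inner u v) := by
  obtain ⟨γ, hγ, hinj, h0, h1, harc⟩ := E.arc_curve h
  rw [E.inner_eq_image hinj h0 h1 harc, harc]
  have : Set.Icc (0 : ℝ) 1 = closure (Set.Ioo 0 1) := (closure_Ioo zero_ne_one).symm
  rw [this] at hγ ⊢
  exact hγ.image_closure

/-- A nonvanishing continuous function has a continuous logarithm on a plane forest. -/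
theorem hasLogOn_skel_of_isAcyclic [Finite V] {f : ℂ → ℂ} {H : SimpleGraph V} (hH : H ≤ G)
    (hac : H.IsAcyclic) (hf : ContinuousOn f (E.skel H)) (h0 : ∀ z ∈ E.skel H, f z ≠ 0) :
    HasLogOn (E.skel H) f := by
  classical
  induction H using WellFoundedLT.induction with
  | ind H ih =>
  by_cases hbot : H = ⊥
  · subst hbot
    have hfin : (E.skel ⊥).Finite := by
      refine (Set.finite_range E.vtx).subset fun z hz => ?_
      rcases E.mem_skel.1 hz with h | ⟨_, _, h, _⟩
      · exact h
      · exact h.elim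
    exact ⟨fun z => Complex.log (f z), hfin.continuousOn _, fun z hz => Complex.exp_log (h0 z hz)⟩
  obtain ⟨u, v, huv⟩ := SimpleGraph.ne_bot_iff_exists_adj.1 hbot
  set H' := H.deleteEdges {s(u, v)} with hH'
  have hle : H' ≤ H := deleteEdges_le _
  have hlt : H' < H := lt_of_le_of_ne hle fun h => by
    have : H'.Adj u v := h ▸ huv
    simp [hH'] at this
  have hlog : HasLogOn (E.skel H') f := ih H' hlt (hle.trans hH) (hac.anti hle)
    (hf.mono (E.skel_mono hle)) fun z hz => h0 z (E.skel_mono hle hz)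
  have hbr : ¬ H'.Reachable u v := isBridge_iff.1 (isAcyclic_iff_forall_adj_isBridge.1 hac huv)
  let S : Set V := {w | H'.Reachable u w}
  let A : Set ℂ := E.trace S fun x y => H'.Adj x y ∧ x ∈ S
  let B : Set ℂ := E.trace Sᶜ fun x y => H'.Adj x y ∧ x ∉ S
  have hS : ∀ {x y}, H'.Adj x y → (x ∈ S ↔ y ∈ S) := fun h =>
    ⟨fun hx => hx.trans h.reachable, fun hy => hy.trans h.symm.reachable⟩
  have hcA : IsCompact A := E.isCompact_trace _ fun _ _ h => hH (hle h.1)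
  have hcB : IsCompact B := E.isCompact_trace _ fun _ _ h => hH (hle h.1)
  have hA' : A ⊆ E.skel H' := by
    intro z hz
    rw [mem_skel]
    exact (E.mem_trace.1 hz).imp (fun ⟨w, _, h⟩ => ⟨w, h⟩) fun ⟨x, y, h, h'⟩ => ⟨x, y, h.1, h'⟩
  have hB' : B ⊆ E.skel H' := by
    intro z hz
    rw [mem_skel]
    exact (E.mem_trace.1 hz).imp (fun ⟨w, _, h⟩ => ⟨w, h⟩) fun ⟨x, y, h, h'⟩ => ⟨x, y, h.1, h'⟩
  have hskel : E.skel H = A ∪ E.arc u v ∪ B := by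
    apply Set.Subset.antisymm
    · intro z hz
      rcases E.mem_skel.1 hz with ⟨w, rfl⟩ | ⟨x, y, hxy, hz⟩
      · by_cases hw : w ∈ S
        · exact Or.inl (Or.inl (E.mem_trace.2 (Or.inl ⟨w, hw, rfl⟩)))
        · exact Or.inr (E.mem_trace.2 (Or.inl ⟨w, hw, rfl⟩))
      · by_cases he : s(x, y) = s(u, v)
        · rcases Sym2.eq_iff.1 he with ⟨rfl, rfl⟩ | ⟨rfl, rfl⟩
          · exact Or.inl (Or.inr hz)
          · rw [E.arc_symm] at hz
            exact Or.inl (Or.inr hz)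
        · have hxy' : H'.Adj x y := by simp [hH', hxy, he]
          by_cases hw : x ∈ S
          · exact Or.inl (Or.inl (E.mem_trace.2 (Or.inr ⟨x, y, ⟨hxy', hw⟩, hz⟩)))
          · exact Or.inr (E.mem_trace.2 (Or.inr ⟨x, y, ⟨hxy', hw⟩, hz⟩))
    · rintro z ((hz | hz) | hz)
      · exact E.skel_mono hle (hA' hz)
      · exact E.arc_subset_skel huv hz
      · exact E.skel_mono hle (hB' hz)
  have huvG := hH huv
  have hAarc : A ∩ E.arc u v ⊆ {E.vtx u} := by
    rintro z ⟨hz, hz'⟩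
    rcases E.mem_trace.1 hz with ⟨w, hw, rfl⟩ | ⟨x, y, ⟨hxy, hx⟩, hz⟩
    · rcases E.arc_vtx huvG w hz' with rfl | rfl
      · rfl
      · exact absurd hw hbr
    · have hne : s(u, v) ≠ s(x, y) := by
        intro he
        have : H'.Adj u v := by rwa [← SimpleGraph.mem_edgeSet, he]
        simp [hH'] at this
      obtain ⟨h1, h2⟩ := E.arc_inter huvG (hH (hle hxy)) hne ⟨hz', hz⟩
      rcases h1 with h1 | h1
      · exact h1
      · have : v ∈ S := by
          rcases h2 with h2 | h2
          · rw [Set.mem_singleton_iff] at h1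
            rwa [E.vtx_inj (h1.symm.trans h2)]
          · rw [Set.mem_singleton_iff] at h1 h2
            rwa [E.vtx_inj (h1.symm.trans h2), ← hS hxy]
        exact absurd this hbr
  have hBarc : (A ∪ E.arc u v) ∩ B ⊆ {E.vtx v} := by
    rintro z ⟨hzA | hz', hzB⟩
    · exfalso
      rcases E.mem_trace.1 hzA with ⟨w, hw, rfl⟩ | ⟨x, y, ⟨hxy, hx⟩, hz⟩ <;>
        rcases E.mem_trace.1 hzB with ⟨w', hw', hz'⟩ | ⟨x', y', ⟨hxy', hx'⟩, hz'⟩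
      · rw [E.vtx_inj hz'] at hw'
        exact hw' hw
      · rcases E.arc_vtx (hH (hle hxy')) w hz' with rfl | rfl
        · exact hx' hw
        · exact hx' ((hS hxy').2 hw)
      · rw [← hz'] at hz
        rcases E.arc_vtx (hH (hle hxy)) w' hz with rfl | rfl
        · exact hw' hx
        · exact hw' ((hS hxy).1 hx)
      · by_cases he : s(x, y) = s(x', y')
        · rcases Sym2.eq_iff.1 he with ⟨rfl, rfl⟩ | ⟨rfl, rfl⟩
          · exact hx' hx
          · exact hx' ((hS hxy).1 hx)
        · obtain ⟨h1, h2⟩ := E.arc_inter (hH (hle hxy)) (hH (hle hxy')) he ⟨hz, hz'⟩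
          have hy := (hS hxy).1 hx
          have hy' : y' ∉ S := fun h => hx' ((hS hxy').2 h)
          rcases h1 with h1 | h1 <;> rcases h2 with h2 | h2 <;>
            rw [Set.mem_singleton_iff.1 h2] at h1 <;> have := E.vtx_inj h1 <;> subst this <;>
            contradiction
    · rcases E.mem_trace.1 hzB with ⟨w, hw, rfl⟩ | ⟨x, y, ⟨hxy, hx⟩, hz⟩
      · rcases E.arc_vtx huvG w hz' with rfl | rfl
        · exact absurd (Reachable.refl _) hw
        · rfl
      · have hne : s(u, v) ≠ s(x, y) := by
          intro he
          have : H'.Adj u v := by rwa [← SimpleGraph.mem_edgeSet, he]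
          simp [hH'] at this
        obtain ⟨h1, h2⟩ := E.arc_inter huvG (hH (hle hxy)) hne ⟨hz', hz⟩
        rcases h1 with h1 | h1
        · exfalso
          have : u ∉ S := by
            rcases h2 with h2 | h2
            · rwa [E.vtx_inj (h1.symm.trans h2)]
            · rw [Set.mem_singleton_iff] at h2
              rwa [E.vtx_inj (h1.symm.trans h2), ← hS hxy]
          exact this (Reachable.refl _)
        · exact h1
  have harclog : HasLogOn (E.arc u v) f := by
    obtain ⟨γ, hγ, hinj, -, -, harc⟩ := E.arc_curve huvG
    have hsub := E.arc_subset_skel huv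
    rw [harc] at hsub ⊢
    exact hasLogOn_arc zero_le_one hγ hinj (hf.mono hsub) fun z hz => h0 z (hsub hz)
  have hcarc := E.isCompact_arc huvG
  rw [hskel]
  exact ((hlog.mono hA').union hcA.isClosed hcarc.isClosed hAarc harclog).union
    (hcA.union hcarc).isClosed hcB.isClosed hBarc (hlog.mono hB')

end PlaneEmbedding

/-! ### Regions of a plane graph -/

theorem isPreconnected_ball_diff_center (c : ℂ) (r : ℝ) :
    IsPreconnected (Metric.ball c r \ {c}) := by
  have : Metric.ball c r \ {c} =
      (fun x : ℝ × ℝ => c + (x.1 : ℂ) * Complex.exp (x.2 * Complex.I)) ''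
        (Set.Ioo 0 r ×ˢ Set.univ) := by
    ext z
    simp only [Set.mem_sdiff, Metric.mem_ball, dist_eq_norm, Set.mem_singleton_iff, Set.mem_image,
      Set.mem_prod, Set.mem_Ioo, Set.mem_univ, and_true, Prod.exists]
    constructor
    · rintro ⟨hz, hne⟩
      refine ⟨‖z - c‖, (z - c).arg, ⟨norm_pos_iff.2 (sub_ne_zero.2 hne), hz⟩, ?_⟩
      rw [Complex.norm_mul_exp_arg_mul_I]
      ring
    · rintro ⟨s, θ, ⟨hs, hr⟩, rfl⟩
      simp [abs_of_pos hs, hr, hs.ne']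
  rw [this]
  exact (isPreconnected_Ioo.prod isPreconnected_univ).image _ (by fun_prop)

namespace PlaneEmbedding

variable {G : SimpleGraph V} (E : PlaneEmbedding G)

/-- The component of the complement of the skeleton of `H` containing `p`. -/
def region (H : SimpleGraph V) (p : ℂ) : Set ℂ := connectedComponentIn (E.skel H)ᶜ p

/-- The edges of `H` on the boundary of `R`. -/
def bdry (H : SimpleGraph V) (R : Set ℂ) : SimpleGraph V where
  Adj u v := H.Adj u v ∧ (E.inner u v ∩ closure R).Nonempty
  symm := ⟨fun u v h => ⟨h.1.symm, by rw [E.inner_symm]; exact h.2⟩⟩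
  loopless := ⟨fun u h => h.1.ne rfl⟩

theorem bdry_le (H : SimpleGraph V) (R : Set ℂ) : E.bdry H R ≤ H := fun _ _ h => h.1

theorem region_subset (H : SimpleGraph V) (p : ℂ) : E.region H p ⊆ (E.skel H)ᶜ :=
  connectedComponentIn_subset _ _

theorem isPreconnected_region (H : SimpleGraph V) (p : ℂ) : IsPreconnected (E.region H p) :=
  isPreconnected_connectedComponentIn

theorem mem_region_self {H : SimpleGraph V} {p : ℂ} (hp : p ∉ E.skel H) : p ∈ E.region H p :=
  mem_connectedComponentIn hp

theorem region_eq {H : SimpleGraph V} {p q : ℂ} (h : q ∈ E.region H p) :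
    E.region H p = E.region H q :=
  connectedComponentIn_eq h

theorem notMem_of_mem_region {H : SimpleGraph V} {p q : ℂ} (h : q ∈ E.region H p) :
    p ∉ E.skel H := by
  by_contra hp
  rw [region, connectedComponentIn_eq_empty (by simpa using hp)] at h
  exact h

theorem mem_region_symm {H : SimpleGraph V} {p q : ℂ} (h : q ∈ E.region H p) :
    p ∈ E.region H q := by
  rw [← E.region_eq h]
  exact E.mem_region_self (E.notMem_of_mem_region h)

theorem region_anti {H H' : SimpleGraph V} (h : H ≤ H') (p : ℂ) : E.region H' p ⊆ E.region H p :=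
  connectedComponentIn_mono _ (Set.compl_subset_compl.2 (E.skel_mono h))

theorem mem_region_of_isPreconnected {H : SimpleGraph V} {C : Set ℂ} (hC : IsPreconnected C)
    (hCH : C ⊆ (E.skel H)ᶜ) {p q : ℂ} (hp : p ∈ C) (hq : q ∈ C) : q ∈ E.region H p :=
  hC.subset_connectedComponentIn hp hCH hq

variable [Finite V]

theorem isOpen_region {H : SimpleGraph V} (hH : H ≤ G) (p : ℂ) : IsOpen (E.region H p) :=
  (E.isCompact_skel hH).isClosed.isOpen_compl.connectedComponentIn

theorem mem_region_of_mem_closure {H : SimpleGraph V} (hH : H ≤ G) {p z : ℂ}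
    (hz : z ∈ closure (E.region H p)) (hz' : z ∉ E.skel H) : z ∈ E.region H p := by
  by_contra hcon
  refine hz' (frontier_connectedComponentIn_subset (E.isCompact_skel hH).isClosed p ⟨hz, ?_⟩)
  rwa [show connectedComponentIn (E.skel H)ᶜ p = E.region H p from rfl,
    (E.isOpen_region hH p).interior_eq]

theorem mem_skel_bdry {H : SimpleGraph V} (hH : H ≤ G) {p z : ℂ}
    (hz : z ∈ closure (E.region H p)) (hz' : z ∉ E.region H p) :
    z ∈ E.skel (E.bdry H (E.region H p)) := by
  have hzH : z ∈ E.skel H := by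
    by_contra h
    exact hz' (E.mem_region_of_mem_closure hH hz h)
  rw [mem_skel] at hzH ⊢
  by_cases hw : ∃ w, E.vtx w = z
  · exact Or.inl hw
  · obtain ⟨u, v, huv, hzuv⟩ := hzH.resolve_left hw
    refine Or.inr ⟨u, v, ⟨huv, z, ⟨hzuv, ?_⟩, hz⟩, hzuv⟩
    rintro (h | h)
    · exact hw ⟨u, h.symm⟩
    · exact hw ⟨v, (Set.mem_singleton_iff.1 h).symm⟩

/-- A region is determined by its boundary edges. -/
theorem region_eq_of_bdry_le {H K : SimpleGraph V} (hH : H ≤ G) (hK : K ≤ H) {p : ℂ}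
    (hp : p ∉ E.skel H) (h : E.bdry H (E.region H p) ≤ K) : E.region K p = E.region H p := by
  refine Set.Subset.antisymm ?_ (E.region_anti hK p)
  have hpK : p ∉ E.skel K := fun h => hp (E.skel_mono hK h)
  refine (E.isPreconnected_region K p).subset_of_closure_inter_subset (E.isOpen_region hH p)
    ⟨p, E.mem_region_self hpK, E.mem_region_self hp⟩ ?_
  rintro z ⟨hz, hzK⟩
  by_contra hcon
  exact E.region_subset K p hzK (E.skel_mono h (E.mem_skel_bdry hH hz hcon))

theorem mem_region_of_isAcyclic {H : SimpleGraph V} (hH : H ≤ G) (hac : H.IsAcyclic) {p q : ℂ}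
    (hp : p ∉ E.skel H) (hq : q ∉ E.skel H) : q ∈ E.region H p := by
  have hne : ∀ x ∉ E.skel H, ∀ z ∈ E.skel H, z - x ≠ 0 := by
    intro x hx z hz h
    exact hx (sub_eq_zero.1 h ▸ hz)
  refine mem_connectedComponentIn_of_hasLogOn (E.isCompact_skel hH) hp hq
    (E.hasLogOn_skel_of_isAcyclic hH hac ?_ fun z hz => div_ne_zero (hne p hp z hz) (hne q hq z hz))
  exact (continuousOn_id.sub continuousOn_const).div
        (continuousOn_id.sub continuousOn_const) (hne q hq)

/-- The boundary of a region of a graph with a cycle contains a cycle. -/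
theorem not_isAcyclic_bdry {H : SimpleGraph V} (hH : H ≤ G) (hac : ¬ H.IsAcyclic) {p : ℂ}
    (hp : p ∉ E.skel H) : ¬ (E.bdry H (E.region H p)).IsAcyclic := by
  intro hB
  refine hac (hB.anti fun u v huv => ?_)
  obtain ⟨z, hz⟩ := E.inner_nonempty (hH huv)
  have hle := E.bdry_le H (E.region H p)
  refine E.adj_of_mem_inner (hle.trans hH) (hH huv) hz ?_
  by_contra hzB
  have := E.mem_region_of_isAcyclic (hle.trans hH) hB (fun h => hp (E.skel_mono hle h)) hzB
  rw [E.region_eq_of_bdry_le hH hle hp le_rfl] at this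
  exact E.region_subset _ _ this (E.arc_subset_skel huv hz.1)

/-- If a region is adherent to one interior point of an arc, it is adherent to all of them. -/
theorem inner_subset_closure_region {H : SimpleGraph V} (hH : H ≤ G) {u v : V} {p : ℂ}
    (h : (E.bdry H (E.region H p)).Adj u v) : E.inner u v ⊆ closure (E.region H p) := by
  obtain ⟨huv, z, hz, hzR⟩ := h
  have hp : p ∉ E.skel H := by
    obtain ⟨y, hy⟩ := closure_nonempty_iff.1 ⟨z, hzR⟩
    exact E.notMem_of_mem_region hy
  have huvG := hH huv
  obtain ⟨γ, hγ, hinj, h0, h1, harc⟩ := E.arc_curve huvG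
  have hinner := E.inner_eq_image hinj h0 h1 harc
  intro z' hz'
  by_contra hcon
  have hz'' := hz'
  rw [hinner] at hz''
  obtain ⟨s, hs, rfl⟩ := hz''
  obtain ⟨δ, hδ, hδsub⟩ : ∃ δ > 0, Set.Icc (s - δ) (s + δ) ⊆
      {t | γ t ∈ (closure (E.region H p))ᶜ} ∩ Set.Ioo 0 1 := by
    have hc : ContinuousAt γ s := hγ.continuousAt (Icc_mem_nhds hs.1 hs.2)
    have hmem := Filter.inter_mem
      (hc.preimage_mem_nhds (isClosed_closure.isOpen_compl.mem_nhds hcon))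
      (Ioo_mem_nhds hs.1 hs.2)
    obtain ⟨δ, hδ, h⟩ := Metric.nhds_basis_closedBall.mem_iff.1 hmem
    rw [Real.closedBall_eq_Icc] at h
    exact ⟨δ, hδ, h⟩
  have hδ0 : 0 < s - δ := (hδsub ⟨le_rfl, by linarith⟩).2.1
  have hδ1 : s + δ < 1 := (hδsub ⟨by linarith, le_rfl⟩).2.2
  set H' := H.deleteEdges {s(u, v)} with hH'
  have hle : H' ≤ H := deleteEdges_le _
  have hinnerH' : E.inner u v ⊆ (E.skel H')ᶜ := by
    intro y hy hyH'
    have := E.adj_of_mem_inner (hle.trans hH) huvG hy hyH'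
    simp [hH'] at this
  have hpre : IsPreconnected (insert z (E.region H p) ∪ E.inner u v) := by
    refine IsPreconnected.union z (Set.mem_insert _ _) hz ?_ (E.isPreconnected_inner huvG)
    exact (E.isPreconnected_region H p).subset_closure (Set.subset_insert _ _)
      (Set.insert_subset hzR subset_closure)
  have hlog1 : HasLogOn (E.skel H') (fun y => (y - p) / (y - γ s)) := by
    refine hasLogOn_of_isPreconnected (E.isCompact_skel (hle.trans hH)) hpre ?_
      (Or.inl (Or.inr (E.mem_region_self hp))) (Or.inr hz')
    rintro y ((rfl | hy) | hy)
    · exact hinnerH' hz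
    · exact fun hy' => E.region_subset H p hy (E.skel_mono hle hy')
    · exact hinnerH' hy
  have hsubarc : ∀ a b : ℝ, 0 ≤ a → a ≤ b → b ≤ 1 → (s < a ∨ b < s) →
      HasLogOn (γ '' Set.Icc a b) (fun y => (y - p) / (y - γ s)) := by
    intro a b ha hab hb hsab
    have hsub : Set.Icc a b ⊆ Set.Icc 0 1 := Set.Icc_subset_Icc ha hb
    have hne1 : ∀ y ∈ γ '' Set.Icc a b, y - p ≠ 0 := by
      rintro _ ⟨t, ht, rfl⟩ h
      exact hp (E.arc_subset_skel huv (harc ▸ sub_eq_zero.1 h ▸ Set.mem_image_of_mem _ (hsub ht)))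
    have hne2 : ∀ y ∈ γ '' Set.Icc a b, y - γ s ≠ 0 := by
      rintro _ ⟨t, ht, rfl⟩ h
      have : t = s := hinj (hsub ht) (Set.Ioo_subset_Icc_self hs) (sub_eq_zero.1 h)
      subst this
      rcases hsab with h | h
      · exact absurd ht.1 (not_le.2 h)
      · exact absurd ht.2 (not_le.2 h)
    refine hasLogOn_arc hab (hγ.mono hsub) (hinj.mono hsub) ?_
      fun y hy => div_ne_zero (hne1 y hy) (hne2 y hy)
    exact (continuousOn_id.sub continuousOn_const).div
      (continuousOn_id.sub continuousOn_const) hne2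
  have hcomp : ∀ a b : ℝ, 0 ≤ a → b ≤ 1 → IsCompact (γ '' Set.Icc a b) := fun a b ha hb =>
    isCompact_Icc.image_of_continuousOn (hγ.mono (Set.Icc_subset_Icc ha hb))
  have hends : ∀ t ∈ Set.Icc (0 : ℝ) 1, γ t ∈ E.skel H' → t = 0 ∨ t = 1 := by
    intro t ht htH'
    by_contra hne
    push Not at hne
    refine hinnerH' ?_ htH'
    rw [hinner]
    exact ⟨t, ⟨lt_of_le_of_ne ht.1 hne.1.symm, lt_of_le_of_ne ht.2 hne.2⟩, rfl⟩
  set A := E.skel H'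
  set B := γ '' Set.Icc 0 (s - δ)
  set C := γ '' Set.Icc (s + δ) 1
  have hcA : IsCompact A := E.isCompact_skel (hle.trans hH)
  have hcB : IsCompact B := hcomp _ _ le_rfl (by linarith)
  have hcC : IsCompact C := hcomp _ _ (by linarith) le_rfl
  have hlog : HasLogOn (A ∪ B ∪ C) (fun y => (y - p) / (y - γ s)) := by
    refine HasLogOn.union (hcA.union hcB).isClosed hcC.isClosed (x := γ 1) ?_
      (HasLogOn.union hcA.isClosed hcB.isClosed (x := γ 0) ?_ hlog1
        (hsubarc _ _ le_rfl hδ0.le (by linarith) (Or.inr (by linarith))))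
      (hsubarc _ _ (by linarith) (by linarith) le_rfl (Or.inl (by linarith)))
    · rintro _ ⟨hy, t, ht, rfl⟩
      have htI : t ∈ Set.Icc (0 : ℝ) 1 := ⟨by linarith [ht.1], ht.2⟩
      rcases hy with hy | ⟨t', ht', heq⟩
      · rcases hends t htI hy with rfl | rfl
        · linarith [ht.1]
        · rfl
      · have := hinj ⟨ht'.1, by linarith [ht'.2]⟩ htI heq
        linarith [ht'.2, ht.1]
    · rintro _ ⟨hy, t, ht, rfl⟩
      rcases hends t ⟨ht.1, by linarith [ht.2]⟩ hy with rfl | rfl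
      · rfl
      · linarith [ht.2]
  have hBarc : B ⊆ E.skel H := fun y hy => E.arc_subset_skel huv
    (harc ▸ Set.image_mono (Set.Icc_subset_Icc le_rfl (by linarith)) hy)
  have hCarc : C ⊆ E.skel H := fun y hy => E.arc_subset_skel huv
    (harc ▸ Set.image_mono (Set.Icc_subset_Icc (by linarith) le_rfl) hy)
  have hpK : p ∉ A ∪ B ∪ C := by
    rintro ((h | h) | h)
    · exact hp (E.skel_mono hle h)
    · exact hp (hBarc h)
    · exact hp (hCarc h)
  have hsK : γ s ∉ A ∪ B ∪ C := by
    rintro ((h | ⟨t, ht, heq⟩) | ⟨t, ht, heq⟩)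
    · exact hinnerH' hz' h
    · have := hinj ⟨ht.1, by linarith [ht.2]⟩ (Set.Ioo_subset_Icc_self hs) heq
      linarith [ht.2]
    · have := hinj ⟨by linarith [ht.1], ht.2⟩ (Set.Ioo_subset_Icc_self hs) heq
      linarith [ht.1]
  have hmem := mem_connectedComponentIn_of_hasLogOn ((hcA.union hcB).union hcC) hpK hsK hlog
  have hsubset : connectedComponentIn (A ∪ B ∪ C)ᶜ p ⊆ E.region H p := by
    refine isPreconnected_connectedComponentIn.subset_of_closure_inter_subset
      (E.isOpen_region hH p) ⟨p, mem_connectedComponentIn hpK, E.mem_region_self hp⟩ ?_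
    rintro y ⟨hy, hyK⟩
    refine E.mem_region_of_mem_closure hH hy fun hyH => ?_
    have hyK' := connectedComponentIn_subset _ _ hyK
    rcases E.mem_skel.1 hyH with ⟨w, rfl⟩ | ⟨x', y', hxy, hy'⟩
    · exact hyK' (Or.inl (Or.inl (E.vtx_mem_skel _ w)))
    · by_cases he : s(x', y') = s(u, v)
      · have : y ∈ E.arc u v := by
          rcases Sym2.eq_iff.1 he with ⟨rfl, rfl⟩ | ⟨rfl, rfl⟩
          · exact hy'
          · rwa [E.arc_symm]
        rw [harc] at this
        obtain ⟨t, ht, rfl⟩ := this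
        rcases le_or_gt t (s - δ) with h | h
        · exact hyK' (Or.inl (Or.inr ⟨t, ⟨ht.1, h⟩, rfl⟩))
        rcases le_or_gt (s + δ) t with h' | h'
        · exact hyK' (Or.inr ⟨t, ⟨h', ht.2⟩, rfl⟩)
        exact (hδsub ⟨h.le, h'.le⟩).1 hy
      · exact hyK' (Or.inl (Or.inl (E.arc_subset_skel (by simp [hH', hxy, he]) hy')))
  exact hcon (subset_closure (hsubset hmem))

theorem vtx_mem_closure_region {H : SimpleGraph V} (hH : H ≤ G) {u v : V} {p : ℂ}
    (h : (E.bdry H (E.region H p)).Adj u v) : E.vtx u ∈ closure (E.region H p) :=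
  closure_minimal (E.inner_subset_closure_region hH h) isClosed_closure
    (E.arc_subset_closure_inner (hH h.1) (E.left_mem_arc (hH h.1)))

/-- Near a vertex `x`, a skeleton consists of the arcs at `x`. -/
theorem exists_ball_vtx {H : SimpleGraph V} (hH : H ≤ G) (x : V) :
    ∃ ε > 0, ∀ z ∈ Metric.ball (E.vtx x) ε, z ≠ E.vtx x → z ∈ E.skel H →
      ∃ w, H.Adj x w ∧ z ∈ E.inner x w := by
  set K := E.trace {x}ᶜ fun u v => H.Adj u v ∧ u ≠ x ∧ v ≠ x with hK
  have hcK : IsCompact K := E.isCompact_trace _ fun _ _ h => hH h.1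
  have hxK : E.vtx x ∉ K := by
    intro h
    rcases E.mem_trace.1 h with ⟨w, hw, heq⟩ | ⟨u, v, ⟨huv, hu, hv⟩, h⟩
    · exact hw (E.vtx_inj heq)
    · rcases E.arc_vtx (hH huv) x h with rfl | rfl
      · exact hu rfl
      · exact hv rfl
  obtain ⟨ε, hε, hball⟩ := Metric.isOpen_iff.1 hcK.isClosed.isOpen_compl _ hxK
  refine ⟨ε, hε, fun z hz hne hzH => ?_⟩
  have hzK := hball hz
  have hzv : ∀ w, z ≠ E.vtx w := by
    rintro w rfl
    exact hzK (E.mem_trace.2 (Or.inl ⟨w, fun h => hne (h ▸ rfl), rfl⟩))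
  rcases E.mem_skel.1 hzH with ⟨w, rfl⟩ | ⟨u, v, huv, h⟩
  · exact absurd rfl (hzv w)
  · have hin : z ∈ E.inner u v := ⟨h, by simp [hzv]⟩
    by_cases hu : u = x
    · exact ⟨v, hu ▸ huv, hu ▸ hin⟩
    by_cases hv : v = x
    · exact ⟨u, hv ▸ huv.symm, by rw [inner_symm]; exact hv ▸ hin⟩
    exact absurd (E.mem_trace.2 (Or.inr ⟨u, v, ⟨huv, hu, hv⟩, h⟩)) hzK

theorem exists_bdry_adj {H : SimpleGraph V} (hH : H ≤ G) {x v : V} (hxv : H.Adj x v) {p : ℂ}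
    (hx : E.vtx x ∈ closure (E.region H p)) : ∃ w, (E.bdry H (E.region H p)).Adj x w := by
  by_contra hcon
  push Not at hcon
  obtain ⟨ε, hε, hball⟩ := E.exists_ball_vtx hH x
  have hsub : Metric.ball (E.vtx x) ε \ {E.vtx x} ⊆ E.region H p := by
    refine (isPreconnected_ball_diff_center _ _).subset_of_closure_inter_subset
      (E.isOpen_region hH p) ?_ ?_
    · obtain ⟨y, hy, hyR⟩ := mem_closure_iff.1 hx _ Metric.isOpen_ball (Metric.mem_ball_self hε)
      refine ⟨y, ⟨hy, ?_⟩, hyR⟩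
      rintro rfl
      exact E.region_subset _ _ hyR (E.vtx_mem_skel _ _)
    · rintro y ⟨hy, hyb, hyx⟩
      refine E.mem_region_of_mem_closure hH hy fun hyH => ?_
      obtain ⟨w, hw, hyw⟩ := hball y hyb hyx hyH
      exact hcon w ⟨hw, y, hyw, hy⟩
  obtain ⟨y, hy, hyi⟩ := mem_closure_iff.1
    (E.arc_subset_closure_inner (hH hxv) (E.left_mem_arc (hH hxv))) _ Metric.isOpen_ball
    (Metric.mem_ball_self hε)
  refine E.region_subset _ _ (hsub ⟨hy, ?_⟩) (E.arc_subset_skel hxv hyi.1)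
  rintro rfl
  exact E.vtx_notMem_inner (hH hxv) x hyi

end PlaneEmbedding

/-! ### Simple arcs -/

/-- `A` is a simple arc from `x` to `y`. -/
def IsArc (A : Set ℂ) (x y : ℂ) : Prop :=
  ∃ γ : ℝ → ℂ, ContinuousOn γ (Set.Icc 0 1) ∧ Set.InjOn γ (Set.Icc 0 1) ∧
    γ 0 = x ∧ γ 1 = y ∧ A = γ '' Set.Icc 0 1

theorem isArc_image {a b : ℝ} (hab : a < b) {γ : ℝ → ℂ} (hγ : ContinuousOn γ (Set.Icc a b))
    (hinj : Set.InjOn γ (Set.Icc a b)) : IsArc (γ '' Set.Icc a b) (γ a) (γ b) := by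
  have himg : (fun t : ℝ => (b - a) * t + a) '' Set.Icc 0 1 = Set.Icc a b := by
    rw [Set.image_affine_Icc' (sub_pos.2 hab)]
    simp
  have hmaps : Set.MapsTo (fun t : ℝ => (b - a) * t + a) (Set.Icc 0 1) (Set.Icc a b) :=
    Set.mapsTo_iff_image_subset.2 himg.subset
  refine ⟨γ ∘ fun t => (b - a) * t + a, hγ.comp (by fun_prop) hmaps, ?_, by simp, by simp, ?_⟩
  · refine hinj.comp (fun s _ t _ h => ?_) hmaps
    have := sub_pos.2 hab
    simpa [this.ne'] using h
  · rw [Set.image_comp, himg]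

theorem IsArc.symm {A : Set ℂ} {x y : ℂ} (h : IsArc A x y) : IsArc A y x := by
  obtain ⟨γ, hγ, hinj, rfl, rfl, rfl⟩ := h
  have himg : (fun t : ℝ => 1 - t) '' Set.Icc 0 1 = Set.Icc 0 1 := by simp
  have hmaps : Set.MapsTo (fun t : ℝ => 1 - t) (Set.Icc 0 1) (Set.Icc 0 1) :=
    Set.mapsTo_iff_image_subset.2 himg.subset
  refine ⟨γ ∘ fun t => 1 - t, hγ.comp (by fun_prop) hmaps, ?_, by simp, by simp, ?_⟩
  · exact hinj.comp (fun s _ t _ h => by simpa using h) hmaps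
  · rw [Set.image_comp, himg]

theorem IsArc.left_mem {A : Set ℂ} {x y : ℂ} (h : IsArc A x y) : x ∈ A := by
  obtain ⟨γ, -, -, rfl, -, rfl⟩ := h
  exact ⟨0, by simp, rfl⟩

theorem IsArc.right_mem {A : Set ℂ} {x y : ℂ} (h : IsArc A x y) : y ∈ A := h.symm.left_mem

theorem isArc_segment {x y : ℂ} (h : x ≠ y) : IsArc (segment ℝ x y) x y :=
  ⟨AffineMap.lineMap x y, AffineMap.lineMap_continuous.continuousOn,
    (AffineMap.lineMap_injective ℝ h).injOn, by simp, by simp, segment_eq_image_lineMap ℝ x y⟩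

theorem IsArc.union {A B : Set ℂ} {x b y : ℂ} (hA : IsArc A x b) (hB : IsArc B b y)
    (hAB : A ∩ B ⊆ {b}) : IsArc (A ∪ B) x y := by
  obtain ⟨γ, hγ, hinj, rfl, rfl, rfl⟩ := hA
  obtain ⟨η, hγ', hinj', hb, rfl, rfl⟩ := hB
  let φ : ℝ → ℂ := fun t => if t ≤ 1 then γ t else η (t - 1)
  have hφ1 : Set.EqOn φ γ (Set.Icc 0 1) := fun t ht => if_pos ht.2
  have hφ2 : Set.EqOn φ (fun t => η (t - 1)) (Set.Icc 1 2) := by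
    intro t ht
    rcases ht.1.eq_or_lt with rfl | h
    · simp [φ, hb]
    · exact if_neg (not_le.2 h)
  have hmaps : Set.MapsTo (fun t : ℝ => t - 1) (Set.Icc 1 2) (Set.Icc 0 1) :=
    fun t ht => ⟨by linarith [ht.1], by linarith [ht.2]⟩
  have hunion : Set.Icc (0 : ℝ) 1 ∪ Set.Icc 1 2 = Set.Icc 0 2 :=
    Set.Icc_union_Icc_eq_Icc (by norm_num) (by norm_num)
  have hc : ContinuousOn φ (Set.Icc 0 2) := by
    rw [← hunion]
    exact (hγ.congr hφ1).union_of_isClosed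
      ((hγ'.comp (by fun_prop) hmaps).congr hφ2) isClosed_Icc isClosed_Icc
  have hcross : ∀ s ∈ Set.Icc (0 : ℝ) 1, ∀ t ∈ Set.Icc (1 : ℝ) 2, φ s = φ t → s = t := by
    intro s hs t ht hst
    rw [hφ1 hs, hφ2 ht] at hst
    have h1 : γ s = γ 1 := hAB ⟨⟨s, hs, rfl⟩, ⟨t - 1, hmaps ht, hst.symm⟩⟩
    have hs1 := hinj hs (by simp) h1
    have h2 : η (t - 1) = η 0 := by rw [hb, ← h1, hst]
    have ht1 := hinj' (hmaps ht) (by simp) h2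
    linarith
  have hinjφ : Set.InjOn φ (Set.Icc 0 2) := by
    rw [← hunion]
    rintro s (hs | hs) t (ht | ht) hst
    · rw [hφ1 hs, hφ1 ht] at hst
      exact hinj hs ht hst
    · exact hcross s hs t ht hst
    · exact (hcross t ht s hs hst.symm).symm
    · rw [hφ2 hs, hφ2 ht] at hst
      have := hinj' (hmaps hs) (hmaps ht) hst
      linarith
  have := isArc_image (by norm_num) hc hinjφ
  rw [← hunion, Set.image_union, hφ1.image_eq, hφ2.image_eq] at this
  have hshift : (fun t : ℝ => η (t - 1)) '' Set.Icc 1 2 = η '' Set.Icc 0 1 := by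
    rw [← Function.comp_def η (fun t : ℝ => t - 1), Set.image_comp]
    norm_num
  rw [hshift, hφ1 (by simp), hφ2 (by norm_num)] at this
  norm_num at this
  exact this

/-- The part of an arc before it first meets a closed set. -/
theorem IsArc.exists_first_hit {A B : Set ℂ} {x y : ℂ} (h : IsArc A x y) (hB : IsClosed B)
    (hx : x ∉ B) (hy : y ∈ B) :
    ∃ A' b, IsArc A' x b ∧ A' ⊆ A ∧ b ∈ B ∧ A' ∩ B ⊆ {b} ∧ b ∈ closure Bᶜ := by
  obtain ⟨γ, hγ, hinj, rfl, rfl, rfl⟩ := h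
  have hclosed : IsClosed (Set.Icc 0 1 ∩ γ ⁻¹' B) :=
    hγ.preimage_isClosed_of_isClosed isClosed_Icc hB
  have hcomp : IsCompact (Set.Icc 0 1 ∩ γ ⁻¹' B) :=
    isCompact_Icc.of_isClosed_subset hclosed Set.inter_subset_left
  obtain ⟨t, ⟨ht, htB⟩, hmin⟩ := hcomp.exists_isLeast ⟨1, by simp, hy⟩
  have ht0 : 0 < t := lt_of_le_of_ne ht.1 (by rintro rfl; exact hx htB)
  have hsub : Set.Icc 0 t ⊆ Set.Icc 0 1 := Set.Icc_subset_Icc le_rfl ht.2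
  have hbefore : ∀ s ∈ Set.Ico 0 t, γ s ∈ Bᶜ := fun s hs hsB =>
    not_lt.2 (hmin ⟨⟨hs.1, hs.2.le.trans ht.2⟩, hsB⟩) hs.2
  refine ⟨γ '' Set.Icc 0 t, γ t, isArc_image ht0 (hγ.mono hsub) (hinj.mono hsub),
    Set.image_mono hsub, htB, ?_, ?_⟩
  · rintro _ ⟨⟨s, hs, rfl⟩, hsB⟩
    rcases hs.2.eq_or_lt with rfl | hlt
    · rfl
    · exact absurd hsB (hbefore s ⟨hs.1, hlt⟩)
  · have hcl : closure (Set.Ico 0 t) = Set.Icc 0 t := closure_Ico ht0.ne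
    have := (hγ.mono hsub)
    rw [← hcl] at this
    refine closure_mono (Set.image_subset_iff.2 (show Set.Ico 0 t ⊆ γ ⁻¹' Bᶜ from hbefore))
      (this.image_closure ⟨t, ?_, rfl⟩)
    rw [hcl]
    exact ⟨ht0.le, le_rfl⟩

theorem norm_eq_of_mem_closure_compl {c b : ℂ} {r : ℝ} (hb : b ∈ Metric.closedBall c r)
    (hb' : b ∈ closure (Metric.closedBall c r)ᶜ) : ‖b - c‖ = r := by
  refine le_antisymm (by simpa [dist_eq_norm] using hb) ?_
  have hcl : IsClosed {z : ℂ | r ≤ ‖z - c‖} := isClosed_le continuous_const (by fun_prop)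
  refine closure_minimal ?_ hcl hb'
  intro z hz
  have : r < ‖z - c‖ := by simpa [dist_eq_norm] using hz
  exact this.le

namespace PlaneEmbedding

variable {G : SimpleGraph V}

/-- Arcs are radial inside the balls of radius `r` around the vertices. -/
structure IsRadial (E : PlaneEmbedding G) (r : ℝ) : Prop where
  pos : 0 < r
  disjoint_balls : ∀ u v, u ≠ v →
    Disjoint (Metric.closedBall (E.vtx u) r) (Metric.closedBall (E.vtx v) r)
  disjoint_arc : ∀ u v w, G.Adj u v → w ≠ u → w ≠ v →
    Disjoint (E.arc u v) (Metric.closedBall (E.vtx w) r)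
  arc_inter_ball : ∀ u v, G.Adj u v → ∃ a, ‖a - E.vtx u‖ = r ∧
    E.arc u v ∩ Metric.closedBall (E.vtx u) r = segment ℝ (E.vtx u) a

/-- `A` replaces the arc of `uv` and is radial near `u` and `v`. -/
structure IsStraightening (E : PlaneEmbedding G) (r : ℝ) (u v : V) (A : Set ℂ) : Prop where
  isArc : IsArc A (E.vtx u) (E.vtx v)
  left : ∃ a ∈ E.arc u v, ‖a - E.vtx u‖ = r ∧
    A ∩ Metric.closedBall (E.vtx u) r = segment ℝ (E.vtx u) a
  right : ∃ a ∈ E.arc u v, ‖a - E.vtx v‖ = r ∧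
    A ∩ Metric.closedBall (E.vtx v) r = segment ℝ (E.vtx v) a
  subset : A ⊆ E.arc u v ∪ (Metric.closedBall (E.vtx u) r ∪ Metric.closedBall (E.vtx v) r)

theorem IsStraightening.symm {E : PlaneEmbedding G} {r : ℝ} {u v : V} {A : Set ℂ}
    (h : E.IsStraightening r u v A) : E.IsStraightening r v u A where
  isArc := h.isArc.symm
  left := by rw [E.arc_symm]; exact h.right
  right := by rw [E.arc_symm]; exact h.left
  subset := by rw [E.arc_symm, Set.union_comm (Metric.closedBall (E.vtx v) r)]; exact h.subset

theorem exists_isStraightening (E : PlaneEmbedding G) {r : ℝ} (hr : 0 < r) {u v : V}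
    (h : G.Adj u v)
    (hd : Disjoint (Metric.closedBall (E.vtx u) r) (Metric.closedBall (E.vtx v) r)) :
    ∃ A, E.IsStraightening r u v A := by
  have hu : E.vtx u ∈ Metric.closedBall (E.vtx u) r := Metric.mem_closedBall_self hr.le
  have hv : E.vtx v ∈ Metric.closedBall (E.vtx v) r := Metric.mem_closedBall_self hr.le
  have harc : IsArc (E.arc u v) (E.vtx u) (E.vtx v) := E.arc_curve h
  obtain ⟨A, a, hA, hAsub, ha, hAa, ha'⟩ := harc.symm.exists_first_hit
    Metric.isClosed_closedBall (hd.notMem_of_mem_right hv) hu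
  obtain ⟨M, b, hM, hMsub, hb, hMb, hb'⟩ := hA.symm.exists_first_hit
    Metric.isClosed_closedBall (hd.notMem_of_mem_left ha) hv
  have hna := norm_eq_of_mem_closure_compl ha ha'
  have hnb := norm_eq_of_mem_closure_compl hb hb'
  have hsa : segment ℝ (E.vtx u) a ⊆ Metric.closedBall (E.vtx u) r :=
    (convex_closedBall _ _).segment_subset hu ha
  have hsb : segment ℝ b (E.vtx v) ⊆ Metric.closedBall (E.vtx v) r :=
    (convex_closedBall _ _).segment_subset hb hv
  have hua : E.vtx u ≠ a := by
    rintro rfl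
    simp at hna
    exact hr.ne hna
  have hbv : b ≠ E.vtx v := by
    rintro rfl
    simp at hnb
    exact hr.ne hnb
  have hMa : M ∩ Metric.closedBall (E.vtx u) r ⊆ {a} := fun z hz => hAa ⟨hMsub hz.1, hz.2⟩
  refine ⟨segment ℝ (E.vtx u) a ∪ M ∪ segment ℝ b (E.vtx v), ?_, ?_, ?_, ?_⟩
  · refine ((isArc_segment hua).union hM ?_).union (isArc_segment hbv) ?_
    · rintro z ⟨hz, hz'⟩
      exact hMa ⟨hz', hsa hz⟩
    · rintro z ⟨hz | hz, hz'⟩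
      · exact absurd (hsb hz') (hd.notMem_of_mem_left (hsa hz))
      · exact hMb ⟨hz, hsb hz'⟩
  · refine ⟨a, hAsub hA.right_mem, hna, Set.Subset.antisymm ?_
      fun z hz => ⟨Or.inl (Or.inl hz), hsa hz⟩⟩
    rintro z ⟨(hz | hz) | hz, hzu⟩
    · exact hz
    · rw [hMa ⟨hz, hzu⟩]
      exact right_mem_segment _ _ _
    · exact absurd (hsb hz) (hd.notMem_of_mem_left hzu)
  · rw [segment_symm ℝ b]
    rw [segment_symm ℝ b] at hsb
    refine ⟨b, hAsub (hMsub hM.right_mem), hnb, Set.Subset.antisymm ?_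
      fun z hz => ⟨Or.inr hz, hsb hz⟩⟩
    rintro z ⟨(hz | hz) | hz, hzv⟩
    · exact absurd hzv (hd.notMem_of_mem_left (hsa hz))
    · rw [hMb ⟨hz, hzv⟩]
      exact right_mem_segment _ _ _
    · exact hz
  · rintro z ((hz | hz) | hz)
    · exact Or.inr (Or.inl (hsa hz))
    · exact Or.inl (hAsub (hMsub hz))
    · exact Or.inr (Or.inr (hsb hz))

/-- Two radii of a disc meet only in the center, unless they coincide. -/
theorem _root_.eq_of_mem_segment_of_norm_eq {c a b z : ℂ} {r : ℝ} (ha : ‖a - c‖ = r)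
    (hb : ‖b - c‖ = r) (hza : z ∈ segment ℝ c a) (hzb : z ∈ segment ℝ c b) (hz : z ≠ c) :
    a = b := by
  rw [segment_eq_image'] at hza hzb
  obtain ⟨s, hs, rfl⟩ := hza
  obtain ⟨t, ht, hst⟩ := hzb
  simp only at hst hz
  have hst' : t • (b - c) = s • (a - c) := by simpa using hst
  have hr : r ≠ 0 := by
    rintro rfl
    rw [norm_eq_zero.1 ha] at hz
    simp at hz
  have hn := congrArg norm hst'
  rw [norm_smul, norm_smul, ha, hb, Real.norm_of_nonneg hs.1, Real.norm_of_nonneg ht.1] at hn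
  have hts : t = s := mul_right_cancel₀ hr hn
  subst hts
  have ht0 : t ≠ 0 := by
    rintro rfl
    simp at hz
  have := smul_right_injective ℂ ht0 hst'
  exact (sub_left_injective this).symm

/-- Every planar graph has a plane embedding with radial arcs near the vertices. -/
theorem exists_isRadial [Finite V] (h : PlanarGraph G) :
    ∃ (E : PlaneEmbedding G) (r : ℝ), E.IsRadial r := by
  classical
  obtain ⟨E⟩ := h
  choose ε hε hball using fun x => E.exists_ball_vtx le_rfl x
  obtain ⟨r, hr, hrε⟩ : ∃ r > 0, ∀ x, 2 * r < ε x := by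
    have h1 : ∀ᶠ r in nhdsWithin (0 : ℝ) (Set.Ioi 0), ∀ x, 2 * r < ε x := by
      rw [Filter.eventually_all]
      intro x
      filter_upwards [Ioo_mem_nhdsGT (half_pos (hε x))] with r hr
      linarith [hr.2]
    obtain ⟨r, hr, hr'⟩ := (h1.and self_mem_nhdsWithin).exists
    exact ⟨r, hr', hr⟩
  have hvtx : ∀ x y, x ≠ y → ε x ≤ dist (E.vtx y) (E.vtx x) := by
    intro x y hxy
    by_contra hlt
    obtain ⟨w, hw, hin⟩ := hball x (E.vtx y) (not_le.1 hlt) (fun h => hxy (E.vtx_inj h).symm)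
      (E.vtx_mem_skel _ _)
    exact E.vtx_notMem_inner hw y hin
  have hdb : ∀ u v, u ≠ v →
      Disjoint (Metric.closedBall (E.vtx u) r) (Metric.closedBall (E.vtx v) r) := by
    intro u v huv
    refine Metric.closedBall_disjoint_closedBall ?_
    have := hvtx u v huv
    rw [_root_.dist_comm] at this
    linarith [hrε u]
  have hda : ∀ u v w, G.Adj u v → w ≠ u → w ≠ v →
      Disjoint (E.arc u v) (Metric.closedBall (E.vtx w) r) := by
    intro u v w huv hwu hwv
    rw [Set.disjoint_left]
    intro z hz hzw
    obtain ⟨w', hw', hin⟩ := hball w z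
      (Metric.closedBall_subset_ball (by linarith [hrε w]) hzw) (by
        rintro rfl
        rcases E.arc_vtx huv w hz with h | h
        · exact hwu h
        · exact hwv h) (E.arc_subset_skel huv hz)
    rcases Sym2.eq_iff.1 (E.edge_eq_of_mem_inner hw' huv hin hz) with h | h
    · exact hwu h.1
    · exact hwv h.1
  have hex : ∀ e : Sym2 V, ∃ A, ∀ u v, G.Adj u v → s(u, v) = e → E.IsStraightening r u v A := by
    intro e
    induction e with
    | _ x y =>
    by_cases hxy : G.Adj x y
    · obtain ⟨A, hA⟩ := E.exists_isStraightening hr hxy (hdb x y hxy.ne)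
      refine ⟨A, fun u v _ he => ?_⟩
      rcases Sym2.eq_iff.1 he with ⟨rfl, rfl⟩ | ⟨rfl, rfl⟩
      · exact hA
      · exact hA.symm
    · refine ⟨∅, fun u v huv he => absurd ?_ hxy⟩
      rwa [← SimpleGraph.mem_edgeSet, ← he]
  choose A hA using hex
  have hst : ∀ {u v}, G.Adj u v → E.IsStraightening r u v (A s(u, v)) := fun h => hA _ _ _ h rfl
  have hmiss : ∀ {u v w}, G.Adj u v → w ≠ u → w ≠ v →
      Disjoint (A s(u, v)) (Metric.closedBall (E.vtx w) r) := by
    intro u v w huv hwu hwv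
    rw [Set.disjoint_left]
    intro z hz hzw
    rcases (hst huv).subset hz with h | h | h
    · exact (hda u v w huv hwu hwv).notMem_of_mem_left h hzw
    · exact (hdb u w hwu.symm).notMem_of_mem_left h hzw
    · exact (hdb v w hwv.symm).notMem_of_mem_left h hzw
  have hself : ∀ w, E.vtx w ∈ Metric.closedBall (E.vtx w) r :=
    fun w => Metric.mem_closedBall_self hr.le
  have hleft : ∀ {w v z}, G.Adj w v → z ∈ A s(w, v) → z ∈ Metric.closedBall (E.vtx w) r →
      ∀ {y}, G.Adj w y → z ∈ A s(w, y) → v ≠ y → z = E.vtx w := by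
    intro w v z hwv hz hzw y hwy hz' hne
    by_contra hzne
    obtain ⟨a, ha, har, hseg⟩ := (hst hwv).left
    obtain ⟨b, hb, hbr, hseg'⟩ := (hst hwy).left
    have hab := eq_of_mem_segment_of_norm_eq har hbr (hseg ▸ ⟨hz, hzw⟩) (hseg' ▸ ⟨hz', hzw⟩) hzne
    subst hab
    have hmem := (E.arc_inter hwv hwy (by simp [hne, hwv.ne']) ⟨ha, hb⟩).1
    have haw : a ∈ Metric.closedBall (E.vtx w) r := by simp [dist_eq_norm, har]
    rcases hmem with h | h
    · subst h
      simp at har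
      exact hr.ne har
    · rw [Set.mem_singleton_iff] at h
      subst h
      exact (hdb w v hwv.ne).notMem_of_mem_left haw (hself v)
  have hcommon : ∀ {u v x y z}, G.Adj u v → G.Adj x y → s(u, v) ≠ s(x, y) → z ∈ A s(u, v) →
      z ∈ A s(x, y) → z ∈ Metric.closedBall (E.vtx u) r →
      z = E.vtx u ∧ z ∈ ({E.vtx x, E.vtx y} : Set ℂ) := by
    intro u v x y z huv hxy hne hz hz' hzu
    by_cases hux : u = x
    · subst hux
      have := hleft huv hz hzu hxy hz' (by rintro rfl; exact hne rfl)
      exact ⟨this, Or.inl this⟩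
    · by_cases huy : u = y
      · subst huy
        rw [Sym2.eq_swap] at hz'
        have := hleft huv hz hzu hxy.symm hz' (by rintro rfl; exact hne Sym2.eq_swap)
        exact ⟨this, Or.inr this⟩
      · exact absurd hzu ((hmiss hxy hux huy).notMem_of_mem_left hz')
  let E' : PlaneEmbedding G :=
    { vtx := E.vtx
      arc := fun u v => A s(u, v)
      vtx_inj := E.vtx_inj
      arc_symm := fun u v => by rw [Sym2.eq_swap]
      arc_curve := fun u v h => (hst h).isArc
      arc_inter := by
        rintro u v x y huv hxy hne z ⟨hz, hz'⟩
        by_cases hu : z ∈ Metric.closedBall (E.vtx u) r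
        · have := hcommon huv hxy hne hz hz' hu
          exact ⟨Or.inl this.1, this.2⟩
        by_cases hv : z ∈ Metric.closedBall (E.vtx v) r
        · rw [Sym2.eq_swap] at hne hz
          have := hcommon huv.symm hxy hne hz hz' hv
          exact ⟨Or.inr this.1, this.2⟩
        by_cases hx : z ∈ Metric.closedBall (E.vtx x) r
        · have := hcommon hxy huv hne.symm hz' hz hx
          exact ⟨this.2, Or.inl this.1⟩
        by_cases hy : z ∈ Metric.closedBall (E.vtx y) r
        · rw [Sym2.eq_swap (a := x)] at hne hz'
          have := hcommon hxy.symm huv hne.symm hz' hz hy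
          exact ⟨this.2, Or.inr this.1⟩
        refine E.arc_inter huv hxy hne ⟨?_, ?_⟩
        · exact ((hst huv).subset hz).resolve_right (by simp only [Set.mem_union]; tauto)
        · exact ((hst hxy).subset hz').resolve_right (by simp only [Set.mem_union]; tauto)
      arc_vtx := by
        intro u v huv w hw
        by_contra hcon
        push Not at hcon
        exact (hmiss huv hcon.1 hcon.2).notMem_of_mem_left hw (hself w) }
  refine ⟨E', r, hr, hdb, fun u v w => hmiss, fun u v huv => ?_⟩
  obtain ⟨a, -, h⟩ := (hst huv).left
  exact ⟨a, h⟩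

end PlaneEmbedding

/-! ### Vertices on a common region of a maximal plane graph are adjacent -/

namespace PlaneEmbedding

variable {G : SimpleGraph V} {E : PlaneEmbedding G} {r : ℝ}

theorem IsRadial.notMem_skel (hE : E.IsRadial r) {u : V} {z : ℂ}
    (hz : z ∈ Metric.closedBall (E.vtx u) r) (hzG : z ∉ E.skel G) {t : ℝ} (ht : t ∈ Set.Ioc 0 1) :
    E.vtx u + t • (z - E.vtx u) ∉ E.skel G := by
  intro hmem
  have hu : E.vtx u ∈ Metric.closedBall (E.vtx u) r := Metric.mem_closedBall_self hE.pos.le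
  have hzu : z - E.vtx u ≠ 0 := by
    intro h
    rw [sub_eq_zero.1 h] at hzG
    exact hzG (E.vtx_mem_skel _ _)
  have hball : E.vtx u + t • (z - E.vtx u) ∈ Metric.closedBall (E.vtx u) r := by
    refine (convex_closedBall _ _).segment_subset hu hz ?_
    rw [segment_eq_image']
    exact ⟨t, ⟨ht.1.le, ht.2⟩, rfl⟩
  have key : ∀ v, G.Adj u v → E.vtx u + t • (z - E.vtx u) ∉ E.arc u v := by
    intro v huv hmem
    obtain ⟨a, ha, hseg⟩ := hE.arc_inter_ball u v huv
    have h1 : E.vtx u + t • (z - E.vtx u) ∈ segment ℝ (E.vtx u) a := hseg ▸ ⟨hmem, hball⟩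
    rw [segment_eq_image'] at h1
    obtain ⟨s, hs, hst⟩ := h1
    have hst' : s • (a - E.vtx u) = t • (z - E.vtx u) := by simpa using hst
    have hz' : z - E.vtx u = (s / t) • (a - E.vtx u) := by
      rw [div_eq_inv_mul, mul_smul, hst', smul_smul, inv_mul_cancel₀ ht.1.ne', one_smul]
    have hle : s / t ≤ 1 := by
      have h2 := congrArg norm hz'
      rw [norm_smul, ha, Real.norm_of_nonneg (div_nonneg hs.1 ht.1.le)] at h2
      have h3 : ‖z - E.vtx u‖ ≤ r := by simpa [dist_eq_norm] using hz
      have := hE.pos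
      by_contra hlt
      nlinarith
    have hzseg : z ∈ segment ℝ (E.vtx u) a := by
      rw [segment_eq_image']
      exact ⟨s / t, ⟨div_nonneg hs.1 ht.1.le, hle⟩, by simp only [← hz']; ring⟩
    rw [← hseg] at hzseg
    exact hzG (E.arc_subset_skel huv hzseg.1)
  rcases E.mem_skel.1 hmem with ⟨w, hw⟩ | ⟨a, b, hab, hmem'⟩
  · by_cases hwu : w = u
    · subst hwu
      have : t • (z - E.vtx w) = 0 := by simpa using hw.symm
      rcases smul_eq_zero.1 this with h | h
      · exact ht.1.ne' h
      · exact hzu h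
    · refine (hE.disjoint_balls w u hwu).notMem_of_mem_left
        (Metric.mem_closedBall_self hE.pos.le) ?_
      rw [hw]
      exact hball
  · by_cases hau : u = a
    · subst hau
      exact key b hab hmem'
    by_cases hbu : u = b
    · subst hbu
      rw [E.arc_symm] at hmem'
      exact key a hab.symm hmem'
    exact (hE.disjoint_arc a b u hab hau hbu).notMem_of_mem_left hmem' hball

theorem IsRadial.segment_subset (hE : E.IsRadial r) {u : V} {p z : ℂ}
    (hz : z ∈ Metric.closedBall (E.vtx u) r) (hzR : z ∈ E.region G p) :
    segment ℝ (E.vtx u) z ⊆ insert (E.vtx u) (E.region G p) := by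
  have hzG : z ∉ E.skel G := E.region_subset _ _ hzR
  have hpre : IsPreconnected ((fun t : ℝ => E.vtx u + t • (z - E.vtx u)) '' Set.Ioc 0 1) :=
    isPreconnected_Ioc.image _ (by fun_prop)
  have hsub : (fun t : ℝ => E.vtx u + t • (z - E.vtx u)) '' Set.Ioc 0 1 ⊆ E.region G p := by
    rintro _ ⟨t, ht, rfl⟩
    rw [E.region_eq hzR]
    refine E.mem_region_of_isPreconnected hpre ?_ ⟨1, by simp, by simp⟩ ⟨t, ht, rfl⟩
    rintro _ ⟨t, ht, rfl⟩
    exact hE.notMem_skel hz hzG ht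
  rw [segment_eq_image']
  rintro _ ⟨t, ht, rfl⟩
  rcases ht.1.eq_or_lt with rfl | h
  · simp
  · exact Or.inr (hsub ⟨t, ⟨h, ht.2⟩, rfl⟩)

/-- Follow an arc until it enters a convex set, and then go straight to a given point. -/
theorem _root_.IsArc.exists_extend {A B : Set ℂ} {x q w : ℂ} (hA : IsArc A x q) (hB : IsClosed B)
    (hconv : Convex ℝ B) (hx : x ∉ B) (hq : q ∈ B) (hw : w ∈ B) :
    ∃ A' b, IsArc A' x w ∧ b ∈ A ∩ B ∧ A' ⊆ A ∪ segment ℝ b w := by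
  obtain ⟨M, b, hM, hMA, hb, hMB, -⟩ := hA.exists_first_hit hB hx hq
  by_cases hbw : b = w
  · subst hbw
    exact ⟨M, b, hM, ⟨hMA hM.right_mem, hb⟩, hMA.trans Set.subset_union_left⟩
  · refine ⟨M ∪ segment ℝ b w, b, hM.union (isArc_segment hbw) ?_, ⟨hMA hM.right_mem, hb⟩,
      Set.union_subset_union_left _ hMA⟩
    rintro z ⟨hz, hz'⟩
    exact hMB ⟨hz, hconv.segment_subset hb hw hz'⟩

theorem IsRadial.exists_isArc [Finite V] (hE : E.IsRadial r) {p : ℂ} {x y : V} (hxy : x ≠ y)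
    (hx : E.vtx x ∈ closure (E.region G p)) (hy : E.vtx y ∈ closure (E.region G p)) :
    ∃ A, IsArc A (E.vtx x) (E.vtx y) ∧ A ⊆ E.region G p ∪ {E.vtx x, E.vtx y} := by
  set R := E.region G p with hR
  have hRo : IsOpen R := E.isOpen_region le_rfl p
  have hxR : E.vtx x ∉ R := fun h => E.region_subset _ _ h (E.vtx_mem_skel _ _)
  have hnear : ∀ u, E.vtx u ∈ closure R → ∃ z ∈ R, z ∈ Metric.closedBall (E.vtx u) r := by
    intro u hu
    obtain ⟨z, hz, hzR⟩ := mem_closure_iff.1 hu _ Metric.isOpen_ball (Metric.mem_ball_self hE.pos)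
    exact ⟨z, hzR, Metric.ball_subset_closedBall hz⟩
  let Q : Set ℂ := {q | q ∈ R ∧ ∃ A, IsArc A (E.vtx x) q ∧ A ⊆ insert (E.vtx x) R}
  have hstep : ∀ q ∈ R, ∃ ε > 0, (Q ∩ Metric.closedBall q ε).Nonempty →
      Metric.closedBall q ε ⊆ Q := by
    intro q hq
    obtain ⟨ε, hε, hball⟩ := Metric.nhds_basis_closedBall.mem_iff.1 (hRo.mem_nhds hq)
    refine ⟨ε, hε, ?_⟩
    rintro ⟨q', ⟨-, A, hA, hAR⟩, hq'⟩ w hw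
    obtain ⟨A', b, hA', ⟨-, hbB⟩, hsub⟩ := hA.exists_extend Metric.isClosed_closedBall
      (convex_closedBall q ε) (fun h => hxR (hball h)) hq' hw
    refine ⟨hball hw, A', hA', hsub.trans (Set.union_subset hAR ?_)⟩
    exact (((convex_closedBall q ε).segment_subset hbB hw).trans hball).trans
      (Set.subset_insert _ _)
  have hQ : R ⊆ Q := by
    refine (E.isPreconnected_region G p).subset_of_closure_inter_subset ?_ ?_ ?_
    · rw [Metric.isOpen_iff]
      intro q hq
      obtain ⟨ε, hε, h⟩ := hstep q hq.1
      exact ⟨ε, hε, Metric.ball_subset_closedBall.trans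
        (h ⟨q, hq, Metric.mem_closedBall_self hε.le⟩)⟩
    · obtain ⟨z, hzR, hz⟩ := hnear x hx
      refine ⟨z, hzR, hzR, segment ℝ (E.vtx x) z, isArc_segment ?_, hE.segment_subset hz hzR⟩
      rintro rfl
      exact hxR hzR
    · rintro q ⟨hq, hqR⟩
      obtain ⟨ε, hε, h⟩ := hstep q hqR
      obtain ⟨q', hq', hqQ⟩ := mem_closure_iff.1 hq _ Metric.isOpen_ball (Metric.mem_ball_self hε)
      exact h ⟨q', hqQ, Metric.ball_subset_closedBall hq'⟩ (Metric.mem_closedBall_self hε.le)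
  obtain ⟨z, hzR, hz⟩ := hnear y hy
  obtain ⟨-, A, hA, hAR⟩ := hQ hzR
  have hxB : E.vtx x ∉ Metric.closedBall (E.vtx y) r :=
    (hE.disjoint_balls x y hxy).notMem_of_mem_left (Metric.mem_closedBall_self hE.pos.le)
  obtain ⟨A', b, hA', ⟨hbA, hbB⟩, hsub⟩ := hA.exists_extend Metric.isClosed_closedBall
    (convex_closedBall (E.vtx y) r) hxB hz (Metric.mem_closedBall_self hE.pos.le)
  have hbR : b ∈ R := by
    rcases hAR hbA with rfl | h
    · exact absurd hbB hxB
    · exact h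
  refine ⟨A', hA', fun w hw => ?_⟩
  rcases hsub hw with h | h
  · rcases hAR h with rfl | h
    · simp
    · exact Or.inl h
  · rw [segment_symm] at h
    rcases hE.segment_subset hbB hbR h with rfl | h
    · simp
    · exact Or.inl h

/-- Two vertices on a common region of a plane graph can be joined by a new edge. -/
theorem planarGraph_sup_of_isArc {x y : V} {A : Set ℂ} (hA : IsArc A (E.vtx x) (E.vtx y))
    (hAG : A ⊆ (E.skel G)ᶜ ∪ {E.vtx x, E.vtx y}) :
    PlanarGraph (G ⊔ SimpleGraph.fromEdgeSet {s(x, y)}) := by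
  classical
  have hold : ∀ {u v}, (G ⊔ SimpleGraph.fromEdgeSet {s(x, y)}).Adj u v → s(u, v) ≠ s(x, y) →
      G.Adj u v := by
    intro u v h hne
    simpa [hne] using h
  have hnew : ∀ {u v}, s(u, v) = s(x, y) → IsArc A (E.vtx u) (E.vtx v) ∧
      ({E.vtx u, E.vtx v} : Set ℂ) = {E.vtx x, E.vtx y} := by
    intro u v h
    rcases Sym2.eq_iff.1 h with ⟨rfl, rfl⟩ | ⟨rfl, rfl⟩
    · exact ⟨hA, rfl⟩
    · exact ⟨hA.symm, Set.pair_comm _ _⟩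
  have hcross : ∀ {u v}, G.Adj u v → ∀ z ∈ A, z ∈ E.arc u v →
      z ∈ ({E.vtx x, E.vtx y} : Set ℂ) ∩ {E.vtx u, E.vtx v} := by
    intro u v huv z hz hz'
    have hzxy : z ∈ ({E.vtx x, E.vtx y} : Set ℂ) :=
      (hAG hz).resolve_left fun h => h (E.arc_subset_skel huv hz')
    refine ⟨hzxy, ?_⟩
    rcases hzxy with rfl | h
    · rcases E.arc_vtx huv x hz' with rfl | rfl <;> simp
    · rw [Set.mem_singleton_iff] at h
      subst h
      rcases E.arc_vtx huv y hz' with rfl | rfl <;> simp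
  refine ⟨{ vtx := E.vtx
            arc := fun u v => if s(u, v) = s(x, y) then A else E.arc u v
            vtx_inj := E.vtx_inj
            arc_symm := fun u v => by rw [Sym2.eq_swap, E.arc_symm]
            arc_curve := ?_
            arc_inter := ?_
            arc_vtx := ?_ }⟩
  · intro u v h
    by_cases he : s(u, v) = s(x, y)
    · simp only [he, if_true]
      exact (hnew he).1
    · simp only [he, if_false]
      exact E.arc_curve (hold h he)
  · intro u v a b huv hab hne
    by_cases he : s(u, v) = s(x, y) <;> by_cases he' : s(a, b) = s(x, y)
    · exact absurd (he.trans he'.symm) hne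
    · simp only [he, he', if_true, if_false]
      rw [(hnew he).2]
      exact fun z hz => hcross (hold hab he') z hz.1 hz.2
    · simp only [he, he', if_true, if_false]
      rw [(hnew he').2, Set.inter_comm {E.vtx u, E.vtx v}]
      exact fun z hz => hcross (hold huv he) z hz.2 hz.1
    · simp only [he, he', if_false]
      exact E.arc_inter (hold huv he) (hold hab he') hne
  · intro u v huv w hw
    by_cases he : s(u, v) = s(x, y)
    · simp only [he, if_true] at hw
      have h1 := (hAG hw).resolve_left fun h => h (E.vtx_mem_skel _ _)
      rw [← (hnew he).2] at h1
      exact h1.imp (fun h => E.vtx_inj h) fun h => E.vtx_inj h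
    · simp only [he, if_false] at hw
      exact E.arc_vtx (hold huv he) w hw

theorem IsRadial.adj_of_mem_closure [Finite V] (hE : E.IsRadial r) (hG : MaximalPlanar G) {p : ℂ}
    {x y : V} (hxy : x ≠ y) (hx : E.vtx x ∈ closure (E.region G p))
    (hy : E.vtx y ∈ closure (E.region G p)) : G.Adj x y := by
  by_contra hadj
  obtain ⟨A, hA, hAR⟩ := hE.exists_isArc hxy hx hy
  exact hG.2 x y hxy hadj (planarGraph_sup_of_isArc hA
    (hAR.trans (Set.union_subset_union_left _ (E.region_subset _ _))))

end PlaneEmbedding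

/-! ### The two sides of an edge -/

namespace PlaneEmbedding

variable {G : SimpleGraph V} {E : PlaneEmbedding G} {r : ℝ}

/-- In suitable affine coordinates, the drawing looks like the real axis near some interior point of
any given edge. -/
theorem IsRadial.exists_chart [Finite V] (hE : E.IsRadial r) {u v : V} (h : G.Adj u v) :
    ∃ (c d : ℂ) (ρ : ℝ), d ≠ 0 ∧ 0 < ρ ∧ ∀ z : ℂ, ‖z‖ < ρ →
      (z.im = 0 → c + z * d ∈ E.inner u v) ∧ (z.im ≠ 0 → c + z * d ∉ E.skel G) := by
  obtain ⟨a, ha, hseg⟩ := hE.arc_inter_ball u v h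
  set d := a - E.vtx u with hd
  have had : a = E.vtx u + d := by rw [hd]; ring
  have hd0 : d ≠ 0 := by
    intro h0
    rw [h0, norm_zero] at ha
    exact hE.pos.ne ha
  set c := E.vtx u + (1 / 2 : ℂ) * d with hc
  have hball : ∀ z : ℂ, ‖z‖ < 1 / 2 → c + z * d ∈ Metric.closedBall (E.vtx u) r := by
    intro z hz
    rw [Metric.mem_closedBall, dist_eq_norm]
    have : c + z * d - E.vtx u = (1 / 2 + z) * d := by rw [hc]; ring
    rw [this, norm_mul, ha]
    have hle : ‖1 / 2 + z‖ ≤ 1 := by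
      refine (norm_add_le _ _).trans ?_
      norm_num
      linarith
    nlinarith [hE.pos, norm_nonneg (1 / 2 + z)]
  have hin : ∀ z : ℂ, ‖z‖ < 1 / 2 → (z.im = 0 ↔ c + z * d ∈ E.arc u v) := by
    intro z hz
    have hmem : c + z * d ∈ E.arc u v ↔ c + z * d ∈ segment ℝ (E.vtx u) a := by
      rw [← hseg]
      exact ⟨fun h => ⟨h, hball z hz⟩, fun h => h.1⟩
    rw [hmem, segment_eq_image']
    constructor
    · intro him
      have hre := abs_lt.1 ((Complex.abs_re_le_norm z).trans_lt hz)
      refine ⟨1 / 2 + z.re, ⟨by linarith, by linarith⟩, ?_⟩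
      have hz' : z = (z.re : ℂ) := Complex.ext rfl (by simp [him])
      simp only [Complex.real_smul]
      rw [← hd, hc]
      conv_rhs => rw [hz']
      push_cast
      ring
    · rintro ⟨s, -, hs⟩
      simp only [Complex.real_smul] at hs
      rw [← hd, hc] at hs
      have : (s - 1 / 2 - z) * d = 0 := by linear_combination hs
      have h2 := (mul_eq_zero.1 this).resolve_right hd0
      have h3 : z = ((s - 1 / 2 : ℝ) : ℂ) := by push_cast; linear_combination -h2
      rw [h3, Complex.ofReal_im]
  have hinner : ∀ z : ℂ, ‖z‖ < 1 / 2 → z.im = 0 → c + z * d ∈ E.inner u v := by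
    intro z hz him
    refine ⟨(hin z hz).1 him, ?_⟩
    rintro (h1 | h1)
    · have : (1 / 2 + z) * d = 0 := by rw [hc] at h1; linear_combination h1
      have h2 := (mul_eq_zero.1 this).resolve_right hd0
      have h3 : z = -(1 / 2) := by linear_combination h2
      rw [h3] at hz
      norm_num at hz
    · have h2 := hball z hz
      rw [h1] at h2
      exact Set.disjoint_left.1 (hE.disjoint_balls u v h.ne) h2
        (Metric.mem_closedBall_self hE.pos.le)
  have hcin : c ∈ E.inner u v := by simpa using hinner 0 (by norm_num) (by simp)
  have hle : G.deleteEdges {s(u, v)} ≤ G := deleteEdges_le _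
  have hcK : c ∉ E.skel (G.deleteEdges {s(u, v)}) := by
    intro hmem
    have := E.adj_of_mem_inner hle h hcin hmem
    simp at this
  obtain ⟨ε, hε, hεK⟩ := Metric.isOpen_iff.1 (E.isCompact_skel hle).isClosed.isOpen_compl c hcK
  refine ⟨c, d, min (1 / 2) (ε / ‖d‖), hd0, by positivity, fun z hz => ?_⟩
  have hz1 := hz.trans_le (min_le_left _ _)
  have hz2 := hz.trans_le (min_le_right _ _)
  refine ⟨hinner z hz1, fun him hmem => ?_⟩
  have harc : c + z * d ∉ E.arc u v := fun h' => him ((hin z hz1).2 h')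
  refine hεK (a := c + z * d) ?_ ?_
  · rw [Metric.mem_ball, dist_eq_norm, add_sub_cancel_left, norm_mul]
    exact (lt_div_iff₀ (norm_pos_iff.2 hd0)).1 hz2
  · rw [mem_skel] at hmem ⊢
    refine hmem.imp id fun ⟨x, y, hxy, hz⟩ => ⟨x, y, ?_, hz⟩
    rw [deleteEdges_adj]
    refine ⟨hxy, fun he => harc ?_⟩
    rcases Sym2.eq_iff.1 he with ⟨rfl, rfl⟩ | ⟨rfl, rfl⟩
    · exact hz
    · rwa [E.arc_symm]

/-- A triangle minus an interior point of one of its edges is connected. -/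
theorem isPreconnected_triangle_diff {u v w : V} (huv : G.Adj u v) (huw : G.Adj u w)
    (hvw : G.Adj v w) {c : ℂ} (hc : c ∈ E.inner u v) :
    IsPreconnected ((E.arc u v ∪ (E.arc u w ∪ E.arc v w)) \ {c}) := by
  obtain ⟨γ, hγ, hinj, h0, h1, harc⟩ := E.arc_curve huv
  have hc' := hc
  rw [E.inner_eq_image hinj h0 h1 harc] at hc'
  obtain ⟨t, ht, rfl⟩ := hc'
  have harcp : ∀ {x y}, G.Adj x y → IsPreconnected (E.arc x y) := by
    intro x y hxy
    obtain ⟨δ, hδ, -, -, -, hd⟩ := E.arc_curve hxy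
    rw [hd]
    exact isPreconnected_Icc.image _ hδ
  have hA : IsPreconnected (γ '' Set.Ico 0 t) :=
    isPreconnected_Ico.image _ (hγ.mono fun s hs => ⟨hs.1, (hs.2.trans ht.2).le⟩)
  have hB : IsPreconnected (γ '' Set.Ioc t 1) :=
    isPreconnected_Ioc.image _ (hγ.mono fun s hs => ⟨(ht.1.trans hs.1).le, hs.2⟩)
  have hother : ∀ x, G.Adj x w → (x = u ∨ x = v) → γ t ∉ E.arc x w := by
    intro x hx hxe hmem
    have hne : s(u, v) ≠ s(x, w) := by
      intro he
      have : w ∈ s(u, v) := he ▸ Sym2.mem_mk_right _ _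
      rcases Sym2.mem_iff.1 this with rfl | rfl
      · exact huw.ne rfl
      · exact hvw.ne rfl
    exact hc.2 (E.arc_inter huv hx hne ⟨hc.1, hmem⟩).1
  have heq : (E.arc u v ∪ (E.arc u w ∪ E.arc v w)) \ {γ t} =
      (γ '' Set.Ico 0 t ∪ E.arc u w) ∪ (E.arc v w ∪ γ '' Set.Ioc t 1) := by
    ext z
    constructor
    · rintro ⟨hz | hz | hz, hzt⟩
      · rw [harc] at hz
        obtain ⟨s, hs, rfl⟩ := hz
        rcases lt_trichotomy s t with h | rfl | h
        · exact Or.inl (Or.inl ⟨s, ⟨hs.1, h⟩, rfl⟩)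
        · exact absurd rfl hzt
        · exact Or.inr (Or.inr ⟨s, ⟨h, hs.2⟩, rfl⟩)
      · exact Or.inl (Or.inr hz)
      · exact Or.inr (Or.inl hz)
    · have htI : t ∈ Set.Icc (0 : ℝ) 1 := ⟨ht.1.le, ht.2.le⟩
      rintro ((⟨s, hs, rfl⟩ | hz) | (hz | ⟨s, hs, rfl⟩))
      · have hsI : s ∈ Set.Icc (0 : ℝ) 1 := ⟨hs.1, (hs.2.trans ht.2).le⟩
        exact ⟨Or.inl (harc ▸ ⟨s, hsI, rfl⟩), fun h => hs.2.ne (hinj hsI htI h)⟩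
      · exact ⟨Or.inr (Or.inl hz), fun h => hother u huw (Or.inl rfl) (h ▸ hz)⟩
      · exact ⟨Or.inr (Or.inr hz), fun h => hother v hvw (Or.inr rfl) (h ▸ hz)⟩
      · have hsI : s ∈ Set.Icc (0 : ℝ) 1 := ⟨(ht.1.trans hs.1).le, hs.2⟩
        exact ⟨Or.inl (harc ▸ ⟨s, hsI, rfl⟩), fun h => hs.1.ne' (hinj hsI htI h)⟩
  rw [heq]
  refine IsPreconnected.union (E.vtx w) (Or.inr (E.right_mem_arc huw))
    (Or.inl (E.right_mem_arc hvw)) ?_ ?_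
  · exact hA.union (E.vtx u) ⟨0, ⟨le_rfl, ht.1⟩, h0⟩ (E.left_mem_arc huw) (harcp huw)
  · exact (harcp hvw).union (E.vtx v) (E.left_mem_arc hvw) ⟨1, ⟨ht.2, le_rfl⟩, h1⟩ hB

/-- The Möbius quotient `(w - iσ) / (w + iσ)` avoids the slit unless `w` lies between the poles. -/
theorem _root_.Complex.div_mem_slitPlane_of_ne {σ : ℝ} (hσ : 0 < σ) {w : ℂ}
    (hw : ∀ s : ℝ, |s| ≤ σ → w ≠ s * Complex.I) :
    (w - σ * Complex.I) / (w + σ * Complex.I) ∈ Complex.slitPlane := by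
  by_contra hmem
  have hw0 : w + σ * Complex.I ≠ 0 := by
    intro h
    refine hw (-σ) (by rw [abs_neg, abs_of_pos hσ]) ?_
    push_cast
    linear_combination h
  rw [Complex.mem_slitPlane_iff, not_or, not_lt, not_not] at hmem
  obtain ⟨hre, him⟩ := hmem
  set f := (w - σ * Complex.I) / (w + σ * Complex.I) with hf
  set t : ℝ := -f.re with ht
  have hft : f = -(t : ℂ) := Complex.ext (by simp [ht]) (by simp [him])
  have ht0 : 0 ≤ t := by linarith
  have heq : w - σ * Complex.I = -(t : ℂ) * (w + σ * Complex.I) := by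
    rw [← hft, hf, div_mul_cancel₀ _ hw0]
  have h1t : (1 + t : ℂ) ≠ 0 := by
    norm_cast
    linarith
  refine hw (σ * (1 - t) / (1 + t)) ?_ ?_
  · rw [abs_div, abs_mul, abs_of_pos hσ, abs_of_pos (by linarith : 0 < 1 + t),
      div_le_iff₀ (by linarith)]
    refine mul_le_mul_of_nonneg_left ?_ hσ.le
    rw [abs_le]
    constructor <;> linarith
  · push_cast
    field_simp
    linear_combination heq

/-- A connected set crossing the segment between two points exactly once separates them, in the
sense that the corresponding quotient has no continuous logarithm. -/
theorem _root_.not_hasLogOn_of_crossing {C : Set ℂ} {c d : ℂ} {σ ρ : ℝ} (hd : d ≠ 0) (hσ : 0 < σ)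
    (hρ : 0 < ρ) (hreal : ∀ t : ℝ, |t| < ρ → c + t * d ∈ C)
    (himag : ∀ s : ℝ, |s| ≤ σ → s ≠ 0 → c + s * Complex.I * d ∉ C)
    (hC : IsPreconnected (C \ {c})) :
    ¬ HasLogOn C (fun z => (z - (c + σ * Complex.I * d)) / (z - (c - σ * Complex.I * d))) := by
  rintro ⟨g, hg, hgf⟩
  set f : ℂ → ℂ := fun z => (z - (c + σ * Complex.I * d)) / (z - (c - σ * Complex.I * d)) with hf
  have hfw : ∀ w, f (c + w * d) = (w - σ * Complex.I) / (w + σ * Complex.I) := by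
    intro w
    have h1 : c + w * d - (c + σ * Complex.I * d) = (w - σ * Complex.I) * d := by ring
    have h2 : c + w * d - (c - σ * Complex.I * d) = (w + σ * Complex.I) * d := by ring
    simp only [hf]
    rw [h1, h2, mul_div_mul_right _ _ hd]
  have hslit : ∀ z ∈ C \ {c}, f z ∈ Complex.slitPlane := by
    rintro z ⟨hz, hzc⟩
    have hzw : z = c + (z - c) / d * d := by
      rw [div_mul_cancel₀ _ hd]
      ring
    rw [hzw, hfw]
    refine Complex.div_mem_slitPlane_of_ne hσ fun s hs hw => ?_
    rw [hw] at hzw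
    by_cases hs0 : s = 0
    · rw [hs0] at hzw
      exact hzc (by simpa using hzw)
    · exact himag s hs hs0 (hzw ▸ hz)
  have hfc : ContinuousOn f (C \ {c}) := by
    refine ContinuousOn.div (by fun_prop) (by fun_prop) fun z hz h0 => ?_
    have := hslit z hz
    simp only [hf] at this
    rw [h0, div_zero] at this
    exact Complex.zero_notMem_slitPlane this
  have hLc : ContinuousOn (fun z => Complex.log (f z)) (C \ {c}) := hfc.clog hslit
  have hconst : ∀ {x y}, x ∈ C \ {c} → y ∈ C \ {c} →
      g x - Complex.log (f x) = g y - Complex.log (f y) := by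
    refine fun hx hy => sub_eq_sub_of_exp_eq hC (hg.mono Set.sdiff_subset) hLc ?_ hx hy
    intro x hx
    rw [hgf x hx.1, Complex.exp_log (Complex.slitPlane_ne_zero (hslit x hx))]
  have hmem : ∀ t : ℝ, |t| < ρ → t ≠ 0 → c + t * d ∈ C \ {c} := by
    intro t ht ht0
    refine ⟨hreal t ht, fun h => ?_⟩
    have : (t : ℂ) * d = 0 := by
      rw [Set.mem_singleton_iff] at h
      linear_combination h
    simp [hd, ht0] at this
  set x₀ := c + ((ρ / 2 : ℝ) : ℂ) * d with hx₀
  have hx₀m : x₀ ∈ C \ {c} := hmem _ (by rw [abs_of_pos] <;> linarith) (by positivity)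
  set K := g x₀ - Complex.log (f x₀) with hK
  have hgt : Filter.Tendsto (fun t : ℝ => g (c + t * d)) (nhdsWithin 0 (Set.Ioo (-ρ) ρ))
      (nhds (g c)) := by
    have hc := hg c (by simpa using hreal 0 (by simpa using hρ))
    refine hc.tendsto.comp (tendsto_nhdsWithin_iff.2 ⟨?_, ?_⟩)
    · have : Filter.Tendsto (fun t : ℝ => c + t * d) (nhds 0) (nhds (c + ((0 : ℝ) : ℂ) * d)) :=
        Continuous.tendsto (by fun_prop) 0
      simp only [Complex.ofReal_zero, zero_mul, add_zero] at this
      exact this.mono_left nhdsWithin_le_nhds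
    · filter_upwards [self_mem_nhdsWithin] with t ht
      exact hreal t (abs_lt.2 ht)
  have hF : Filter.Tendsto (fun t : ℝ => f (c + t * d)) (nhds 0) (nhds (-1)) := by
    have hden : ∀ t : ℝ, (t : ℂ) + σ * Complex.I ≠ 0 := by
      intro t h
      have := congrArg Complex.im h
      simp at this
      exact hσ.ne' this
    have : Filter.Tendsto (fun t : ℝ => ((t : ℂ) - σ * Complex.I) / (t + σ * Complex.I)) (nhds 0)
        (nhds ((((0 : ℝ) : ℂ) - σ * Complex.I) / (((0 : ℝ) : ℂ) + σ * Complex.I))) :=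
      Continuous.tendsto (by fun_prop (disch := exact hden _)) 0
    simp only [hfw]
    convert this using 2
    have : (σ : ℂ) * Complex.I ≠ 0 := by simp [hσ.ne']
    simp [neg_div, div_self this]
  have him : ∀ t : ℝ, (f (c + t * d)).im = -(2 * σ * t) / (t ^ 2 + σ ^ 2) := by
    intro t
    rw [hfw, Complex.div_im]
    simp [Complex.normSq_apply]
    field_simp
    ring
  have hpos : Filter.Tendsto (fun t : ℝ => Complex.log (f (c + t * d))) (nhdsWithin 0 (Set.Ioo 0 ρ))
      (nhds (Real.log ‖(-1 : ℂ)‖ - Real.pi * Complex.I)) := by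
    refine (Complex.tendsto_log_nhdsWithin_im_neg_of_re_neg_of_im_zero (z := -1) (by simp)
      (by simp)).comp (tendsto_nhdsWithin_iff.2 ⟨hF.mono_left nhdsWithin_le_nhds, ?_⟩)
    filter_upwards [self_mem_nhdsWithin] with t ht
    rw [him]
    have := ht.1
    exact div_neg_of_neg_of_pos (by nlinarith) (by positivity)
  have hneg : Filter.Tendsto (fun t : ℝ => Complex.log (f (c + t * d)))
      (nhdsWithin 0 (Set.Ioo (-ρ) 0)) (nhds (Complex.log (-1))) := by
    refine (Complex.continuousWithinAt_log_of_re_neg_of_im_zero (z := -1) (by simp)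
      (by simp)).tendsto.comp (tendsto_nhdsWithin_iff.2 ⟨hF.mono_left nhdsWithin_le_nhds, ?_⟩)
    filter_upwards [self_mem_nhdsWithin] with t ht
    rw [him]
    have := ht.2
    exact div_nonneg (by nlinarith) (by positivity)
  have hlim : ∀ {S : Set ℝ} {l : ℂ}, S ⊆ Set.Ioo (-ρ) ρ → (0 : ℝ) ∉ S → (nhdsWithin 0 S).NeBot →
      Filter.Tendsto (fun t : ℝ => Complex.log (f (c + t * d))) (nhdsWithin 0 S) (nhds l) →
      g c - l = K := by
    intro S l hS h0 hne hl
    have h1 := (hgt.mono_left (nhdsWithin_mono _ hS)).sub hl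
    refine tendsto_nhds_unique h1 (tendsto_const_nhds.congr' ?_)
    filter_upwards [self_mem_nhdsWithin] with t ht
    exact hconst hx₀m (hmem t (abs_lt.2 (hS ht)) fun h => h0 (h ▸ ht))
  have h1 := hlim (Set.Ioo_subset_Ioo_left (by linarith)) (by simp) (left_nhdsWithin_Ioo_neBot hρ)
    hpos
  have h2 := hlim (Set.Ioo_subset_Ioo_right hρ.le) (by simp)
    (right_nhdsWithin_Ioo_neBot (neg_lt_zero.2 hρ)) hneg
  rw [← h2, Complex.log_neg_one] at h1
  have h3 : (2 * Real.pi * Complex.I : ℂ) = 0 := by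
    simp at h1
    linear_combination h1
  exact Complex.two_pi_I_ne_zero h3

/-- The points `p` and `q` lie on the two different sides of the edge `uv`. -/
structure IsSides (E : PlaneEmbedding G) (u v : V) (p q : ℂ) : Prop where
  left_notMem : p ∉ E.skel G
  right_notMem : q ∉ E.skel G
  bdry_adj_iff : ∀ {H : SimpleGraph V}, H ≤ G → H.Adj u v → ∀ x,
    (E.bdry H (E.region H x)).Adj u v ↔ p ∈ E.region H x ∨ q ∈ E.region H x
  mem_region : ∀ {H : SimpleGraph V}, H ≤ G → ¬ H.Adj u v → q ∈ E.region H p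
  notMem_region : ∀ {H : SimpleGraph V}, H ≤ G → ∀ w, H.Adj u v → H.Adj u w → H.Adj v w →
    q ∉ E.region H p

theorem IsRadial.exists_isSides [Finite V] (hE : E.IsRadial r) {u v : V} (h : G.Adj u v) :
    ∃ p q, E.IsSides u v p q := by
  obtain ⟨c, d, ρ, hd, hρ, hch⟩ := hE.exists_chart h
  set σ := ρ / 2 with hσ
  have hσ0 : 0 < σ := by positivity
  have hnorm : ∀ s : ℝ, ‖(s : ℂ) * Complex.I‖ = |s| := fun s => by simp
  have hcin : c ∈ E.inner u v := by simpa using (hch 0 (by simpa using hρ)).1 (by simp)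
  have himag : ∀ s : ℝ, |s| ≤ σ → s ≠ 0 → c + s * Complex.I * d ∉ E.skel G := fun s hs hs0 =>
    (hch _ (by rw [hnorm]; linarith)).2 (by simpa using hs0)
  set φ : ℂ → ℂ := fun z => c + z * d with hφ
  have hφc : Continuous φ := by fun_prop
  set U : Set ℂ := φ '' (Metric.ball 0 ρ ∩ {z | 0 < z.im}) with hU
  set L : Set ℂ := φ '' (Metric.ball 0 ρ ∩ {z | z.im < 0}) with hL
  have hUp : IsPreconnected U := ((convex_ball (0 : ℂ) ρ).inter
    (convex_halfSpace_im_gt 0)).isPreconnected.image _ hφc.continuousOn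
  have hLp : IsPreconnected L := ((convex_ball (0 : ℂ) ρ).inter
    (convex_halfSpace_im_lt 0)).isPreconnected.image _ hφc.continuousOn
  have hUG : U ⊆ (E.skel G)ᶜ := by
    rintro _ ⟨z, ⟨hz, him⟩, rfl⟩
    exact (hch z (by simpa using hz)).2 (ne_of_gt him)
  have hLG : L ⊆ (E.skel G)ᶜ := by
    rintro _ ⟨z, ⟨hz, him⟩, rfl⟩
    exact (hch z (by simpa using hz)).2 (ne_of_lt him)
  have hmemU : ∀ s : ℝ, 0 < s → s ≤ σ → c + s * Complex.I * d ∈ U := fun s hs hs' =>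
    ⟨s * Complex.I, ⟨by rw [mem_ball_zero_iff, hnorm, abs_of_pos hs]; linarith, by simpa using hs⟩,
      rfl⟩
  have hmemL : ∀ s : ℝ, 0 < s → s ≤ σ → c - s * Complex.I * d ∈ L := fun s hs hs' =>
    ⟨-(s * Complex.I), ⟨by rw [mem_ball_zero_iff, norm_neg, hnorm, abs_of_pos hs]; linarith,
      by simpa using hs⟩, by simp only [hφ]; ring⟩
  have hpU := hmemU σ hσ0 le_rfl
  have hqL := hmemL σ hσ0 le_rfl
  set p := c + σ * Complex.I * d with hp
  set q := c - σ * Complex.I * d with hq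
  have hcl : ∀ {W : Set ℂ} {e : ℂ}, (∀ s : ℝ, 0 < s → s ≤ σ → c + s * e ∈ W) → c ∈ closure W := by
    intro W e hW
    have ht : Filter.Tendsto (fun s : ℝ => c + s * e) (nhdsWithin 0 (Set.Ioo 0 σ)) (nhds c) := by
      have : Filter.Tendsto (fun s : ℝ => c + s * e) (nhds 0) (nhds (c + ((0 : ℝ) : ℂ) * e)) :=
        Continuous.tendsto (by fun_prop) 0
      simp only [Complex.ofReal_zero, zero_mul, add_zero] at this
      exact this.mono_left nhdsWithin_le_nhds
    have : (nhdsWithin (0 : ℝ) (Set.Ioo 0 σ)).NeBot := left_nhdsWithin_Ioo_neBot hσ0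
    refine mem_closure_of_tendsto ht ?_
    filter_upwards [self_mem_nhdsWithin] with s hs
    exact hW s hs.1 hs.2.le
  have hside : ∀ {H : SimpleGraph V} {W : Set ℂ} {y x : ℂ}, H ≤ G → IsPreconnected W →
      W ⊆ (E.skel G)ᶜ → y ∈ W → y ∈ E.region H x → W ⊆ E.region H x := by
    intro H W y x hH hWp hWG hy hyx z hz
    rw [E.region_eq hyx]
    exact E.mem_region_of_isPreconnected hWp
      (hWG.trans (Set.compl_subset_compl.2 (E.skel_mono hH))) hy hz
  refine ⟨p, q, hUG hpU, hLG hqL, fun {H} hH hHuv x => ⟨fun hb => ?_, ?_⟩, fun {H} hH hHuv => ?_,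
    fun {H} hH w huv huw hvw hqp => ?_⟩
  · have hcR : c ∈ closure (E.region H x) := E.inner_subset_closure_region hH hb hcin
    have hopen : φ '' Metric.ball 0 ρ ∈ nhds c := by
      have heq : φ '' Metric.ball 0 ρ = Metric.ball c (ρ * ‖d‖) := by
        ext z
        constructor
        · rintro ⟨w, hw, rfl⟩
          simp only [hφ, Metric.mem_ball, dist_eq_norm, add_sub_cancel_left, norm_mul]
          exact mul_lt_mul_of_pos_right (by simpa using hw) (norm_pos_iff.2 hd)
        · intro hz
          rw [Metric.mem_ball, dist_eq_norm] at hz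
          refine ⟨(z - c) / d, ?_, by simp only [hφ]; rw [div_mul_cancel₀ _ hd]; ring⟩
          rw [mem_ball_zero_iff, norm_div, div_lt_iff₀ (norm_pos_iff.2 hd)]
          exact hz
      rw [heq]
      exact Metric.ball_mem_nhds _ (mul_pos hρ (norm_pos_iff.2 hd))
    obtain ⟨_, ⟨z, hz, rfl⟩, hzR⟩ := mem_closure_iff_nhds.1 hcR _ hopen
    rcases lt_trichotomy z.im 0 with him | him | him
    · exact Or.inr (hside hH hLp hLG ⟨z, ⟨hz, him⟩, rfl⟩ hzR hqL)
    · exact absurd (E.arc_subset_skel hHuv ((hch z (by simpa using hz)).1 him).1)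
        (E.region_subset _ _ hzR)
    · exact Or.inl (hside hH hUp hUG ⟨z, ⟨hz, him⟩, rfl⟩ hzR hpU)
  · rintro (hpx | hqx)
    · refine ⟨hHuv, c, hcin, ?_⟩
      refine hcl (e := Complex.I * d) fun s hs hs' => hside hH hUp hUG hpU hpx ?_
      rw [← mul_assoc]
      exact hmemU s hs hs'
    · refine ⟨hHuv, c, hcin, ?_⟩
      refine hcl (e := -(Complex.I * d)) fun s hs hs' => hside hH hLp hLG hqL hqx ?_
      have := hmemL s hs hs'
      rwa [sub_eq_add_neg, mul_assoc, ← mul_neg] at this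
  · have hpre : IsPreconnected ((fun s : ℝ => c + s * Complex.I * d) '' Set.Icc (-σ) σ) :=
      isPreconnected_Icc.image _ (by fun_prop)
    refine E.mem_region_of_isPreconnected hpre ?_ ⟨σ, ⟨by linarith, le_rfl⟩, rfl⟩
      ⟨-σ, ⟨le_rfl, by linarith⟩, by simp only [hq]; push_cast; ring⟩
    rintro _ ⟨s, hs, rfl⟩
    by_cases hs0 : s = 0
    · simp only [hs0, Complex.ofReal_zero, zero_mul, add_zero]
      exact fun hmem => hHuv (E.adj_of_mem_inner hH h hcin hmem)
    · exact fun hmem => himag s (abs_le.2 hs) hs0 (E.skel_mono hH hmem)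
  · set C := E.arc u v ∪ (E.arc u w ∪ E.arc v w) with hC
    have hCH : C ⊆ E.skel H := Set.union_subset (E.arc_subset_skel huv)
      (Set.union_subset (E.arc_subset_skel huw) (E.arc_subset_skel hvw))
    have hCc : IsCompact C := (E.isCompact_arc h).union
      ((E.isCompact_arc (hH huw)).union (E.isCompact_arc (hH hvw)))
    refine not_hasLogOn_of_crossing hd hσ0 hρ (fun t ht => Or.inl ?_)
      (fun s hs hs0 hmem => himag s hs hs0 (E.skel_mono hH (hCH hmem)))
      (isPreconnected_triangle_diff h (hH huw) (hH hvw) hcin) ?_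
    · exact ((hch t (by simpa using ht)).1 (by simp)).1
    · exact hasLogOn_of_isPreconnected hCc (E.isPreconnected_region H p)
        ((E.region_subset H p).trans (Set.compl_subset_compl.2 hCH))
        (E.mem_region_self fun hmem => hUG hpU (E.skel_mono hH hmem)) hqp

end PlaneEmbedding

/-! ### Small graphs containing a cycle -/

/-- The complete graph on the vertices in `S`. -/
def cliqueOn (S : Finset V) : SimpleGraph V where
  Adj u v := u ∈ S ∧ v ∈ S ∧ u ≠ v
  symm := ⟨fun _ _ h => ⟨h.2.1, h.1, h.2.2.symm⟩⟩
  loopless := ⟨fun _ h => h.2.2 rfl⟩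

theorem cliqueOn_mono {S T : Finset V} (h : S ⊆ T) : cliqueOn S ≤ cliqueOn T :=
  fun _ _ huv => ⟨h huv.1, h huv.2.1, huv.2.2⟩

theorem cliqueOn_le {G : SimpleGraph V} {S : Finset V} (h : G.IsClique S) : cliqueOn S ≤ G :=
  fun _ _ huv => h huv.1 huv.2.1 huv.2.2

theorem card_edgeFinset_cliqueOn_le [DecidableEq V] (S : Finset V) [Fintype (cliqueOn S).edgeSet] :
    (cliqueOn S).edgeFinset.card ≤ S.card.choose 2 := by
  rw [← Sym2.card_image_offDiag]
  refine Finset.card_le_card fun e he => ?_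
  induction e with
  | _ u v =>
    rw [mem_edgeFinset, mem_edgeSet] at he
    exact Finset.mem_image.2 ⟨(u, v), Finset.mem_offDiag.2 he, rfl⟩

theorem exists_isCycle_of_not_isAcyclic {B : SimpleGraph V} (hB : ¬ B.IsAcyclic) :
    ∃ (a : V) (c : B.Walk a a), c.IsCycle := by
  by_contra hcon
  push Not at hcon
  exact hB fun a c hc => hcon a c hc

/-- A graph containing a cycle and supported on at most three vertices is a triangle. -/
theorem triangle_of_not_isAcyclic {B : SimpleGraph V} (hB : ¬ B.IsAcyclic) {S : Finset V}
    (hS : ∀ u v, B.Adj u v → u ∈ S) (hcard : S.card ≤ 3) :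
    S.card = 3 ∧ ∀ u ∈ S, ∀ v ∈ S, u ≠ v → B.Adj u v := by
  classical
  obtain ⟨a, c, hc⟩ := exists_isCycle_of_not_isAcyclic hB
  have hsub : c.support.tail.toFinset ⊆ S := by
    intro w hw
    rw [List.mem_toFinset] at hw
    have hw' : w ∈ c.support := List.mem_of_mem_tail hw
    have : (c.toSubgraph.neighborSet w).ncard = 2 :=
      hc.ncard_neighborSet_toSubgraph_eq_two hw'
    obtain ⟨x, hx⟩ := Set.nonempty_of_ncard_ne_zero (by rw [this]; norm_num)
    exact hS w x (Subgraph.Adj.adj_sub hx)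
  have hlen : c.support.tail.toFinset.card = c.length := by
    rw [List.toFinset_card_of_nodup hc.support_nodup, List.length_tail, Walk.length_support]
    simp
  have h3 := hc.three_le_length
  have hle := Finset.card_le_card hsub
  have heq : c.support.tail.toFinset = S := Finset.eq_of_subset_of_card_le hsub (by omega)
  refine ⟨by omega, fun u hu v hv huv => ?_⟩
  have hu' : u ∈ c.support := by
    rw [← heq, List.mem_toFinset] at hu
    exact List.mem_of_mem_tail hu
  have h2 := hc.ncard_neighborSet_toSubgraph_eq_two hu'
  have hN : c.toSubgraph.neighborSet u ⊆ ↑(S.erase u) := by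
    intro x hx
    have hadj : B.Adj u x := Subgraph.Adj.adj_sub hx
    exact Finset.mem_coe.2 (Finset.mem_erase.2 ⟨hadj.ne', hS x u hadj.symm⟩)
  have hNeq : c.toSubgraph.neighborSet u = ↑(S.erase u) := by
    refine Set.eq_of_subset_of_ncard_le hN ?_ (Finset.finite_toSet _)
    rw [Set.ncard_coe_finset, Finset.card_erase_of_mem hu, h2]
    omega
  have hvN : v ∈ c.toSubgraph.neighborSet u := by
    rw [hNeq]
    exact Finset.mem_coe.2 (Finset.mem_erase.2 ⟨huv.symm, hv⟩)
  exact Subgraph.Adj.adj_sub hvN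

theorem three_le_card_edgeFinset {B : SimpleGraph V} [Fintype B.edgeSet] (hB : ¬ B.IsAcyclic) :
    3 ≤ B.edgeFinset.card := by
  classical
  obtain ⟨a, c, hc⟩ := exists_isCycle_of_not_isAcyclic hB
  refine hc.three_le_length.trans ?_
  rw [← Walk.length_edges, ← List.toFinset_card_of_nodup hc.isTrail.edges_nodup]
  refine Finset.card_le_card fun e he => ?_
  rw [mem_edgeFinset]
  exact c.edges_subset_edgeSet (List.mem_toFinset.1 he)

theorem four_le_card_edgeFinset {B : SimpleGraph V} [Fintype B.edgeSet] (hB : ¬ B.IsAcyclic)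
    {S : Finset V} (hS : ∀ u ∈ S, ∃ v, B.Adj u v) (hcard : 4 ≤ S.card) :
    4 ≤ B.edgeFinset.card := by
  classical
  obtain ⟨a, c, hc⟩ := exists_isCycle_of_not_isAcyclic hB
  by_contra hlt
  have h3 := hc.three_le_length
  have hsub : c.edges.toFinset ⊆ B.edgeFinset := fun e he => by
    rw [mem_edgeFinset]
    exact c.edges_subset_edgeSet (List.mem_toFinset.1 he)
  have hlen : c.edges.toFinset.card = c.length := by
    rw [List.toFinset_card_of_nodup hc.isTrail.edges_nodup, Walk.length_edges]
  have heq : c.edges.toFinset = B.edgeFinset := Finset.eq_of_subset_of_card_le hsub (by omega)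
  have hlen3 : c.length ≤ 3 := by
    have := Finset.card_le_card hsub
    omega
  have hSs : S ⊆ c.support.tail.toFinset := by
    intro u hu
    obtain ⟨v, hv⟩ := hS u hu
    have : s(u, v) ∈ c.edges.toFinset := heq ▸ mem_edgeFinset.2 hv
    have hus := c.fst_mem_support_of_mem_edges (List.mem_toFinset.1 this)
    rw [List.mem_toFinset]
    rcases c.mem_support_iff.1 hus with rfl | h
    · exact Walk.end_mem_tail_support (by intro hn; rw [← Walk.length_eq_zero_iff] at hn; omega)
    · exact h
  have h1 := Finset.card_le_card hSs
  have h2 := List.toFinset_card_le c.support.tail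
  rw [List.length_tail, Walk.length_support] at h2
  omega

theorem card_image_le_card_image {α β γ : Type*} [DecidableEq β] [DecidableEq γ] {s : Finset α}
    {f : α → β} {g : α → γ} (h : ∀ x ∈ s, ∀ y ∈ s, g x = g y → f x = f y) :
    (s.image f).card ≤ (s.image g).card := by
  refine Finset.card_le_card_of_forall_subsingleton (fun b c => ∃ x ∈ s, f x = b ∧ g x = c) ?_ ?_
  · intro b hb
    obtain ⟨x, hx, rfl⟩ := Finset.mem_image.1 hb
    exact ⟨g x, Finset.mem_image_of_mem _ hx, x, hx, rfl, rfl⟩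
  · rintro c - b ⟨-, x, hx, rfl, hxc⟩ b' ⟨-, y, hy, rfl, hyc⟩
    exact h x hx y hy (hxc.trans hyc.symm)

/-! ### Faces of a plane triangulation -/

namespace PlaneEmbedding

variable {G : SimpleGraph V} {E : PlaneEmbedding G} {r : ℝ}

theorem cliqueOn_not_isAcyclic {T : Finset V} (hT : T.card = 3) : ¬ (cliqueOn T).IsAcyclic := by
  classical
  obtain ⟨a, b, c, hab, hac, hbc, rfl⟩ := Finset.card_eq_three.1 hT
  intro hac'
  have h1 : (cliqueOn {a, b, c}).Adj a b := ⟨by simp, by simp, hab⟩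
  have h2 : (cliqueOn {a, b, c}).Adj b c := ⟨by simp, by simp, hbc⟩
  have h3 : (cliqueOn {a, b, c}).Adj c a := ⟨by simp, by simp, hac.symm⟩
  refine hac' (Walk.cons h1 (Walk.cons h2 (Walk.cons h3 Walk.nil))) ?_
  rw [Walk.isCycle_def]
  simp [Walk.isTrail_def, hab, hac, hbc, hab.symm, hac.symm]

theorem bdry_cliqueOn_adj [Finite V] {T : Finset V} (hT : T.card = 3) (hTG : cliqueOn T ≤ G) {z : ℂ}
    (hz : z ∉ E.skel (cliqueOn T)) {u v : V} (hu : u ∈ T) (hv : v ∈ T) (huv : u ≠ v) :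
    (E.bdry (cliqueOn T) (E.region (cliqueOn T) z)).Adj u v :=
  (triangle_of_not_isAcyclic (E.not_isAcyclic_bdry hTG (cliqueOn_not_isAcyclic hT) hz)
    (fun _ _ h => (E.bdry_le _ _ h).1) hT.le).2 u hu v hv huv

theorem not_isAcyclic_of_le {H K : SimpleGraph V} (h : H ≤ K) (hH : ¬ H.IsAcyclic) :
    ¬ K.IsAcyclic := fun hK => hH (hK.anti h)

theorem exists_adj_of_not_isAcyclic {H : SimpleGraph V} (hH : ¬ H.IsAcyclic) :
    ∃ u v, H.Adj u v := by
  by_contra hcon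
  push Not at hcon
  have : H = ⊥ := by
    ext u v
    simp [hcon]
  exact hH (this ▸ isAcyclic_bot)

/-- An edge lies on the boundary of at most two regions. -/
theorem IsSides.card_le_two {u v : V} {p q : ℂ} (hs : E.IsSides u v p q) {H : SimpleGraph V}
    (hH : H ≤ G) (S : Finset (Set ℂ)) (hS : ∀ R ∈ S, ∃ x, R = E.region H x)
    (hS' : ∀ R ∈ S, (E.bdry H R).Adj u v) : S.card ≤ 2 := by
  classical
  have : S ⊆ {E.region H p, E.region H q} := by
    intro R hR
    obtain ⟨x, rfl⟩ := hS R hR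
    have hb := hS' _ hR
    rw [Finset.mem_insert, Finset.mem_singleton]
    exact ((hs.bdry_adj_iff hH hb.1 x).1 hb).imp E.region_eq E.region_eq
  exact (Finset.card_le_card this).trans Finset.card_le_two

/-- The complete graph on four vertices has at least four regions. -/
theorem IsRadial.exists_four_regions [Finite V] (hE : E.IsRadial r) {S : Finset V}
    (hS : S.card = 4) (hSG : cliqueOn S ≤ G) :
    ∃ 𝓡 : Finset (Set ℂ), 4 ≤ 𝓡.card ∧
      ∀ R ∈ 𝓡, ∃ x, x ∉ E.skel (cliqueOn S) ∧ R = E.region (cliqueOn S) x := by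
  classical
  obtain ⟨a, b, c, d, hab, hac, had, hbc, hbd, hcd, rfl⟩ := Finset.card_eq_four.1 hS
  set H := cliqueOn {a, b, c, d} with hH
  have hadj : ∀ {x y}, x ∈ ({a, b, c, d} : Finset V) → y ∈ ({a, b, c, d} : Finset V) → x ≠ y →
      G.Adj x y := fun hx hy hxy => hSG ⟨hx, hy, hxy⟩
  obtain ⟨p₁, q₁, h₁⟩ := hE.exists_isSides (u := b) (v := c) (hadj (by simp) (by simp) hbc)
  obtain ⟨p₂, q₂, h₂⟩ := hE.exists_isSides (u := b) (v := d) (hadj (by simp) (by simp) hbd)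
  obtain ⟨p₃, q₃, h₃⟩ := hE.exists_isSides (u := c) (v := d) (hadj (by simp) (by simp) hcd)
  have hT₁ : cliqueOn {a, b, c} ≤ H := cliqueOn_mono (by grind)
  have hT₂ : cliqueOn {a, b, d} ≤ H := cliqueOn_mono (by grind)
  have hT₃ : cliqueOn {a, c, d} ≤ H := cliqueOn_mono (by grind)
  set f : ℂ → Bool × Bool × Bool := fun z =>
    (decide (z ∈ E.region (cliqueOn {a, b, c}) p₁), decide (z ∈ E.region (cliqueOn {a, b, d}) p₂),
      decide (z ∈ E.region (cliqueOn {a, c, d}) p₃)) with hf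
  have hself : ∀ {T : Finset V} {p : ℂ}, cliqueOn T ≤ H → p ∉ E.skel G →
      p ∈ E.region (cliqueOn T) p := fun hT hp =>
    E.mem_region_self fun hmem => hp (E.skel_mono (hT.trans hSG) hmem)
  have hsame : ∀ {T : Finset V} {u v : V} {p q x : ℂ}, E.IsSides u v p q → cliqueOn T ≤ H →
      (u ∉ T ∨ v ∉ T) → (p ∈ E.region (cliqueOn T) x ↔ q ∈ E.region (cliqueOn T) x) := by
    intro T u v p q x hs hT huv
    have hpq : q ∈ E.region (cliqueOn T) p := hs.mem_region (hT.trans hSG) (by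
      rintro ⟨hu, hv, -⟩
      exact huv.elim (· hu) (· hv))
    constructor
    · intro hp
      rwa [E.region_eq hp]
    · intro hq
      rw [E.region_eq hq]
      exact E.mem_region_symm hpq
  set P : Finset ℂ := {p₁, q₁, p₂, q₂, p₃, q₃} with hP
  have hPG : ∀ x ∈ P, x ∉ E.skel H := by
    intro x hx hmem
    have hmem' := E.skel_mono hSG hmem
    simp only [hP, Finset.mem_insert, Finset.mem_singleton] at hx
    rcases hx with rfl | rfl | rfl | rfl | rfl | rfl
    exacts [h₁.left_notMem hmem', h₁.right_notMem hmem', h₂.left_notMem hmem',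
      h₂.right_notMem hmem', h₃.left_notMem hmem', h₃.right_notMem hmem']
  refine ⟨P.image (E.region H), ?_, ?_⟩
  · have hle : (P.image f).card ≤ (P.image (E.region H)).card := by
      refine card_image_le_card_image fun x hx y hy hxy => ?_
      have hyx : y ∈ E.region H x := hxy ▸ E.mem_region_self (hPG y hy)
      have key : ∀ {T : Finset V} {p : ℂ}, cliqueOn T ≤ H →
          (x ∈ E.region (cliqueOn T) p ↔ y ∈ E.region (cliqueOn T) p) := by
        intro T p hT
        have hyx' := E.region_anti hT x hyx
        constructor
        · intro h
          rwa [E.region_eq h]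
        · intro h
          rw [E.region_eq h]
          exact E.mem_region_symm hyx'
      simp only [hf, key hT₁, key hT₂, key hT₃]
    refine le_trans ?_ hle
    have e₁ : decide (p₁ ∈ E.region (cliqueOn {a, b, c}) p₁) = true := by
      simpa using hself hT₁ h₁.left_notMem
    have e₂ : decide (p₂ ∈ E.region (cliqueOn {a, b, d}) p₂) = true := by
      simpa using hself hT₂ h₂.left_notMem
    have e₃ : decide (p₃ ∈ E.region (cliqueOn {a, c, d}) p₃) = true := by
      simpa using hself hT₃ h₃.left_notMem
    have n₁ : decide (q₁ ∈ E.region (cliqueOn {a, b, c}) p₁) = false := by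
      simpa using h₁.notMem_region (hT₁.trans hSG) a ⟨by simp, by simp, hbc⟩
        ⟨by simp, by simp, hab.symm⟩ ⟨by simp, by simp, hac.symm⟩
    have n₂ : decide (q₂ ∈ E.region (cliqueOn {a, b, d}) p₂) = false := by
      simpa using h₂.notMem_region (hT₂.trans hSG) a ⟨by simp, by simp, hbd⟩
        ⟨by simp, by simp, hab.symm⟩ ⟨by simp, by simp, had.symm⟩
    have n₃ : decide (q₃ ∈ E.region (cliqueOn {a, c, d}) p₃) = false := by
      simpa using h₃.notMem_region (hT₃.trans hSG) a ⟨by simp, by simp, hcd⟩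
        ⟨by simp, by simp, hac.symm⟩ ⟨by simp, by simp, had.symm⟩
    have s₁₂ := hsame (x := p₂) h₁ hT₂ (Or.inr (by simp [hac.symm, hbc.symm, hcd]))
    have s₁₃ := hsame (x := p₃) h₁ hT₃ (Or.inl (by simp [hab.symm, hbc, hbd]))
    have s₂₁ := hsame (x := p₁) h₂ hT₁ (Or.inr (by simp [had.symm, hbd.symm, hcd.symm]))
    have s₂₃ := hsame (x := p₃) h₂ hT₃ (Or.inl (by simp [hab.symm, hbc, hbd]))
    have s₃₁ := hsame (x := p₁) h₃ hT₁ (Or.inr (by simp [had.symm, hbd.symm, hcd.symm]))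
    have s₃₂ := hsame (x := p₂) h₃ hT₂ (Or.inl (by simp [hac.symm, hbc.symm, hcd]))
    simp only [hP, Finset.image_insert, Finset.image_singleton, hf, e₁, e₂, e₃, n₁, n₂, n₃, s₁₂,
      s₁₃, s₂₁, s₂₃, s₃₁, s₃₂]
    generalize decide (q₁ ∈ E.region (cliqueOn {a, b, d}) p₂) = x₁₂
    generalize decide (q₁ ∈ E.region (cliqueOn {a, c, d}) p₃) = x₁₃
    generalize decide (q₂ ∈ E.region (cliqueOn {a, b, c}) p₁) = x₂₁
    generalize decide (q₂ ∈ E.region (cliqueOn {a, c, d}) p₃) = x₂₃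
    generalize decide (q₃ ∈ E.region (cliqueOn {a, b, c}) p₁) = x₃₁
    generalize decide (q₃ ∈ E.region (cliqueOn {a, b, d}) p₂) = x₃₂
    revert x₁₂ x₁₃ x₂₁ x₂₃ x₃₁ x₃₂
    decide
  · intro R hR
    obtain ⟨x, hx, rfl⟩ := Finset.mem_image.1 hR
    exact ⟨x, hPG x hx, rfl⟩

/-- The four vertices of a complete graph never lie on the boundary of a common region. -/
theorem IsRadial.not_forall_mem_closure_region [Finite V] (hE : E.IsRadial r) {S : Finset V}
    (hS : S.card = 4) (hSG : cliqueOn S ≤ G) {x : ℂ} (hx : x ∉ E.skel (cliqueOn S)) :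
    ¬ ∀ v ∈ S, E.vtx v ∈ closure (E.region (cliqueOn S) x) := by
  classical
  intro hcl
  have := Fintype.ofFinite V
  set H := cliqueOn S with hH
  obtain ⟨𝓡, hcard, h𝓡⟩ := hE.exists_four_regions hS hSG
  set 𝓢 := insert (E.region H x) 𝓡 with h𝓢
  have h𝓢reg : ∀ R ∈ 𝓢, ∃ y, y ∉ E.skel H ∧ R = E.region H y := by
    intro R hR
    rcases Finset.mem_insert.1 hR with rfl | hR
    · exact ⟨x, hx, rfl⟩
    · exact h𝓡 R hR
  have h𝓢card : 4 ≤ 𝓢.card := hcard.trans (Finset.card_le_card (Finset.subset_insert _ _))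
  have hHac : ¬ H.IsAcyclic := by
    obtain ⟨T, hTS, hT⟩ := Finset.exists_subset_card_eq (show 3 ≤ S.card by omega)
    exact not_isAcyclic_of_le (cliqueOn_mono hTS) (cliqueOn_not_isAcyclic hT)
  have hdc := Finset.sum_card_bipartiteAbove_eq_sum_card_bipartiteBelow
    (s := 𝓢) (t := H.edgeFinset) (fun R e => e ∈ (E.bdry H R).edgeSet)
  have habove : ∀ R, (H.edgeFinset.bipartiteAbove (fun R e => e ∈ (E.bdry H R).edgeSet) R) =
      (E.bdry H R).edgeFinset := by
    intro R
    ext e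
    simp only [Finset.bipartiteAbove, Finset.mem_filter, mem_edgeFinset]
    exact ⟨fun h => h.2, fun h => ⟨edgeSet_mono (E.bdry_le H R) h, h⟩⟩
  have hlower : 13 ≤ ∑ R ∈ 𝓢, (E.bdry H R).edgeFinset.card := by
    have hmem : E.region H x ∈ 𝓢 := Finset.mem_insert_self _ _
    rw [← Finset.add_sum_erase _ _ hmem]
    have h4 : 4 ≤ (E.bdry H (E.region H x)).edgeFinset.card := by
      refine four_le_card_edgeFinset (E.not_isAcyclic_bdry hSG hHac hx) (S := S) ?_ hS.ge
      intro u hu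
      obtain ⟨v, hv, hvu⟩ := Finset.exists_mem_ne (show 1 < S.card by omega) u
      exact E.exists_bdry_adj hSG (v := v) ⟨hu, hv, hvu.symm⟩ (hcl u hu)
    have h3 : (𝓢.erase (E.region H x)).card * 3 ≤
        ∑ R ∈ 𝓢.erase (E.region H x), (E.bdry H R).edgeFinset.card := by
      rw [← smul_eq_mul]
      refine Finset.card_nsmul_le_sum _ _ _ fun R hR => ?_
      obtain ⟨y, hy, rfl⟩ := h𝓢reg R (Finset.mem_of_mem_erase hR)
      exact three_le_card_edgeFinset (E.not_isAcyclic_bdry hSG hHac hy)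
    rw [Finset.card_erase_of_mem hmem] at h3
    omega
  have hupper : ∑ e ∈ H.edgeFinset, (𝓢.bipartiteBelow (fun R e => e ∈ (E.bdry H R).edgeSet) e).card
      ≤ H.edgeFinset.card * 2 := by
    rw [← smul_eq_mul]
    refine Finset.sum_le_card_nsmul _ _ _ fun e he => ?_
    induction e with
    | _ u v =>
      rw [mem_edgeFinset, mem_edgeSet] at he
      obtain ⟨p, q, hs⟩ := hE.exists_isSides (hSG he)
      refine hs.card_le_two hSG _ (fun R hR => ?_) (fun R hR => ?_)
      · obtain ⟨y, -, hy⟩ := h𝓢reg R (Finset.mem_filter.1 hR).1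
        exact ⟨y, hy⟩
      · exact (Finset.mem_filter.1 hR).2
  have hedges : H.edgeFinset.card ≤ S.card.choose 2 := card_edgeFinset_cliqueOn_le S
  rw [hS] at hedges
  have h6 : Nat.choose 4 2 = 6 := rfl
  simp only [habove] at hdc
  omega

end PlaneEmbedding

open Classical in
/-- A family of triangles behaving like the faces of a triangulation of the sphere: every edge is in
exactly two of them, every triangle is a sum of them modulo two, and four of them form a tetrahedron
only if there are no further vertices. -/
structure IsFaceSystem [Fintype V] (G : SimpleGraph V) (F : Finset (Finset V)) : Prop where
  isNClique : ∀ t ∈ F, G.IsNClique 3 t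
  card_eq_two : ∀ u v, G.Adj u v → (F.filter fun t => u ∈ t ∧ v ∈ t).card = 2
  exists_odd : ∀ T, G.IsNClique 3 T → ∃ D ⊆ F, ∀ u v, G.Adj u v →
    (Odd (D.filter fun t => u ∈ t ∧ v ∈ t).card ↔ u ∈ T ∧ v ∈ T)
  eq_univ : ∀ S : Finset V, S.card = 4 → (∀ t ⊆ S, t.card = 3 → t ∈ F) → S = Finset.univ

namespace PlaneEmbedding

variable {G : SimpleGraph V} {E : PlaneEmbedding G} {r : ℝ}

theorem exists_notMem_skel [Finite V] (E : PlaneEmbedding G) : ∃ x, x ∉ E.skel G := by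
  by_contra hcon
  push Not at hcon
  have : E.skel G = Set.univ := Set.eq_univ_of_forall hcon
  exact noncompact_univ ℂ (this ▸ E.isCompact_skel le_rfl)

theorem IsRadial.exists_mem_closure_region [Finite V] (hE : E.IsRadial r) (v : V) :
    ∃ x, x ∉ E.skel G ∧ E.vtx v ∈ closure (E.region G x) := by
  by_cases hdeg : ∃ w, G.Adj v w
  · obtain ⟨w, hw⟩ := hdeg
    obtain ⟨p, q, hs⟩ := hE.exists_isSides hw
    exact ⟨p, hs.left_notMem, E.vtx_mem_closure_region le_rfl ((hs.bdry_adj_iff le_rfl hw p).2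
      (Or.inl (E.mem_region_self hs.left_notMem)))⟩
  · push Not at hdeg
    obtain ⟨ε, hε, hball⟩ := E.exists_ball_vtx le_rfl v
    have hsub : Metric.ball (E.vtx v) ε \ {E.vtx v} ⊆ (E.skel G)ᶜ := by
      rintro z ⟨hz, hzv⟩ hmem
      obtain ⟨w, hw, -⟩ := hball z hz hzv hmem
      exact hdeg w hw
    have hcl : E.vtx v ∈ closure (Metric.ball (E.vtx v) ε \ {E.vtx v}) := by
      have h1 : E.vtx v ∈ closure ({E.vtx v}ᶜ : Set ℂ) := by
        rw [closure_compl_singleton]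
        trivial
      rw [mem_closure_iff_nhds] at h1 ⊢
      intro U hU
      obtain ⟨z, hz⟩ := h1 _ (Filter.inter_mem hU (Metric.ball_mem_nhds _ hε))
      exact ⟨z, hz.1.1, hz.1.2, hz.2⟩
    obtain ⟨x, hx⟩ := closure_nonempty_iff.1 ⟨_, hcl⟩
    exact ⟨x, hsub hx, closure_mono (fun z hz => E.mem_region_of_isPreconnected
      (isPreconnected_ball_diff_center _ _) hsub hx hz) hcl⟩

variable [Fintype V]

open Classical in
/-- The vertices on the boundary of the region containing `x`. -/
noncomputable def face (E : PlaneEmbedding G) (x : ℂ) : Finset V :=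
  Finset.univ.filter fun v => E.vtx v ∈ closure (E.region G x)

theorem mem_face {x : ℂ} {v : V} : v ∈ E.face x ↔ E.vtx v ∈ closure (E.region G x) := by
  simp [face]

theorem face_eq {x y : ℂ} (h : y ∈ E.region G x) : E.face x = E.face y := by
  rw [face, face, E.region_eq h]

theorem IsRadial.isClique_face (hE : E.IsRadial r) (hG : MaximalPlanar G) (x : ℂ) :
    G.IsClique (E.face x) := fun _ hu _ hv huv =>
  hE.adj_of_mem_closure hG huv (mem_face.1 hu) (mem_face.1 hv)

theorem IsRadial.card_face_le (hE : E.IsRadial r) (hG : MaximalPlanar G) {x : ℂ}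
    (hx : x ∉ E.skel G) : (E.face x).card ≤ 3 := by
  by_contra hcon
  obtain ⟨S, hS, hcard⟩ := Finset.exists_subset_card_eq (show 4 ≤ (E.face x).card by omega)
  have hSG : cliqueOn S ≤ G := cliqueOn_le ((hE.isClique_face hG x).subset hS)
  refine hE.not_forall_mem_closure_region hcard hSG (x := x)
    (fun hmem => hx (E.skel_mono hSG hmem)) fun v hv => ?_
  exact closure_mono (E.region_anti hSG x) (mem_face.1 (hS hv))

theorem IsRadial.not_isAcyclic (hE : E.IsRadial r) (hG : MaximalPlanar G)
    (hV : 4 ≤ Fintype.card V) : ¬ G.IsAcyclic := by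
  intro hac
  obtain ⟨x, hx⟩ := E.exists_notMem_skel
  have huniv : E.face x = Finset.univ := by
    refine Finset.eq_univ_of_forall fun v => ?_
    obtain ⟨y, hy, hv⟩ := hE.exists_mem_closure_region v
    rw [face_eq (E.mem_region_of_isAcyclic le_rfl hac hx hy)]
    exact mem_face.2 hv
  have := hE.card_face_le hG hx
  rw [huniv, Finset.card_univ] at this
  omega

theorem IsRadial.triangle_face (hE : E.IsRadial r) (hG : MaximalPlanar G)
    (hV : 4 ≤ Fintype.card V) {x : ℂ} (hx : x ∉ E.skel G) :
    (E.face x).card = 3 ∧ E.bdry G (E.region G x) = cliqueOn (E.face x) := by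
  have hsupp : ∀ u v, (E.bdry G (E.region G x)).Adj u v → u ∈ E.face x := fun u v h =>
    mem_face.2 (E.vtx_mem_closure_region le_rfl h)
  obtain ⟨h1, h2⟩ := triangle_of_not_isAcyclic
    (E.not_isAcyclic_bdry le_rfl (hE.not_isAcyclic hG hV) hx) hsupp (hE.card_face_le hG hx)
  refine ⟨h1, ?_⟩
  ext u v
  exact ⟨fun h => ⟨hsupp u v h, hsupp v u h.symm, h.ne⟩, fun h => h2 u h.1 v h.2.1 h.2.2⟩

theorem IsRadial.region_eq_of_face_subset (hE : E.IsRadial r) (hG : MaximalPlanar G)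
    (hV : 4 ≤ Fintype.card V) {x : ℂ} (hx : x ∉ E.skel G) {S : Finset V} (hS : E.face x ⊆ S)
    (hSG : cliqueOn S ≤ G) : E.region (cliqueOn S) x = E.region G x :=
  E.region_eq_of_bdry_le le_rfl hSG hx
    ((hE.triangle_face hG hV hx).2.trans_le (cliqueOn_mono hS))

/-- Distinct regions have distinct faces. -/
theorem IsRadial.mem_region_of_face_eq (hE : E.IsRadial r) (hG : MaximalPlanar G)
    (hV : 4 ≤ Fintype.card V) {x y : ℂ} (hx : x ∉ E.skel G) (hy : y ∉ E.skel G)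
    (hxy : E.face x = E.face y) : y ∈ E.region G x := by
  by_contra hnot
  have hT3 := (hE.triangle_face hG hV hx).1
  have hTG : cliqueOn (E.face x) ≤ G := cliqueOn_le (hE.isClique_face hG x)
  have hRx := hE.region_eq_of_face_subset hG hV hx subset_rfl hTG
  have hRy := hE.region_eq_of_face_subset hG hV hy hxy.ge hTG
  obtain ⟨u, hu, v, hv, huv⟩ := Finset.one_lt_card.1 (show 1 < (E.face x).card by omega)
  have hadj : (cliqueOn (E.face x)).Adj u v := ⟨hu, hv, huv⟩
  obtain ⟨p, q, hs⟩ := hE.exists_isSides (hTG hadj)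
  have hmeet : ∀ z, z ∉ E.skel G → p ∈ E.region (cliqueOn (E.face x)) z ∨
      q ∈ E.region (cliqueOn (E.face x)) z := fun z hz =>
    (hs.bdry_adj_iff hTG hadj z).1
      (bdry_cliqueOn_adj hT3 hTG (fun hmem => hz (E.skel_mono hTG hmem)) hu hv huv)
  have hcover : ∀ z, z ∉ E.skel G → z ∈ E.region G x ∨ z ∈ E.region G y := by
    have hjoin : ∀ {z z' w : ℂ}, w ∈ E.region (cliqueOn (E.face x)) z →
        w ∈ E.region (cliqueOn (E.face x)) z' → z' ∈ E.region (cliqueOn (E.face x)) z :=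
      fun hz hz' => (E.region_eq hz) ▸ E.mem_region_symm hz'
    intro z hz
    rw [← hRx] at hnot
    rw [← hRx, ← hRy]
    rcases hmeet x hx with h1 | h1 <;> rcases hmeet y hy with h2 | h2 <;>
      rcases hmeet z hz with h3 | h3
    all_goals first
      | exact absurd (hjoin h1 h2) hnot
      | exact Or.inl (hjoin h1 h3)
      | exact Or.inr (hjoin h2 h3)
  have huniv : E.face x = Finset.univ := by
    refine Finset.eq_univ_of_forall fun w => ?_
    obtain ⟨z, hz, hw⟩ := hE.exists_mem_closure_region w
    rcases hcover z hz with h | h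
    · rw [face_eq h]
      exact mem_face.2 hw
    · rw [hxy, face_eq h]
      exact mem_face.2 hw
  rw [huniv, Finset.card_univ] at hT3
  omega

theorem IsRadial.mem_face_iff (hE : E.IsRadial r) (hG : MaximalPlanar G)
    (hV : 4 ≤ Fintype.card V) {u v : V} {p q x : ℂ} (hs : E.IsSides u v p q) (h : G.Adj u v)
    (hx : x ∉ E.skel G) :
    (u ∈ E.face x ∧ v ∈ E.face x) ↔ p ∈ E.region G x ∨ q ∈ E.region G x := by
  rw [← hs.bdry_adj_iff le_rfl h, (hE.triangle_face hG hV hx).2]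
  exact ⟨fun h' => ⟨h'.1, h'.2, h.ne⟩, fun h' => ⟨h'.1, h'.2.1⟩⟩

theorem IsRadial.face_ne_face (hE : E.IsRadial r) (hG : MaximalPlanar G)
    (hV : 4 ≤ Fintype.card V) {u v : V} {p q : ℂ} (hs : E.IsSides u v p q) (h : G.Adj u v) :
    E.face p ≠ E.face q := by
  classical
  intro heq
  have hmem := hE.mem_region_of_face_eq hG hV hs.left_notMem hs.right_notMem heq
  obtain ⟨hu, hv⟩ := (hE.mem_face_iff hG hV hs h hs.left_notMem).2
    (Or.inl (E.mem_region_self hs.left_notMem))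
  have h3 := (hE.triangle_face hG hV hs.left_notMem).1
  obtain ⟨w, hw, hwuv⟩ := Finset.exists_mem_notMem_of_card_lt_card
    (s := {u, v}) (t := E.face p) (by rw [h3]; exact Finset.card_le_two.trans_lt (by norm_num))
  simp only [Finset.mem_insert, Finset.mem_singleton, not_or] at hwuv
  have hc := hE.isClique_face hG p
  exact hs.notMem_region le_rfl w h (hc hu hw (Ne.symm hwuv.1)) (hc hv hw (Ne.symm hwuv.2)) hmem

/-- The faces of a drawing of a maximal planar graph form a face system. -/
theorem IsRadial.exists_isFaceSystem (hE : E.IsRadial r) (hG : MaximalPlanar G)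
    (hV : 4 ≤ Fintype.card V) : ∃ F, IsFaceSystem G F := by
  classical
  set F : Finset (Finset V) := Finset.univ.filter fun t => ∃ x, x ∉ E.skel G ∧ t = E.face x with hF
  have hmemF : ∀ {t}, t ∈ F ↔ ∃ x, x ∉ E.skel G ∧ t = E.face x := by simp [hF]
  have hfilter : ∀ {u v p q}, E.IsSides u v p q → G.Adj u v → ∀ {D : Finset (Finset V)}, D ⊆ F →
      (D.filter fun t => u ∈ t ∧ v ∈ t) =
        ({E.face p, E.face q} : Finset (Finset V)).filter (· ∈ D) := by
    intro u v p q hs h D hD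
    ext t
    simp only [Finset.mem_filter, Finset.mem_insert, Finset.mem_singleton]
    constructor
    · rintro ⟨ht, huv⟩
      obtain ⟨x, hx, rfl⟩ := hmemF.1 (hD ht)
      exact ⟨((hE.mem_face_iff hG hV hs h hx).1 huv).imp face_eq face_eq, ht⟩
    · rintro ⟨rfl | rfl, ht⟩
      · exact ⟨ht, (hE.mem_face_iff hG hV hs h hs.left_notMem).2
          (Or.inl (E.mem_region_self hs.left_notMem))⟩
      · exact ⟨ht, (hE.mem_face_iff hG hV hs h hs.right_notMem).2
          (Or.inr (E.mem_region_self hs.right_notMem))⟩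
  refine ⟨F, ⟨?_, ?_, ?_, ?_⟩⟩
  · intro t ht
    obtain ⟨x, hx, rfl⟩ := hmemF.1 ht
    exact ⟨hE.isClique_face hG x, (hE.triangle_face hG hV hx).1⟩
  · intro u v h
    obtain ⟨p, q, hs⟩ := hE.exists_isSides h
    rw [hfilter hs h subset_rfl, Finset.filter_true_of_mem,
      Finset.card_pair (hE.face_ne_face hG hV hs h)]
    intro t ht
    rw [Finset.mem_insert, Finset.mem_singleton] at ht
    rcases ht with rfl | rfl
    exacts [hmemF.2 ⟨p, hs.left_notMem, rfl⟩, hmemF.2 ⟨q, hs.right_notMem, rfl⟩]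
  · intro T hT
    have hTG : cliqueOn T ≤ G := cliqueOn_le hT.isClique
    obtain ⟨x₀, hx₀⟩ := E.exists_notMem_skel
    have hx₀T : x₀ ∉ E.skel (cliqueOn T) := fun hmem => hx₀ (E.skel_mono hTG hmem)
    set D := F.filter fun t => ∃ x, x ∉ E.skel G ∧ t = E.face x ∧ x ∈ E.region (cliqueOn T) x₀
      with hD
    have hDmem : ∀ {p}, p ∉ E.skel G → (E.face p ∈ D ↔ p ∈ E.region (cliqueOn T) x₀) := by
      intro p hp
      rw [hD, Finset.mem_filter]
      constructor
      · rintro ⟨-, x, hx, hpx, hxR⟩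
        rw [E.region_eq hxR]
        exact E.region_anti hTG x (hE.mem_region_of_face_eq hG hV hx hp hpx.symm)
      · exact fun h => ⟨hmemF.2 ⟨p, hp, rfl⟩, p, hp, rfl, h⟩
    have hDF : D ⊆ F := Finset.filter_subset _ _
    refine ⟨D, hDF, fun u v h => ?_⟩
    obtain ⟨p, q, hs⟩ := hE.exists_isSides h
    rw [hfilter hs h hDF, Finset.filter_insert, Finset.filter_singleton]
    simp only [hDmem hs.left_notMem, hDmem hs.right_notMem]
    by_cases huv : u ∈ T ∧ v ∈ T
    · have hadj : (cliqueOn T).Adj u v := ⟨huv.1, huv.2, h.ne⟩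
      have hone := (hs.bdry_adj_iff hTG hadj x₀).1
        (bdry_cliqueOn_adj hT.card_eq hTG hx₀T huv.1 huv.2 h.ne)
      obtain ⟨w, hw, hwuv⟩ := Finset.exists_mem_notMem_of_card_lt_card
        (s := {u, v}) (t := T)
        (by rw [hT.card_eq]; exact Finset.card_le_two.trans_lt (by norm_num))
      simp only [Finset.mem_insert, Finset.mem_singleton, not_or] at hwuv
      have hnot : ¬ (p ∈ E.region (cliqueOn T) x₀ ∧ q ∈ E.region (cliqueOn T) x₀) := by
        rintro ⟨hp, hq⟩
        rw [E.region_eq hp] at hq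
        exact hs.notMem_region hTG w hadj ⟨huv.1, hw, Ne.symm hwuv.1⟩
          ⟨huv.2, hw, Ne.symm hwuv.2⟩ hq
      by_cases hp : p ∈ E.region (cliqueOn T) x₀ <;> by_cases hq : q ∈ E.region (cliqueOn T) x₀ <;>
        simp_all
    · have hpq : q ∈ E.region (cliqueOn T) p := hs.mem_region hTG fun h' => huv ⟨h'.1, h'.2.1⟩
      have hiff : p ∈ E.region (cliqueOn T) x₀ ↔ q ∈ E.region (cliqueOn T) x₀ := by
        constructor
        · intro hp
          rwa [E.region_eq hp]
        · intro hq
          rw [E.region_eq hq]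
          exact E.mem_region_symm hpq
      have hne := hE.face_ne_face hG hV hs h
      by_cases hq : q ∈ E.region (cliqueOn T) x₀
      · simp only [hiff, hq, if_true, huv, iff_false]
        rw [Finset.card_pair hne]
        decide
      · simp [hiff, hq, huv]
  · intro S hS hall
    have hSG : cliqueOn S ≤ G := by
      rintro u v ⟨hu, hv, huv⟩
      obtain ⟨t, hut, htS, ht⟩ := Finset.exists_subsuperset_card_eq (s := {u, v}) (t := S) (n := 3)
        (by simp [Finset.insert_subset_iff, hu, hv]) (Finset.card_le_two.trans (by norm_num))
        (by omega)
      obtain ⟨x, hx, rfl⟩ := hmemF.1 (hall t htS ht)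
      exact hE.isClique_face hG x (hut (by simp)) (hut (by simp)) huv
    refine Finset.eq_univ_of_forall fun w => ?_
    obtain ⟨z, hz, hw⟩ := hE.exists_mem_closure_region w
    have hac : ¬ (cliqueOn S).IsAcyclic := by
      obtain ⟨T, hTS, hT⟩ := Finset.exists_subset_card_eq (show 3 ≤ S.card by omega)
      exact not_isAcyclic_of_le (cliqueOn_mono hTS) (cliqueOn_not_isAcyclic hT)
    obtain ⟨u, v, huv⟩ := exists_adj_of_not_isAcyclic
      (E.not_isAcyclic_bdry hSG hac fun hmem => hz (E.skel_mono hSG hmem))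
    obtain ⟨p, q, hs⟩ := hE.exists_isSides (hSG huv.1)
    have hpq := (hs.bdry_adj_iff hSG huv.1 z).1 huv
    have hboth : E.face p ⊆ S ∧ E.face q ⊆ S := by
      have hsub : (S.powersetCard 3).filter (fun t => u ∈ t ∧ v ∈ t) ⊆ {E.face p, E.face q} := by
        intro t ht
        rw [Finset.mem_filter, Finset.mem_powersetCard] at ht
        have := hfilter hs (hSG huv.1) subset_rfl ▸
          Finset.mem_filter.2 ⟨hall t ht.1.1 ht.1.2, ht.2⟩
        exact (Finset.mem_filter.1 this).1
      have hcard : 2 ≤ ((S.powersetCard 3).filter (fun t => u ∈ t ∧ v ∈ t)).card := by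
        obtain ⟨a, b, hab, hSab⟩ := Finset.card_eq_two.1
          (show ((S.erase u).erase v).card = 2 by
            rw [Finset.card_erase_of_mem (Finset.mem_erase.2 ⟨huv.1.2.2.symm, huv.1.2.1⟩),
              Finset.card_erase_of_mem huv.1.1, hS])
        have hmem : ∀ x ∈ ({a, b} : Finset V), x ≠ v ∧ x ≠ u ∧ x ∈ S := by
          intro x hx
          rw [← hSab] at hx
          simpa using hx
        have ha := hmem a (by simp)
        have hb := hmem b (by simp)
        have huS := huv.1.1
        have hvS := huv.1.2.1
        have hne := huv.1.2.2
        have hsub2 : ({{u, v, a}, {u, v, b}} : Finset (Finset V)) ⊆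
            (S.powersetCard 3).filter (fun t => u ∈ t ∧ v ∈ t) := by
          intro t ht
          rw [Finset.mem_insert, Finset.mem_singleton] at ht
          rw [Finset.mem_filter, Finset.mem_powersetCard]
          rcases ht with rfl | rfl
          · refine ⟨⟨by grind, ?_⟩, by simp, by simp⟩
            exact Finset.card_eq_three.2 ⟨u, v, a, hne, ha.2.1.symm, ha.1.symm, rfl⟩
          · refine ⟨⟨by grind, ?_⟩, by simp, by simp⟩
            exact Finset.card_eq_three.2 ⟨u, v, b, hne, hb.2.1.symm, hb.1.symm, rfl⟩
        refine le_trans ?_ (Finset.card_le_card hsub2)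
        rw [Finset.card_pair]
        intro heq
        have : a ∈ ({u, v, b} : Finset V) := heq ▸ by simp
        simp [ha.1, ha.2.1, hab] at this
      have heq := Finset.eq_of_subset_of_card_le hsub (Finset.card_le_two.trans hcard)
      have hin : ∀ t ∈ ({E.face p, E.face q} : Finset (Finset V)), t ⊆ S := by
        intro t ht
        rw [← heq, Finset.mem_filter, Finset.mem_powersetCard] at ht
        exact ht.1.1
      exact ⟨hin _ (by simp), hin _ (by simp)⟩
    have hfin : ∀ {y : ℂ}, y ∉ E.skel G → E.face y ⊆ S → y ∈ E.region (cliqueOn S) z → w ∈ S := by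
      intro y hy hyS hyz
      have hzy := E.mem_region_symm hyz
      rw [hE.region_eq_of_face_subset hG hV hy hyS hSG] at hzy
      exact hyS (face_eq hzy ▸ mem_face.2 hw)
    exact hpq.elim (hfin hs.left_notMem hboth.1) (hfin hs.right_notMem hboth.2)

end PlaneEmbedding

/-! ### Independent sets in subcubic graphs -/

section IndependentSet

variable {α : Type*}

open Classical in
/-- The induced subgraph of `D` on `S` is subcubic and has no clique of order four. -/
structure IsSubcubicOn (D : SimpleGraph α) (S : Finset α) : Prop where
  degree_le : ∀ x ∈ S, (S.filter (D.Adj x)).card ≤ 3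
  not_isClique : ∀ K ⊆ S, K.card = 4 → ¬ D.IsClique K

/-- No two vertices in `I` are adjacent. -/
def IndepOn (D : SimpleGraph α) (I : Finset α) : Prop := ∀ x ∈ I, ∀ y ∈ I, ¬ D.Adj x y

/-- `D` has an independent set inside `S` containing at least a third of `S`. -/
def HasThirdIndep (D : SimpleGraph α) (S : Finset α) : Prop :=
  ∃ I ⊆ S, IndepOn D I ∧ S.card ≤ 3 * I.card

variable {D : SimpleGraph α} {S : Finset α}

theorem IsSubcubicOn.subset (h : IsSubcubicOn D S) {T : Finset α} (hT : T ⊆ S) :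
    IsSubcubicOn D T := by
  classical
  exact ⟨fun x hx => (Finset.card_le_card (Finset.filter_subset_filter _ hT)).trans
    (h.degree_le x (hT hx)), fun K hK => h.not_isClique K (hK.trans hT)⟩

theorem HasThirdIndep.extend [DecidableEq α] {T J : Finset α} (h : HasThirdIndep D (S \ T))
    (hT : J ⊆ T) (hTS : T ⊆ S) (hJ : IndepOn D J) (hJT : ∀ x ∈ J, ∀ y ∈ S, D.Adj x y → y ∈ T)
    (hcard : T.card ≤ 3 * J.card) : HasThirdIndep D S := by
  obtain ⟨I, hI, hind, hIcard⟩ := h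
  have hIS : ∀ x ∈ I, x ∈ S ∧ x ∉ T := fun x hx => Finset.mem_sdiff.1 (hI hx)
  have hdisj : Disjoint I J := Finset.disjoint_left.2 fun x hx hxJ => (hIS x hx).2 (hT hxJ)
  refine ⟨I ∪ J, Finset.union_subset (fun x hx => (hIS x hx).1) (hT.trans hTS), ?_, ?_⟩
  · intro x hx y hy hxy
    rcases Finset.mem_union.1 hx with hx | hx <;> rcases Finset.mem_union.1 hy with hy | hy
    · exact hind x hx y hy hxy
    · exact (hIS x hx).2 (hJT y hy x (hIS x hx).1 hxy.symm)
    · exact (hIS y hy).2 (hJT x hx y (hIS y hy).1 hxy)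
    · exact hJ x hx y hy hxy
  · rw [Finset.card_union_of_disjoint hdisj]
    rw [Finset.card_sdiff_of_subset hTS] at hIcard
    omega

open Classical in
theorem hasThirdIndep_of_triangleFree (hdeg : ∀ x ∈ S, (S.filter (D.Adj x)).card ≤ 3)
    (hfree : ∀ a ∈ S, ∀ b ∈ S, ∀ c ∈ S, D.Adj a b → D.Adj a c → ¬ D.Adj b c) :
    HasThirdIndep D S := by
  set 𝓘 := S.powerset.filter (IndepOn D) with h𝓘
  have hne : 𝓘.Nonempty := ⟨∅, Finset.mem_filter.2 ⟨by simp, by simp [IndepOn]⟩⟩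
  obtain ⟨I, hI, hmax⟩ := Finset.exists_max_image 𝓘 Finset.card hne
  obtain ⟨hIS, hind⟩ := Finset.mem_filter.1 hI
  rw [Finset.mem_powerset] at hIS
  have hmax' : ∀ J ⊆ S, IndepOn D J → J.card ≤ I.card := fun J hJ hJi =>
    hmax J (Finset.mem_filter.2 ⟨Finset.mem_powerset.2 hJ, hJi⟩)
  refine ⟨I, hIS, hind, ?_⟩
  set O := S \ I with hO
  set P := O.filter fun u => (I.filter (D.Adj u)).card = 1 with hP
  have hdom : ∀ u ∈ O, 1 ≤ (I.filter (D.Adj u)).card := by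
    intro u hu
    rw [hO, Finset.mem_sdiff] at hu
    by_contra hcon
    have hempty : I.filter (D.Adj u) = ∅ := Finset.card_eq_zero.1 (by omega)
    have hno : ∀ x ∈ I, ¬ D.Adj u x := fun x hx hux => by
      have : x ∈ I.filter (D.Adj u) := Finset.mem_filter.2 ⟨hx, hux⟩
      rw [hempty] at this
      simp at this
    have := hmax' (insert u I) (Finset.insert_subset hu.1 hIS) (by
      intro x hx y hy hxy
      rcases Finset.mem_insert.1 hx with rfl | hx' <;> rcases Finset.mem_insert.1 hy with rfl | hy'
      · exact hxy.ne rfl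
      · exact hno y hy' hxy
      · exact hno x hx' hxy.symm
      · exact hind x hx' y hy' hxy)
    rw [Finset.card_insert_of_notMem hu.2] at this
    omega
  have hPI : P.card ≤ I.card := by
    refine Finset.card_le_card_of_forall_subsingleton (fun u v => D.Adj u v) ?_ ?_
    · intro u hu
      obtain ⟨v, hv⟩ := Finset.card_eq_one.1 (Finset.mem_filter.1 hu).2
      have : v ∈ I.filter (D.Adj u) := hv ▸ Finset.mem_singleton_self v
      exact ⟨v, (Finset.mem_filter.1 this).1, (Finset.mem_filter.1 this).2⟩
    · rintro v hv u ⟨hu, huv⟩ u' ⟨hu', hu'v⟩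
      by_contra hne
      have hpriv : ∀ w ∈ P, D.Adj w v → w ∈ S ∧ w ∉ I ∧ ∀ x ∈ I, D.Adj w x → x = v := by
        intro w hw hwv
        obtain ⟨hwO, hw1⟩ := Finset.mem_filter.1 hw
        obtain ⟨x, hx⟩ := Finset.card_eq_one.1 hw1
        have hall : ∀ y ∈ I, D.Adj w y → y = x := fun y hy hwy => by
          have : y ∈ I.filter (D.Adj w) := Finset.mem_filter.2 ⟨hy, hwy⟩
          rw [hx] at this
          simpa using this
        refine ⟨(Finset.mem_sdiff.1 hwO).1, (Finset.mem_sdiff.1 hwO).2, fun y hy hwy => ?_⟩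
        rw [hall y hy hwy, hall v hv hwv]
      obtain ⟨huS, huI, hun⟩ := hpriv u hu huv
      obtain ⟨huS', huI', hun'⟩ := hpriv u' hu' hu'v
      have hnadj : ¬ D.Adj u u' := hfree v (hIS hv) u huS u' huS' huv.symm hu'v.symm
      have := hmax' (insert u (insert u' (I.erase v))) (by
        refine Finset.insert_subset huS (Finset.insert_subset huS' ?_)
        exact (Finset.erase_subset _ _).trans hIS) (by
        have hsep : ∀ x ∈ I.erase v, ¬ D.Adj u x ∧ ¬ D.Adj u' x := by
          intro x hx
          obtain ⟨hxv, hxI⟩ := Finset.mem_erase.1 hx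
          exact ⟨fun h => hxv (hun x hxI h), fun h => hxv (hun' x hxI h)⟩
        intro x hx y hy hxy
        simp only [Finset.mem_insert] at hx hy
        rcases hx with rfl | rfl | hx <;> rcases hy with rfl | rfl | hy
        · exact hxy.ne rfl
        · exact hnadj hxy
        · exact (hsep y hy).1 hxy
        · exact hnadj hxy.symm
        · exact hxy.ne rfl
        · exact (hsep y hy).2 hxy
        · exact (hsep x hx).1 hxy.symm
        · exact (hsep x hx).2 hxy.symm
        · exact hind x (Finset.mem_of_mem_erase hx) y (Finset.mem_of_mem_erase hy) hxy)
      rw [Finset.card_insert_of_notMem, Finset.card_insert_of_notMem,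
        Finset.card_erase_of_mem hv] at this
      · have := Finset.card_pos.2 ⟨v, hv⟩
        omega
      · exact fun h => huI' (Finset.mem_of_mem_erase h)
      · rw [Finset.mem_insert, not_or]
        exact ⟨hne, fun h => huI (Finset.mem_of_mem_erase h)⟩
  have hdc : ∑ u ∈ O, (I.filter (D.Adj u)).card ≤ I.card * 3 := by
    have h1 := Finset.sum_card_bipartiteAbove_eq_sum_card_bipartiteBelow
      (s := O) (t := I) (fun u v => D.Adj u v)
    simp only [Finset.bipartiteAbove, Finset.bipartiteBelow] at h1
    rw [h1, ← smul_eq_mul]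
    refine Finset.sum_le_card_nsmul _ _ _ fun v hv => le_trans (Finset.card_le_card ?_)
      (hdeg v (hIS hv))
    intro u hu
    rw [Finset.mem_filter] at hu ⊢
    exact ⟨(Finset.mem_sdiff.1 hu.1).1, hu.2.symm⟩
  have hlow : O.card * 2 ≤ ∑ u ∈ O, (I.filter (D.Adj u)).card + P.card := by
    rw [hP, Finset.card_filter, ← Finset.sum_add_distrib, ← smul_eq_mul]
    refine Finset.card_nsmul_le_sum _ _ _ fun u hu => ?_
    have := hdom u hu
    split_ifs with h <;> omega
  have hcard : O.card + I.card = S.card := Finset.card_sdiff_add_card_eq_card hIS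
  omega

theorem IsSubcubicOn.eq_or_eq_or_eq (h : IsSubcubicOn D S) {x p q r y : α} (hx : x ∈ S)
    (hp : p ∈ S) (hq : q ∈ S) (hr : r ∈ S) (hxp : D.Adj x p) (hxq : D.Adj x q) (hxr : D.Adj x r)
    (hpq : p ≠ q) (hpr : p ≠ r) (hqr : q ≠ r) (hy : y ∈ S) (hxy : D.Adj x y) :
    y = p ∨ y = q ∨ y = r := by
  classical
  have hsub : ({p, q, r} : Finset α) ⊆ S.filter (D.Adj x) := by
    intro z hz
    simp only [Finset.mem_insert, Finset.mem_singleton] at hz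
    rw [Finset.mem_filter]
    rcases hz with rfl | rfl | rfl <;> exact ⟨by assumption, by assumption⟩
  have hc : ({p, q, r} : Finset α).card = 3 := Finset.card_eq_three.2 ⟨p, q, r, hpq, hpr, hqr, rfl⟩
  have heq := Finset.eq_of_subset_of_card_le hsub (by rw [hc]; exact h.degree_le x hx)
  have : y ∈ ({p, q, r} : Finset α) := heq ▸ Finset.mem_filter.2 ⟨hy, hxy⟩
  simpa using this

/-- Contracting a triangle `a b c` whose outer neighbours `a'` and `b'` differ. -/
theorem IsSubcubicOn.hasThirdIndep_of_triangle
    (ih : ∀ (D' : SimpleGraph α) (S' : Finset α), S'.card < S.card → IsSubcubicOn D' S' →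
      HasThirdIndep D' S')
    (h : IsSubcubicOn D S) {a b c a' b' c' : α} (ha : a ∈ S) (hb : b ∈ S) (hc : c ∈ S)
    (hab : D.Adj a b) (hac : D.Adj a c) (hbc : D.Adj b c)
    (ha' : a' ∈ S) (hb' : b' ∈ S) (hc' : c' ∈ S)
    (haa' : D.Adj a a') (hbb' : D.Adj b b') (hcc' : D.Adj c c')
    (ha'b : a' ≠ b) (ha'c : a' ≠ c) (hb'a : b' ≠ a) (hb'c : b' ≠ c) (hc'a : c' ≠ a) (hc'b : c' ≠ b)
    (hne : a' ≠ b') : HasThirdIndep D S := by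
  classical
  have hA : ∀ y ∈ S, D.Adj a y → y = b ∨ y = c ∨ y = a' := fun y hy hay =>
    h.eq_or_eq_or_eq ha hb hc ha' hab hac haa' hbc.ne ha'b.symm ha'c.symm hy hay
  have hB : ∀ y ∈ S, D.Adj b y → y = a ∨ y = c ∨ y = b' := fun y hy hay =>
    h.eq_or_eq_or_eq hb ha hc hb' hab.symm hbc hbb' hac.ne hb'a.symm hb'c.symm hy hay
  have hC : ∀ y ∈ S, D.Adj c y → y = a ∨ y = b ∨ y = c' := fun y hy hay =>
    h.eq_or_eq_or_eq hc ha hb hc' hac.symm hbc.symm hcc' hab.ne hc'a.symm hc'b.symm hy hay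
  have ha'a := haa'.ne'
  have hb'b := hbb'.ne'
  have hc'c := hcc'.ne'
  set S' := S \ {a, b, c} with hS'
  have hTS : ({a, b, c} : Finset α) ⊆ S := by
    intro x hx
    simp only [Finset.mem_insert, Finset.mem_singleton] at hx
    rcases hx with rfl | rfl | rfl <;> assumption
  have hS'S : S' ⊆ S := Finset.sdiff_subset
  have hTcard : ({a, b, c} : Finset α).card = 3 :=
    Finset.card_eq_three.2 ⟨a, b, c, hab.ne, hac.ne, hbc.ne, rfl⟩
  have hS'card : S'.card + 3 = S.card := hTcard ▸ Finset.card_sdiff_add_card_eq_card hTS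
  have hmemS' : ∀ x, x ∈ S' ↔ x ∈ S ∧ x ≠ a ∧ x ≠ b ∧ x ≠ c := by
    intro x
    simp [hS', Finset.mem_sdiff]
  set D' := D ⊔ edge a' b' with hD'
  have hadj : ∀ x y, D'.Adj x y ↔ D.Adj x y ∨ (x = a' ∧ y = b') ∨ (x = b' ∧ y = a') := by
    intro x y
    rw [hD', sup_adj, edge_adj]
    grind
  by_cases hsub : IsSubcubicOn D' S'
  · obtain ⟨I, hIS', hind, hIcard⟩ := ih D' S' (by omega) hsub
    have hind' : IndepOn D I := fun x hx y hy hxy => hind x hx y hy ((hadj x y).2 (Or.inl hxy))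
    have key : ∀ x ∈ ({a, b, c} : Finset α), (∀ y ∈ I, ¬ D.Adj x y) → HasThirdIndep D S := by
      intro x hx hno
      have hxI : x ∉ I := fun hxI => (Finset.mem_sdiff.1 (hIS' hxI)).2 hx
      refine ⟨insert x I, Finset.insert_subset (hTS hx) (hIS'.trans hS'S), ?_, ?_⟩
      · intro y hy z hz hyz
        rcases Finset.mem_insert.1 hy with rfl | hy' <;>
          rcases Finset.mem_insert.1 hz with rfl | hz'
        · exact hyz.ne rfl
        · exact hno z hz' hyz
        · exact hno y hy' hyz.symm
        · exact hind' y hy' z hz' hyz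
      · rw [Finset.card_insert_of_notMem hxI]
        omega
    by_cases haI : a' ∈ I
    · refine key b (by simp) fun y hy hby => ?_
      have hy' := (hmemS' y).1 (hIS' hy)
      rcases hB y hy'.1 hby with rfl | rfl | rfl
      · exact hy'.2.1 rfl
      · exact hy'.2.2.2 rfl
      · exact hind a' haI y hy ((hadj _ _).2 (Or.inr (Or.inl ⟨rfl, rfl⟩)))
    · refine key a (by simp) fun y hy hay => ?_
      have hy' := (hmemS' y).1 (hIS' hy)
      rcases hA y hy'.1 hay with rfl | rfl | rfl
      · exact hy'.2.2.1 rfl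
      · exact hy'.2.2.2 rfl
      · exact haI hy
  · have hdeg : ∀ x ∈ S', (S'.filter (D'.Adj x)).card ≤ 3 := by
      intro x hx
      have hxS := hS'S hx
      have hend : ∀ p q : α, p ∈ S → D.Adj x p → p ∉ S' →
          S'.filter (D'.Adj x) ⊆ insert q ((S.filter (D.Adj x)).erase p) →
          (S'.filter (D'.Adj x)).card ≤ 3 := by
        intro p q hp hxp hpS' hsub
        refine (Finset.card_le_card hsub).trans ((Finset.card_insert_le _ _).trans ?_)
        have hmem : p ∈ S.filter (D.Adj x) := Finset.mem_filter.2 ⟨hp, hxp⟩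
        rw [Finset.card_erase_add_one hmem]
        exact h.degree_le x hxS
      by_cases hxa : x = a'
      · refine hend a b' ha (hxa ▸ haa'.symm) (by simp [hmemS']) fun y hy => ?_
        simp only [Finset.mem_filter, Finset.mem_insert, Finset.mem_erase, hadj, hmemS'] at hy ⊢
        grind
      by_cases hxb : x = b'
      · refine hend b a' hb (hxb ▸ hbb'.symm) (by simp [hmemS']) fun y hy => ?_
        simp only [Finset.mem_filter, Finset.mem_insert, Finset.mem_erase, hadj, hmemS'] at hy ⊢
        grind
      · refine (Finset.card_le_card fun y hy => ?_).trans (h.degree_le x hxS)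
        simp only [Finset.mem_filter, hadj, hmemS'] at hy ⊢
        grind
    obtain ⟨K, hKS', hK4, hK⟩ : ∃ K ⊆ S', K.card = 4 ∧ D'.IsClique K := by
      by_contra hcon
      push Not at hcon
      exact hsub ⟨fun x hx => by convert hdeg x hx, hcon⟩
    have hpair : ¬ D.Adj a' b' ∧ a' ∈ K ∧ b' ∈ K := by
      by_contra hcon
      refine h.not_isClique K (hKS'.trans hS'S) hK4 fun x hx y hy hxy => ?_
      have h1 := (hadj x y).1 (hK hx hy hxy)
      have hx' : x ∈ K := hx
      have hy' : y ∈ K := hy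
      rcases h1 with h1 | ⟨rfl, rfl⟩ | ⟨rfl, rfl⟩
      · exact h1
      · by_contra hn
        exact hcon ⟨hn, hx', hy'⟩
      · by_contra hn
        exact hcon ⟨fun h => hn h.symm, hy', hx'⟩
    obtain ⟨hnadj, haK, hbK⟩ := hpair
    obtain ⟨x, y, hxy, hKxy⟩ := Finset.card_eq_two.1
      (show ((K.erase a').erase b').card = 2 by
        rw [Finset.card_erase_of_mem (Finset.mem_erase.2 ⟨hne.symm, hbK⟩),
          Finset.card_erase_of_mem haK, hK4])
    have hmem : ∀ z ∈ ({x, y} : Finset α), z ≠ b' ∧ z ≠ a' ∧ z ∈ K := by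
      intro z hz
      rw [← hKxy] at hz
      simpa using hz
    obtain ⟨hxb, hxa, hxK⟩ := hmem x (by simp)
    obtain ⟨hyb, hya, hyK⟩ := hmem y (by simp)
    have hDK : ∀ z ∈ K, z ≠ a' → z ≠ b' → ∀ w ∈ K, w ≠ z → D.Adj z w := by
      intro z hz hza hzb w hw hwz
      rcases (hadj z w).1 (hK hz hw hwz.symm) with h1 | h1 | h1
      · exact h1
      · exact absurd h1.1 hza
      · exact absurd h1.1 hzb
    have hxS := (hmemS' x).1 (hKS' hxK)
    have hyS := (hmemS' y).1 (hKS' hyK)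
    have hxa' := hDK x hxK hxa hxb a' haK hxa.symm
    have hxb' := hDK x hxK hxa hxb b' hbK hxb.symm
    have hya' := hDK y hyK hya hyb a' haK hya.symm
    have hyb' := hDK y hyK hya hyb b' hbK hyb.symm
    have hxy' := hDK x hxK hxa hxb y hyK hxy.symm
    have hA' : ∀ z ∈ S, D.Adj a' z → z = a ∨ z = x ∨ z = y := fun z hz =>
      h.eq_or_eq_or_eq ha' ha hxS.1 hyS.1 haa'.symm hxa'.symm hya'.symm hxS.2.1.symm hyS.2.1.symm
        hxy hz
    have hB' : ∀ z ∈ S, D.Adj b' z → z = b ∨ z = x ∨ z = y := fun z hz =>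
      h.eq_or_eq_or_eq hb' hb hxS.1 hyS.1 hbb'.symm hxb'.symm hyb'.symm hxS.2.2.1.symm
        hyS.2.2.1.symm hxy hz
    have hca' : ¬ D.Adj a' c := fun hadj => by
      rcases hA' c hc hadj with h1 | h1 | h1
      · exact hac.ne h1.symm
      · exact hxS.2.2.2 h1.symm
      · exact hyS.2.2.2 h1.symm
    have hcb' : ¬ D.Adj b' c := fun hadj => by
      rcases hB' c hc hadj with h1 | h1 | h1
      · exact hbc.ne h1.symm
      · exact hxS.2.2.2 h1.symm
      · exact hyS.2.2.2 h1.symm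
    have hTsub : ({a, b, c, a', b', x, y, c'} : Finset α) ⊆ S := by
      intro z hz
      simp only [Finset.mem_insert, Finset.mem_singleton] at hz
      rcases hz with rfl | rfl | rfl | rfl | rfl | rfl | rfl | rfl <;>
        first
        | assumption
        | exact hxS.1
        | exact hyS.1
    have hlt : (S \ {a, b, c, a', b', x, y, c'}).card < S.card := by
      refine Finset.card_lt_card (Finset.ssubset_iff_subset_ne.2
        ⟨Finset.sdiff_subset, fun heq => ?_⟩)
      have : a ∈ S \ ({a, b, c, a', b', x, y, c'} : Finset α) := heq.symm ▸ ha
      simp at this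
    refine (ih D _ hlt (h.subset Finset.sdiff_subset)).extend (J := {a', b', c}) ?_ hTsub ?_ ?_ ?_
    · intro z hz
      simp only [Finset.mem_insert, Finset.mem_singleton] at hz
      rcases hz with rfl | rfl | rfl <;> simp
    · intro z hz w hw hzw
      simp only [Finset.mem_insert, Finset.mem_singleton] at hz hw
      rcases hz with rfl | rfl | rfl <;> rcases hw with rfl | rfl | rfl <;>
        first
        | exact hzw.ne rfl
        | exact hnadj hzw
        | exact hnadj hzw.symm
        | exact hca' hzw
        | exact hca' hzw.symm
        | exact hcb' hzw
        | exact hcb' hzw.symm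
    · intro z hz w hw hzw
      simp only [Finset.mem_insert, Finset.mem_singleton] at hz
      rcases hz with rfl | rfl | rfl
      · rcases hA' w hw hzw with h1 | h1 | h1 <;> simp [h1]
      · rcases hB' w hw hzw with h1 | h1 | h1 <;> simp [h1]
      · rcases hC w hw hzw with h1 | h1 | h1 <;> simp [h1]
    · rw [Finset.card_eq_three.2 ⟨a', b', c, hne, ha'c, hb'c, rfl⟩]
      have h6 : ({c, a', b', x, y, c'} : Finset α).card ≤ 6 := Finset.card_le_six
      have h7 := Finset.card_insert_le b ({c, a', b', x, y, c'} : Finset α)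
      have h8 := Finset.card_insert_le a ({b, c, a', b', x, y, c'} : Finset α)
      omega

/-- A subcubic graph without cliques of order four has an independent set containing at least a
third of the vertices. -/
theorem IsSubcubicOn.hasThirdIndep (h : IsSubcubicOn D S) : HasThirdIndep D S := by
  classical
  induction hn : S.card using Nat.strong_induction_on generalizing D S with
  | _ n ih =>
  have ih' : ∀ (D' : SimpleGraph α) (S' : Finset α), S'.card < S.card → IsSubcubicOn D' S' →
      HasThirdIndep D' S' := fun D' S' hlt h' => ih _ (hn ▸ hlt) h' rfl
  by_cases hfree : ∀ a ∈ S, ∀ b ∈ S, ∀ c ∈ S, D.Adj a b → D.Adj a c → ¬ D.Adj b c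
  · exact hasThirdIndep_of_triangleFree h.degree_le hfree
  push Not at hfree
  obtain ⟨a, ha, b, hb, c, hc, hab, hac, hbc⟩ := hfree
  have hlone : ∀ a ∈ S, ∀ b ∈ S, ∀ c ∈ S, D.Adj a b → D.Adj a c → D.Adj b c →
      HasThirdIndep D S ∨ ∃ a' ∈ S, D.Adj a a' ∧ a' ≠ b ∧ a' ≠ c := by
    intro a ha b hb c hc hab hac hbc
    by_cases hex : ∃ a' ∈ S, D.Adj a a' ∧ a' ≠ b ∧ a' ≠ c
    · exact Or.inr hex
    push Not at hex
    have hlt : (S \ {a, b, c}).card < S.card := by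
      refine Finset.card_lt_card (Finset.ssubset_iff_subset_ne.2
        ⟨Finset.sdiff_subset, fun heq => ?_⟩)
      have : a ∈ S \ ({a, b, c} : Finset α) := heq.symm ▸ ha
      simp at this
    refine Or.inl ((ih' D _ hlt (h.subset Finset.sdiff_subset)).extend (J := {a}) ?_ ?_ ?_ ?_ ?_)
    · simp
    · intro x hx
      simp only [Finset.mem_insert, Finset.mem_singleton] at hx
      rcases hx with rfl | rfl | rfl <;> assumption
    · intro x hx y hy hxy
      rw [Finset.mem_singleton] at hx hy
      exact hxy.ne (hx.trans hy.symm)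
    · intro x hx y hy hxy
      rw [Finset.mem_singleton] at hx
      subst hx
      have := hex y hy hxy
      simp only [Finset.mem_insert, Finset.mem_singleton]
      tauto
    · exact Finset.card_le_three.trans (by simp)
  rcases hlone a ha b hb c hc hab hac hbc with h1 | ⟨a', ha', haa', ha'b, ha'c⟩
  · exact h1
  rcases hlone b hb a ha c hc hab.symm hbc hac with h1 | ⟨b', hb', hbb', hb'a, hb'c⟩
  · exact h1
  rcases hlone c hc a ha b hb hac.symm hbc.symm hab with h1 | ⟨c', hc', hcc', hc'a, hc'b⟩
  · exact h1
  by_cases hne : a' = b'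
  · by_cases hne' : a' = c'
    · subst hne hne'
      refine absurd ?_ (h.not_isClique {a, b, c, a'} ?_ ?_)
      · intro x hx y hy hxy
        simp only [Finset.coe_insert, Finset.coe_singleton, Set.mem_insert_iff,
          Set.mem_singleton_iff] at hx hy
        rcases hx with rfl | rfl | rfl | rfl <;> rcases hy with rfl | rfl | rfl | rfl <;>
          first | exact absurd rfl hxy | assumption | (apply SimpleGraph.Adj.symm; assumption)
      · intro x hx
        simp only [Finset.mem_insert, Finset.mem_singleton] at hx
        rcases hx with rfl | rfl | rfl | rfl <;> assumption
      · exact Finset.card_eq_four.2 ⟨a, b, c, a', hab.ne, hac.ne, haa'.ne, hbc.ne, hbb'.ne,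
          hcc'.ne, rfl⟩
    · exact h.hasThirdIndep_of_triangle ih' ha hc hb hac hab hbc.symm ha' hc' hb' haa' hcc' hbb'
        ha'c ha'b hc'a hc'b hb'a hb'c hne'
  · exact h.hasThirdIndep_of_triangle ih' ha hb hc hab hac hbc ha' hb' hc' haa' hbb' hcc'
      ha'b ha'c hb'a hb'c hc'a hc'b hne

end IndependentSet

/-! ### Counting incidences between edges and faces -/

section Incidence

open Classical in
/-- The edges in `X` with both ends in `t`. -/
noncomputable def edgesIn (X : Finset (Sym2 V)) (t : Finset V) : Finset (Sym2 V) :=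
  X.filter (· ∈ t.sym2)

open Classical in
/-- The members of `A` containing both ends of `e`. -/
noncomputable def facesAt (A : Finset (Finset V)) (e : Sym2 V) : Finset (Finset V) :=
  A.filter (e ∈ ·.sym2)

theorem mem_edgesIn {X : Finset (Sym2 V)} {t : Finset V} {e : Sym2 V} :
    e ∈ edgesIn X t ↔ e ∈ X ∧ e ∈ t.sym2 := by
  simp [edgesIn]

theorem mem_facesAt {A : Finset (Finset V)} {t : Finset V} {e : Sym2 V} :
    t ∈ facesAt A e ↔ t ∈ A ∧ e ∈ t.sym2 := by
  simp [facesAt]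

theorem facesAt_mono {A B : Finset (Finset V)} (h : A ⊆ B) (e : Sym2 V) :
    facesAt A e ⊆ facesAt B e := fun _ ht =>
  mem_facesAt.2 ⟨h (mem_facesAt.1 ht).1, (mem_facesAt.1 ht).2⟩

theorem sum_card_facesAt (X : Finset (Sym2 V)) (A : Finset (Finset V)) :
    ∑ e ∈ X, (facesAt A e).card = ∑ t ∈ A, (edgesIn X t).card := by
  classical
  exact Finset.sum_card_bipartiteAbove_eq_sum_card_bipartiteBelow (s := X) (t := A)
    (fun e t => e ∈ t.sym2)

open Classical in
theorem card_inter_le_two {G : SimpleGraph V} {s t : Finset V} (hs : G.IsNClique 3 s)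
    (ht : G.IsNClique 3 t) (hne : s ≠ t) : (s ∩ t).card ≤ 2 := by
  by_contra hcon
  have h1 : s ∩ t = s := Finset.eq_of_subset_of_card_le Finset.inter_subset_left
    (by rw [hs.card_eq]; omega)
  have h2 : s ∩ t = t := Finset.eq_of_subset_of_card_le Finset.inter_subset_right
    (by rw [ht.card_eq]; omega)
  exact hne (h1.symm.trans h2)

variable [Fintype V] {G : SimpleGraph V}

/-- The edges of `G` as a finite set. -/
noncomputable def edges (G : SimpleGraph V) : Finset (Sym2 V) := G.edgeSet.toFinite.toFinset

theorem mem_edges {e : Sym2 V} : e ∈ edges G ↔ e ∈ G.edgeSet := Set.Finite.mem_toFinset _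

theorem mk_mem_edges {u v : V} : s(u, v) ∈ edges G ↔ G.Adj u v := mem_edges

theorem card_edgesIn_of_isNClique {t : Finset V} (ht : G.IsNClique 3 t) :
    (edgesIn (edges G) t).card = 3 := by
  classical
  obtain ⟨a, b, c, hab, hac, hbc, rfl⟩ := is3Clique_iff.1 ht
  refine Finset.card_eq_three.2 ⟨s(a, b), s(a, c), s(b, c), ?_, ?_, ?_, ?_⟩
  · simp [hbc.ne, hac.ne]
  · simp [hab.ne, hac.ne]
  · simp [hab.ne, hac.ne]
  · ext e
    induction e with
    | _ u v =>
    rw [mem_edgesIn, mk_mem_edges, Finset.mk_mem_sym2_iff]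
    simp only [Finset.mem_insert, Finset.mem_singleton, Sym2.eq_iff]
    constructor
    · rintro ⟨huv, rfl | rfl | rfl, rfl | rfl | rfl⟩ <;> simp_all
    · rintro ((⟨rfl, rfl⟩ | ⟨rfl, rfl⟩) | (⟨rfl, rfl⟩ | ⟨rfl, rfl⟩) | (⟨rfl, rfl⟩ | ⟨rfl, rfl⟩)) <;>
        simp_all [G.adj_comm]

open Classical in
theorem even_card_edgesIn_star {t : Finset V} (ht : G.IsNClique 3 t) (v : V) :
    Even (edgesIn ((edges G).filter (v ∈ ·)) t).card := by
  by_cases hv : v ∈ t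
  · obtain ⟨b, c, hbc, hbct⟩ := Finset.card_eq_two.1
      (show (t.erase v).card = 2 by rw [Finset.card_erase_of_mem hv, ht.card_eq])
    have hmem : ∀ x, x ∈ t ∧ x ≠ v ↔ x = b ∨ x = c := by
      intro x
      have : x ∈ t.erase v ↔ x ∈ ({b, c} : Finset V) := by rw [hbct]
      rw [Finset.mem_erase] at this
      simp only [Finset.mem_insert, Finset.mem_singleton] at this
      tauto
    have hb := (hmem b).2 (Or.inl rfl)
    have hc := (hmem c).2 (Or.inr rfl)
    have hvb : G.Adj v b := ht.isClique hv hb.1 hb.2.symm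
    have hvc : G.Adj v c := ht.isClique hv hc.1 hc.2.symm
    have : edgesIn ((edges G).filter (v ∈ ·)) t = {s(v, b), s(v, c)} := by
      ext e
      rw [mem_edgesIn, Finset.mem_filter]
      constructor
      · rintro ⟨⟨he, hve⟩, het⟩
        obtain ⟨x, rfl⟩ := hve
        rw [Finset.mk_mem_sym2_iff] at het
        rcases (hmem x).1 ⟨het.2, (mk_mem_edges.1 he).ne'⟩ with rfl | rfl <;> simp
      · intro he
        rw [Finset.mem_insert, Finset.mem_singleton] at he
        rcases he with rfl | rfl
        · exact ⟨⟨mk_mem_edges.2 hvb, by simp⟩, Finset.mk_mem_sym2_iff.2 ⟨hv, hb.1⟩⟩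
        · exact ⟨⟨mk_mem_edges.2 hvc, by simp⟩, Finset.mk_mem_sym2_iff.2 ⟨hv, hc.1⟩⟩
    rw [this, Finset.card_pair]
    · exact even_two
    · simp [hbc, hc.2.symm]
  · have : edgesIn ((edges G).filter (v ∈ ·)) t = ∅ := by
      rw [Finset.eq_empty_iff_forall_notMem]
      intro e he
      rw [mem_edgesIn, Finset.mem_filter] at he
      exact hv (Finset.mem_sym2_iff.1 he.2 v he.1.2)
    simp [this]

theorem eq_of_mem_sym2_of_card_le {p : Finset V} (hp : p.card ≤ 2) {e f : Sym2 V}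
    (he : e ∈ edges G) (hf : f ∈ edges G) (hep : e ∈ p.sym2) (hfp : f ∈ p.sym2) : e = f := by
  classical
  induction e with
  | _ a b =>
  induction f with
  | _ c d =>
  rw [mk_mem_edges] at he hf
  rw [Finset.mk_mem_sym2_iff] at hep hfp
  have hsub : ({a, b} : Finset V) ⊆ p :=
    Finset.insert_subset hep.1 (Finset.singleton_subset_iff.2 hep.2)
  have heq := Finset.eq_of_subset_of_card_le hsub (by rwa [Finset.card_pair he.ne])
  have hc : c ∈ ({a, b} : Finset V) := heq ▸ hfp.1
  have hd : d ∈ ({a, b} : Finset V) := heq ▸ hfp.2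
  rw [Finset.mem_insert, Finset.mem_singleton] at hc hd
  have := hf.ne
  rw [Sym2.eq_iff]
  rcases hc with rfl | rfl <;> rcases hd with rfl | rfl <;> simp_all

/-- Two distinct triangles share at most one edge. -/
theorem eq_of_mem_sym2 {s t : Finset V} (hs : G.IsNClique 3 s) (ht : G.IsNClique 3 t)
    (hne : s ≠ t) {e f : Sym2 V} (he : e ∈ edges G) (hf : f ∈ edges G) (hes : e ∈ s.sym2)
    (het : e ∈ t.sym2) (hfs : f ∈ s.sym2) (hft : f ∈ t.sym2) : e = f := by
  classical
  refine eq_of_mem_sym2_of_card_le (card_inter_le_two hs ht hne) he hf ?_ ?_ <;>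
    rw [Finset.mem_sym2_iff] at * <;> intro x hx <;> rw [Finset.mem_inter]
  · exact ⟨hes x hx, het x hx⟩
  · exact ⟨hfs x hx, hft x hx⟩

end Incidence

namespace IsFaceSystem

variable [Fintype V] {G : SimpleGraph V} {F : Finset (Finset V)}

theorem card_facesAt (hF : IsFaceSystem G F) {e : Sym2 V} (he : e ∈ edges G) :
    (facesAt F e).card = 2 := by
  classical
  induction e with
  | _ u v =>
  rw [← hF.card_eq_two u v (mk_mem_edges.1 he)]
  congr 1
  ext t
  rw [mem_facesAt, Finset.mem_filter, Finset.mk_mem_sym2_iff]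

theorem eq_or_eq (hF : IsFaceSystem G F) {e : Sym2 V} (he : e ∈ edges G) {s t r : Finset V}
    (hs : s ∈ F) (ht : t ∈ F) (hr : r ∈ F) (hes : e ∈ s.sym2) (het : e ∈ t.sym2)
    (her : e ∈ r.sym2) (hst : s ≠ t) : r = s ∨ r = t := by
  classical
  have hsub : ({s, t} : Finset (Finset V)) ⊆ facesAt F e := by
    intro x hx
    rw [Finset.mem_insert, Finset.mem_singleton] at hx
    rw [mem_facesAt]
    rcases hx with rfl | rfl
    · exact ⟨hs, hes⟩
    · exact ⟨ht, het⟩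
  have heq := Finset.eq_of_subset_of_card_le hsub
    (by rw [hF.card_facesAt he, Finset.card_pair hst])
  have : r ∈ ({s, t} : Finset (Finset V)) := heq ▸ mem_facesAt.2 ⟨hr, her⟩
  simpa using this

end IsFaceSystem

section Boundary

variable [Fintype V] {G : SimpleGraph V} {F A : Finset (Finset V)}

open Classical in
/-- The edges of `G` lying in an odd number of members of `A`. -/
noncomputable def oddEdges (G : SimpleGraph V) (A : Finset (Finset V)) : Finset (Sym2 V) :=
  (edges G).filter fun e => Odd (facesAt A e).card

theorem mem_oddEdges {e : Sym2 V} : e ∈ oddEdges G A ↔ e ∈ edges G ∧ Odd (facesAt A e).card := by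
  simp [oddEdges]

theorem odd_card_oddEdges (hA : ∀ t ∈ A, G.IsNClique 3 t) :
    Odd (oddEdges G A).card ↔ Odd A.card := by
  classical
  rw [oddEdges, ← Finset.odd_sum_iff_odd_card_odd, sum_card_facesAt,
    Finset.sum_congr rfl fun t ht => card_edgesIn_of_isNClique (hA t ht)]
  rw [Finset.sum_const, smul_eq_mul, Nat.odd_mul]
  exact ⟨fun h => h.1, fun h => ⟨h, by decide⟩⟩

open Classical in
theorem even_card_oddEdges_star (hA : ∀ t ∈ A, G.IsNClique 3 t) (v : V) :
    Even ((oddEdges G A).filter (v ∈ ·)).card := by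
  have h := Finset.even_sum (s := A) (fun t => (edgesIn ((edges G).filter (v ∈ ·)) t).card)
    fun t ht => even_card_edgesIn_star (hA t ht) v
  rw [← sum_card_facesAt, ← Nat.not_odd_iff_even, Finset.odd_sum_iff_odd_card_odd,
    Nat.not_odd_iff_even, Finset.filter_filter] at h
  rw [oddEdges, Finset.filter_filter]
  simpa only [and_comm] using h

/-- An odd family of triangles has at least three boundary edges. -/
theorem three_le_card_oddEdges (hA : ∀ t ∈ A, G.IsNClique 3 t) (hodd : Odd A.card) :
    3 ≤ (oddEdges G A).card := by
  classical
  have h1 := (odd_card_oddEdges hA).2 hodd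
  have h2 : (oddEdges G A).card ≠ 1 := by
    intro hcard
    obtain ⟨e, he⟩ := Finset.card_eq_one.1 hcard
    induction e with
    | _ u v =>
    have h3 := even_card_oddEdges_star hA u
    rw [he, Finset.filter_true_of_mem (by simp)] at h3
    simp at h3
  obtain ⟨k, hk⟩ := h1
  omega

end Boundary

/-! ### The dual graph -/

section Dual

variable [Fintype V] {G : SimpleGraph V} {F : Finset (Finset V)}

/-- Two vertex sets are adjacent if they are distinct and share an edge of `G`. -/
def dualGraph (G : SimpleGraph V) : SimpleGraph (Finset V) where
  Adj s t := s ≠ t ∧ ∃ e ∈ edges G, e ∈ s.sym2 ∧ e ∈ t.sym2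
  symm := ⟨fun _ _ ⟨hne, e, he, hs, ht⟩ => ⟨hne.symm, e, he, ht, hs⟩⟩
  loopless := ⟨fun _ h => h.1 rfl⟩

/-- Every odd component of a graph on faces sharing edges sends at least three edges to the
remaining faces. -/
theorem IsFaceSystem.ncard_oddComponents_le (hF : IsFaceSystem G F) {W : Type*} [Fintype W]
    {f : W → Finset V} (hf : Function.Injective f) {U : Finset (Finset V)} (hU : U ⊆ F)
    (hfF : ∀ w, f w ∈ F ∧ f w ∉ U) (hfU : ∀ t ∈ F, t ∉ U → t ∈ Set.range f) {H : SimpleGraph W}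
    (hH : ∀ x y, (dualGraph G).Adj (f x) (f y) → H.Adj x y) :
    H.oddComponents.ncard ≤ U.card := by
  classical
  set A : H.ConnectedComponent → Finset (Finset V) := fun C => C.supp.toFinset.image f with hA
  have hmemA : ∀ C t, t ∈ A C ↔ ∃ w, H.connectedComponentMk w = C ∧ f w = t := by
    intro C t
    simp [hA]
  have hAF : ∀ C, A C ⊆ F := by
    intro C t ht
    obtain ⟨w, -, rfl⟩ := (hmemA C t).1 ht
    exact (hfF w).1
  have hAcard : ∀ C, (A C).card = C.supp.ncard := by
    intro C
    rw [hA, Finset.card_image_of_injective _ hf, Set.ncard_eq_toFinset_card']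
  have hAdisj : ∀ C C' t, t ∈ A C → t ∈ A C' → C = C' := by
    intro C C' t h1 h2
    obtain ⟨w, rfl, rfl⟩ := (hmemA C t).1 h1
    obtain ⟨w', rfl, hw'⟩ := (hmemA C' _).1 h2
    rw [hf hw']
  have hbdry : ∀ C, ∀ e ∈ oddEdges G (A C),
      ∃ s ∈ U, ∃ t ∈ A C, s ≠ t ∧ e ∈ s.sym2 ∧ e ∈ t.sym2 := by
    intro C e he
    obtain ⟨heG, hodd⟩ := mem_oddEdges.1 he
    have h2 := hF.card_facesAt heG
    obtain ⟨t, ht⟩ : (facesAt (A C) e).Nonempty := Finset.card_pos.1 hodd.pos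
    obtain ⟨s, hs, hsn⟩ : ∃ s ∈ facesAt F e, s ∉ facesAt (A C) e := by
      by_contra hcon
      push Not at hcon
      have := Finset.Subset.antisymm (facesAt_mono (hAF C) e) hcon
      rw [this, h2] at hodd
      exact absurd hodd (by decide)
    rw [mem_facesAt] at ht hs hsn
    have hsC : s ∉ A C := fun h => hsn ⟨h, hs.2⟩
    have hst : s ≠ t := fun h => hsC (h ▸ ht.1)
    refine ⟨s, ?_, t, ht.1, hst, hs.2, ht.2⟩
    by_contra hsU
    obtain ⟨w, rfl⟩ := hfU s hs.1 hsU
    obtain ⟨w', rfl, rfl⟩ := (hmemA C t).1 ht.1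
    refine hsC ((hmemA _ _).2 ⟨w, ConnectedComponent.sound ?_, rfl⟩)
    exact (hH w w' ⟨hst, e, heG, hs.2, ht.2⟩).reachable
  set O : Finset H.ConnectedComponent := H.oddComponents.toFinite.toFinset with hO
  have hcardO : H.oddComponents.ncard = O.card := Set.ncard_eq_toFinset_card _ _
  have hlow : O.card * 3 ≤ (O.biUnion fun C => oddEdges G (A C)).card := by
    rw [Finset.card_biUnion]
    · rw [← smul_eq_mul]
      refine Finset.card_nsmul_le_sum _ _ _ fun C hC => ?_
      refine three_le_card_oddEdges (fun t ht => hF.isNClique t (hAF C ht)) ?_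
      rw [hAcard]
      have hC' : C ∈ H.oddComponents := (Set.Finite.mem_toFinset _).1 hC
      exact hC'
    · intro C hC C' hC' hne
      refine Finset.disjoint_left.2 fun e he he' => ?_
      obtain ⟨s, hs, t, ht, hst, hes, het⟩ := hbdry C e he
      obtain ⟨s', hs', t', ht', hst', hes', het'⟩ := hbdry C' e he'
      have heG := (mem_oddEdges.1 he).1
      rcases hF.eq_or_eq heG (hU hs) (hAF C ht) (hAF C' ht') hes het het' hst with h1 | h1
      · obtain ⟨w, -, hw⟩ := (hmemA C' t').1 ht'
        exact (hfF w).2 (hw ▸ h1 ▸ hs)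
      · exact hne (hAdisj C C' t ht (h1 ▸ ht'))
  have hup : (O.biUnion fun C => oddEdges G (A C)).card ≤ U.card * 3 := by
    have hsub : (O.biUnion fun C => oddEdges G (A C)) ⊆ U.biUnion fun s => edgesIn (edges G) s := by
      intro e he
      obtain ⟨C, -, he⟩ := Finset.mem_biUnion.1 he
      obtain ⟨s, hs, t, ht, hst, hes, het⟩ := hbdry C e he
      exact Finset.mem_biUnion.2 ⟨s, hs, mem_edgesIn.2 ⟨(mem_oddEdges.1 he).1, hes⟩⟩
    refine (Finset.card_le_card hsub).trans (Finset.card_biUnion_le_card_mul _ _ _ fun s hs => ?_)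
    exact (card_edgesIn_of_isNClique (hF.isNClique s (hU hs))).le
  omega

/-- The faces can be paired up so that paired faces share an edge. -/
theorem IsFaceSystem.exists_pairing (hF : IsFaceSystem G F) :
    ∃ m : Finset V → Finset V, ∀ t ∈ F, m t ∈ F ∧ (dualGraph G).Adj t (m t) ∧ m (m t) = t := by
  classical
  obtain ⟨M, hM⟩ : ∃ M : Subgraph ((dualGraph G).induce (F : Set (Finset V))),
      M.IsPerfectMatching := by
    rw [tutte]
    intro u hu
    rw [IsTutteViolator] at hu
    refine absurd hu (not_lt.2 ?_)
    have hcard : (u.toFinset.image Subtype.val).card = u.ncard := by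
      rw [Finset.card_image_of_injective _ Subtype.val_injective, Set.ncard_eq_toFinset_card']
    rw [← hcard]
    refine hF.ncard_oddComponents_le (f := fun w => w.1.1)
      (Subtype.val_injective.comp Subtype.val_injective) ?_ ?_ ?_ ?_
    · intro t ht
      obtain ⟨x, -, rfl⟩ := Finset.mem_image.1 ht
      exact x.2
    · rintro ⟨⟨t, ht⟩, hw⟩
      refine ⟨ht, fun h => ?_⟩
      obtain ⟨x, hx, hxt⟩ := Finset.mem_image.1 h
      have hx' : x = ⟨t, ht⟩ := Subtype.ext hxt
      rw [hx', Set.mem_toFinset] at hx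
      simp only [Subgraph.deleteVerts_verts, Subgraph.verts_top] at hw
      exact hw.2 hx
    · intro t ht htu
      refine ⟨⟨⟨t, ht⟩, ?_⟩, rfl⟩
      simp only [Subgraph.deleteVerts_verts, Subgraph.verts_top]
      refine ⟨trivial, fun h => htu ?_⟩
      exact Finset.mem_image.2 ⟨⟨t, ht⟩, Set.mem_toFinset.2 h, rfl⟩
    · rintro ⟨x, hx⟩ ⟨y, hy⟩ hxy
      simp only [Subgraph.deleteVerts_verts, Subgraph.verts_top] at hx hy
      simp only [Subgraph.coe_adj, Subgraph.deleteVerts_adj, Subgraph.verts_top, Subgraph.top_adj]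
      exact ⟨trivial, hx.2, trivial, hy.2, hxy⟩
  rw [Subgraph.isPerfectMatching_iff] at hM
  choose p hp hpu using hM
  refine ⟨fun t => if ht : t ∈ F then p ⟨t, ht⟩ else t, fun t ht => ?_⟩
  have hmem : (p ⟨t, ht⟩ : Finset V) ∈ F := (p ⟨t, ht⟩).2
  have hpp : p (p ⟨t, ht⟩) = ⟨t, ht⟩ := (hpu _ _ (hp ⟨t, ht⟩).symm).symm
  simp only [ht, hmem, dif_pos, true_and]
  exact ⟨(hp ⟨t, ht⟩).adj_sub, congrArg Subtype.val hpp⟩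

/-- Some set of half as many edges as there are faces meets every triangle. -/
theorem IsFaceSystem.exists_isTriangleTransversal (hF : IsFaceSystem G F) :
    ∃ X, IsTriangleTransversal G X ∧ 2 * X.card = F.card := by
  classical
  obtain ⟨m, hm⟩ := hF.exists_pairing
  set X := (edges G).filter fun e => ∃ t ∈ F, e ∈ t.sym2 ∧ e ∈ (m t).sym2 with hX
  have hXG : X ⊆ edges G := Finset.filter_subset _ _
  have hone : ∀ t ∈ F, (edgesIn X t).card = 1 := by
    intro t ht
    obtain ⟨hmt, ⟨hne, e, he, het, hem⟩, -⟩ := hm t ht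
    rw [Finset.card_eq_one]
    refine ⟨e, Finset.eq_singleton_iff_unique_mem.2 ⟨mem_edgesIn.2 ⟨Finset.mem_filter.2
      ⟨he, t, ht, het, hem⟩, het⟩, fun f hf => ?_⟩⟩
    obtain ⟨hfX, hft⟩ := mem_edgesIn.1 hf
    obtain ⟨hfG, s, hs, hfs, hfm⟩ := Finset.mem_filter.1 hfX
    obtain ⟨hms, ⟨hnes, -⟩, hmm⟩ := hm s hs
    have hfmt : f ∈ (m t).sym2 := by
      rcases hF.eq_or_eq hfG hs hms ht hfs hfm hft hnes with h1 | h1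
      · rw [h1]
        exact hfm
      · rw [h1, hmm]
        exact hfs
    exact eq_of_mem_sym2 (hF.isNClique t ht) (hF.isNClique _ hmt) hne hfG he hft hfmt het hem
  have hcount : ∀ A ⊆ F, ∑ e ∈ X, (facesAt A e).card = A.card := by
    intro A hA
    rw [sum_card_facesAt, Finset.sum_congr rfl fun t ht => hone t (hA ht)]
    simp
  refine ⟨X, ⟨fun e he => mem_edges.1 (hXG he), fun T hT => ?_⟩, ?_⟩
  · obtain ⟨A, hAF, hA⟩ := hF.exists_odd T hT
    have hodd : ∀ e ∈ edges G, Odd (facesAt A e).card ↔ e ∈ T.sym2 := by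
      intro e he
      induction e with
      | _ u v =>
      rw [Finset.mk_mem_sym2_iff, ← hA u v (mk_mem_edges.1 he)]
      refine iff_of_eq (congrArg (fun s : Finset (Finset V) => Odd s.card) ?_)
      ext t
      rw [mem_facesAt, Finset.mem_filter, Finset.mk_mem_sym2_iff]
    have h1 : oddEdges G A = edgesIn (edges G) T := by
      ext e
      rw [mem_oddEdges, mem_edgesIn]
      exact and_congr_right fun he => hodd e he
    have h2 : Odd A.card := by
      rw [← odd_card_oddEdges (G := G) fun t ht => hF.isNClique t (hAF ht), h1,
        card_edgesIn_of_isNClique hT]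
      decide
    rw [← hcount A hAF, Finset.odd_sum_iff_odd_card_odd] at h2
    obtain ⟨e, he⟩ := Finset.card_pos.1 h2.pos
    rw [Finset.mem_filter] at he
    exact ⟨e, he.1, Finset.mem_sym2_iff.1 ((hodd e (hXG he.1)).1 he.2)⟩
  · rw [← hcount F subset_rfl, Finset.sum_congr rfl fun e he => hF.card_facesAt (hXG he)]
    simp [mul_comm]

end Dual

/-! ### Transversals and packings -/

theorem tau_le {G : SimpleGraph V} {X : Finset (Sym2 V)} (hX : IsTriangleTransversal G X) :
    tau G ≤ X.card := Nat.sInf_le ⟨X, hX, rfl⟩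

theorem le_nu [Fintype V] {G : SimpleGraph V} {Y : Finset (Finset V)}
    (hY : IsTrianglePacking G Y) : Y.card ≤ nu G := by
  refine le_csSup ⟨Fintype.card (Finset V), ?_⟩ ⟨Y, hY, rfl⟩
  rintro n ⟨Y, -, rfl⟩
  exact Finset.card_le_univ Y

section Packing

variable [Fintype V] {G : SimpleGraph V} {F : Finset (Finset V)}

open Classical in
theorem IsFaceSystem.card_filter_dualGraph_le (hF : IsFaceSystem G F) {t : Finset V} (ht : t ∈ F) :
    (F.filter ((dualGraph G).Adj t)).card ≤ 3 := by
  rw [← card_edgesIn_of_isNClique (hF.isNClique t ht)]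
  refine Finset.card_le_card_of_forall_subsingleton (fun s e => e ∈ s.sym2) ?_ ?_
  · intro s hs
    obtain ⟨-, -, e, he, het, hes⟩ := Finset.mem_filter.1 hs
    exact ⟨e, mem_edgesIn.2 ⟨he, het⟩, hes⟩
  · rintro e he s ⟨hs, hes⟩ s' ⟨hs', hes'⟩
    obtain ⟨heG, het⟩ := mem_edgesIn.1 he
    obtain ⟨hsF, hts⟩ := Finset.mem_filter.1 hs
    obtain ⟨hsF', hts'⟩ := Finset.mem_filter.1 hs'
    rcases hF.eq_or_eq heG ht hsF hsF' het hes hes' hts.1 with h1 | h1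
    · exact absurd h1.symm hts'.1
    · exact h1.symm

open Classical in
theorem IsFaceSystem.subset_union (hF : IsFaceSystem G F) {s t r : Finset V} (hs : s ∈ F)
    (ht : t ∈ F) (hr : r ∈ F) (hst : s ≠ t) (hrs : (dualGraph G).Adj r s)
    (hrt : (dualGraph G).Adj r t) : r ⊆ s ∪ t := by
  intro z hz
  by_contra hzst
  rw [Finset.mem_union, not_or] at hzst
  obtain ⟨hrs', e, he, her, hes⟩ := hrs
  obtain ⟨hrt', f, hf, hfr, hft⟩ := hrt
  have hsub : ∀ {e : Sym2 V} {s : Finset V}, e ∈ r.sym2 → e ∈ s.sym2 → z ∉ s →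
      e ∈ (r.erase z).sym2 := by
    intro e s her hes hzs
    rw [Finset.mem_sym2_iff] at *
    exact fun x hx => Finset.mem_erase.2 ⟨fun h => hzs (h ▸ hes x hx), her x hx⟩
  have hef : e = f := eq_of_mem_sym2_of_card_le
    (by rw [Finset.card_erase_of_mem hz, (hF.isNClique r hr).card_eq]) he hf
    (hsub her hes hzst.1) (hsub hfr hft hzst.2)
  rcases hF.eq_or_eq he hs ht hr hes (hef ▸ hft) her hst with h1 | h1
  · exact hrs' h1
  · exact hrt' h1

theorem IsFaceSystem.not_isClique_dualGraph (hF : IsFaceSystem G F)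
    (hK4 : ¬ Nonempty (G ≃g (⊤ : SimpleGraph (Fin 4)))) {K : Finset (Finset V)} (hKF : K ⊆ F)
    (hK : K.card = 4) : ¬ (dualGraph G).IsClique K := by
  classical
  intro hclique
  have hadj : ∀ s ∈ K, ∀ t ∈ K, s ≠ t → (dualGraph G).Adj s t := fun s hs t ht h =>
    hclique hs ht h
  obtain ⟨s, hs, t, ht, hst⟩ := Finset.one_lt_card.1 (show 1 < K.card by omega)
  have hcard3 : ∀ r ∈ K, r.card = 3 := fun r hr => (hF.isNClique r (hKF hr)).card_eq
  have hS : (s ∪ t).card = 4 := by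
    have h1 := card_inter_le_two (hF.isNClique s (hKF hs)) (hF.isNClique t (hKF ht)) hst
    have h2 : 2 ≤ (s ∩ t).card := by
      obtain ⟨-, e, he, hes, het⟩ := hadj s hs t ht hst
      induction e with
      | _ a b =>
      rw [Finset.mk_mem_sym2_iff] at hes het
      rw [← Finset.card_pair (mk_mem_edges.1 he).ne]
      refine Finset.card_le_card (Finset.insert_subset ?_ (Finset.singleton_subset_iff.2 ?_))
      · exact Finset.mem_inter.2 ⟨hes.1, het.1⟩
      · exact Finset.mem_inter.2 ⟨hes.2, het.2⟩
    have h3 := Finset.card_union_add_card_inter s t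
    rw [hcard3 s hs, hcard3 t ht] at h3
    omega
  have hsub : K ⊆ (s ∪ t).powersetCard 3 := by
    intro r hr
    refine Finset.mem_powersetCard.2 ⟨?_, hcard3 r hr⟩
    by_cases hrs : r = s
    · exact hrs ▸ Finset.subset_union_left
    by_cases hrt : r = t
    · exact hrt ▸ Finset.subset_union_right
    exact hF.subset_union (hKF hs) (hKF ht) (hKF hr) hst (hadj r hr s hs hrs) (hadj r hr t ht hrt)
  have hKeq : K = (s ∪ t).powersetCard 3 := Finset.eq_of_subset_of_card_le hsub
    (by rw [Finset.card_powersetCard, hS, hK]; decide)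
  have huniv : s ∪ t = Finset.univ := hF.eq_univ _ hS fun r hr hr3 =>
    hKF (hKeq ▸ Finset.mem_powersetCard.2 ⟨hr, hr3⟩)
  have hV : Fintype.card V = 4 := by rw [← Finset.card_univ, ← huniv, hS]
  have htop : G = ⊤ := by
    ext u v
    rw [top_adj]
    refine ⟨fun h => h.ne, fun huv => ?_⟩
    obtain ⟨r, hr, -, hr3⟩ := Finset.exists_subsuperset_card_eq
      (Finset.subset_univ ({u, v} : Finset V)) (n := 3) (by rw [Finset.card_pair huv]; omega)
      (by rw [Finset.card_univ, hV]; omega)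
    have hrK : r ∈ K := hKeq ▸ Finset.mem_powersetCard.2 ⟨huniv ▸ Finset.subset_univ r, hr3⟩
    exact (hF.isNClique r (hKF hrK)).isClique (hr (by simp)) (hr (by simp)) huv
  subst htop
  exact hK4 ⟨Iso.completeGraph (Fintype.equivFinOfCardEq hV)⟩

/-- A third of the faces are pairwise edge-disjoint unless `G` is the complete graph on four
vertices. -/
theorem IsFaceSystem.exists_isTrianglePacking (hF : IsFaceSystem G F)
    (hK4 : ¬ Nonempty (G ≃g (⊤ : SimpleGraph (Fin 4)))) :
    ∃ Y, IsTrianglePacking G Y ∧ F.card ≤ 3 * Y.card := by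
  obtain ⟨Y, hYF, hind, hcard⟩ := IsSubcubicOn.hasThirdIndep (D := dualGraph G) (S := F)
    ⟨fun t ht => hF.card_filter_dualGraph_le ht,
      fun K hKF hK => hF.not_isClique_dualGraph hK4 hKF hK⟩
  refine ⟨Y, ⟨fun t ht => hF.isNClique t (hYF ht), fun s hs t ht hst e he hboth => ?_⟩, hcard⟩
  exact hind s hs t ht ⟨hst, e, mem_edges.2 he, Finset.mem_sym2_iff.2 hboth.1,
    Finset.mem_sym2_iff.2 hboth.2⟩

theorem two_mul_tau_le_of_card_le_three (hV : Fintype.card V ≤ 3) : 2 * tau G ≤ 3 * nu G := by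
  classical
  by_cases hex : ∃ T, G.IsNClique 3 T
  · obtain ⟨T, hT⟩ := hex
    have huniv : ∀ t, G.IsNClique 3 t → t = Finset.univ := fun t ht =>
      Finset.eq_univ_of_card t (le_antisymm (Finset.card_le_univ t) (ht.card_eq ▸ hV))
    obtain ⟨a, b, c, hab, -, -, -⟩ := is3Clique_iff.1 hT
    have h1 : tau G ≤ ({s(a, b)} : Finset (Sym2 V)).card := tau_le
      ⟨by simpa using hab, fun t ht => ⟨s(a, b), by simp, fun v _ => by simp [huniv t ht]⟩⟩
    have h2 : ({T} : Finset (Finset V)).card ≤ nu G := le_nu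
      ⟨by simpa using hT, fun s hs t ht hst => absurd ((Finset.mem_singleton.1 hs).trans
        (Finset.mem_singleton.1 ht).symm) hst⟩
    rw [Finset.card_singleton] at h1 h2
    omega
  · push Not at hex
    have h1 : tau G ≤ (∅ : Finset (Sym2 V)).card := tau_le
      ⟨by simp, fun t ht => absurd ht (hex t)⟩
    rw [Finset.card_empty] at h1
    omega

end Packing

theorem tuza_three_halves_of_planar_triangulation (V : Type) [Fintype V]
    (G : SimpleGraph V) (hG : MaximalPlanar G)
    (hK4 : ¬ Nonempty (G ≃g (⊤ : SimpleGraph (Fin 4)))) :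
    2 * tau G ≤ 3 * nu G := by
  by_cases hV : Fintype.card V ≤ 3
  · exact two_mul_tau_le_of_card_le_three hV
  obtain ⟨E, r, hE⟩ := PlaneEmbedding.exists_isRadial hG.1
  obtain ⟨F, hF⟩ := hE.exists_isFaceSystem hG (by omega)
  obtain ⟨X, hX, hXF⟩ := hF.exists_isTriangleTransversal
  obtain ⟨Y, hY, hYF⟩ := hF.exists_isTrianglePacking hK4
  have h1 := tau_le hX
  have h2 := le_nu hY
  omega
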